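/- With the setup below, the pair (points of PG(2,8), 𝓑') is a 2-(73,7,7) design: there are 73 points, each block π_B consists of exactly 7 points, and any two distinct points of PG(2,8) are contained in exactly 7 members of 𝓑'; moreover, the permutation w : xK ↦ (gx)K generates a group W of order 73 acting regularly on the points and mapping 𝓑' to itself. -/

import Mathlib

/-!
Since `Σ ⊆ 𝓑`, a block `B` of `𝓑 \ Σ` meets every `xK` in at most one nonzero vector
(`blocks_of_cyclic`), so `π_B` has seven points. The statements on points and on `w` hold because
`xK = yK` exactly when `y / x` has order dividing 7, while `g` has order `511 = 7 · 73`.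

Given distinct points `xK` and `yK`, each of the seven pairs `x`, `c y` with `c` a nonzero element of
`K` lies in a unique block, and every `π_B` through `xK` and `yK` arises in this way after multiplying
`B` by an element of `K`. What has to be shown is that these seven blocks have distinct point sets, and
this follows if two blocks with the same point set are `K`-multiples of each other (`eq_sc_of_rel`).

Suppose that they are not. After scaling, the blocks contain `1, ρ` and `1, k ρ` with `1 ≠ k ∈ K`. The
equality of the point sets becomes a set of conditions on three parameters from `K`; a check of all
cases in `K` (`finite_step`) shows that, up to a common factor, the two blocks are `{z + t z ^ 2 : z ∈ K}`
and `{z + t z ^ 4 : z ∈ K}` for some `t ∉ K` (`key_false`).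

No cyclic design contains such a pair of blocks (`not_excPair`). By cyclicity a block is determined,
up to multiplication by `F^*`, by any of its lines, where lines too are taken up to `F^*`. The lines
not contained in a point fall into 84 such classes, the ratios `y / x` of the vectors on a line being
an orbit under `r ↦ r⁻¹` and `r ↦ 1 + r`. The seven lines of a block occupy a set of classes, and
these sets partition the 84 classes. Scaling `t` by `K`, inverting it and applying the Frobenius map
reduce `t` to `α, α ^ 3, α ^ 5, α ^ 11`, where `α ^ 9 = α ^ 4 + 1`. In each of these cases a search
(`solve`) shows that the classes of the pair cannot be completed to a partition; `solve_sound` is the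
soundness of the search, `chk` verifies that the lists of candidate blocks used in it are complete.
-/

noncomputable section

/-- `F9` is the field `𝔽_{2^9}`, viewed as a 9-dimensional vector space over `𝔽_2`. -/
abbrev F9 := GaloisField 2 9

/-- The subfield `K` of order 8 of `𝔽_{2^9}`, as a set: `K = {x : x^8 = x}`. -/
def Kset : Set F9 := {x | x ^ 8 = x}

/-- The 1-dimensional `K`-subspace `xK` of `F9` spanned by `x`; for `x ≠ 0` these are
the points of `PG(2,8)` (with `F9` viewed as a 3-dimensional `K`-vector space). -/
def pt (x : F9) : Set F9 := {y | ∃ c ∈ Kset, y = x * c}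

/-- `P` is a point of `PG(2,8)`: a 1-dimensional `K`-subspace `xK` with `x ≠ 0`. -/
def PGpoint (P : Set F9) : Prop := ∃ x : F9, x ≠ 0 ∧ P = pt x

/-- `L` is a line of `PG(2,8)`: a 2-dimensional `K`-subspace `xK + yK` with `x, y`
linearly independent over `K`. -/
def PGline (L : Set F9) : Prop :=
  ∃ x y : F9, x ≠ 0 ∧ y ∉ pt x ∧ L = {z | ∃ a ∈ Kset, ∃ b ∈ Kset, z = x * a + y * b}

/-- `Σ`: the members of the design which are of the form `xK` (the Desarguesian
2-spread), viewed as `𝔽_2`-subspaces of `F9`. -/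
def SigmaSet : Set (Submodule (ZMod 2) F9) := {S | ∃ x : F9, x ≠ 0 ∧ (S : Set F9) = pt x}

/-- `𝓑` is a cyclic 2-analog of a `(9,3,1)`-design: a set of 3-dimensional
`𝔽_2`-subspaces of `F9` such that every 2-dimensional `𝔽_2`-subspace is contained in
exactly one member, invariant under multiplication by the generator `g` of `F9^*`. -/
def IsCyclicTwoAnalog (g : F9) (𝓑 : Set (Submodule (ZMod 2) F9)) : Prop :=
  (∀ x : F9, x ≠ 0 → ∃ m : ℕ, g ^ m = x) ∧
  (∀ S ∈ 𝓑, Module.finrank (ZMod 2) S = 3) ∧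
  (∀ T : Submodule (ZMod 2) F9, Module.finrank (ZMod 2) T = 2 → ∃! S, S ∈ 𝓑 ∧ T ≤ S) ∧
  (∀ S ∈ 𝓑, ∃ S' ∈ 𝓑, (S' : Set F9) = (fun x => g * x) '' (S : Set F9))

/-- `π_B`: the set of points `xK` of `PG(2,8)` with `x` a nonzero element of `B`. -/
def piB (B : Submodule (ZMod 2) F9) : Set (Set F9) :=
  {P | ∃ x ∈ (B : Set F9), x ≠ 0 ∧ P = pt x}

/-- `𝓑' = {π_B : B ∈ 𝓑 \ Σ}`. -/
def Bprime (𝓑 : Set (Submodule (ZMod 2) F9)) : Set (Set (Set F9)) :=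
  {π | ∃ B ∈ 𝓑 \ SigmaSet, π = piB B}

/-- The permutation `w : xK ↦ (gx)K` of the points of `PG(2,8)`. -/
def wmap (g : F9) (P : Set F9) : Set F9 := (fun x => g * x) '' P

/-- The induced action of `w` on blocks (sets of points) of `PG(2,8)`. -/
def wact (g : F9) (π : Set (Set F9)) : Set (Set F9) := wmap g '' π

/-- The orbit of a block `π` under the group `W = ⟨w⟩`. -/
def Worbit (g : F9) (π : Set (Set F9)) : Set (Set (Set F9)) :=
  {ρ | ∃ m : ℕ, (wact g)^[m] π = ρ}

/-- `π ∩ ℓ`: the set of points of `π` contained (as `K`-subspaces) in the line `L`. -/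
def lineSec (π : Set (Set F9)) (L : Set F9) : Set (Set F9) := {P ∈ π | P ⊆ L}

/-- The imprint `I(𝓞,ℓ) = {π ∩ ℓ : π ∈ 𝓞, |π ∩ ℓ| = 3}` of an orbit `𝓞` on a line `L`. -/
def imprint (O : Set (Set (Set F9))) (L : Set F9) : Set (Set (Set F9)) :=
  {s | ∃ π ∈ O, (lineSec π L).ncard = 3 ∧ s = lineSec π L}

/-- The sublines `PG(1,2)` of a line `L`: the 3-element sets of points
`{xK, yK, (x+y)K}` with `x, y ∈ L` linearly independent over `K`. -/
def sublines (L : Set F9) : Set (Set (Set F9)) :=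
  {s | ∃ x y : F9, x ∈ L ∧ y ∈ L ∧ x ≠ 0 ∧ y ∉ pt x ∧ s = {pt x, pt y, pt (x + y)}}

end

/-! ### Logarithm tables for `𝔽_512` -/

/-- Packed table of the bit vectors of the powers `α ^ i`, `i < 511`, where `α ^ 9 = α ^ 4 + 1`;
nine bits for each entry. -/
def powTable : ℕ := 1411589266770012991317770747697509668678963873823649634995095541537739067599461751473235906612544223186908763929961750758069544740153591655925558087602075524547433653991169534946874016416490427488704833734911129337059025528604121066255057150496613538722589966813084125341390600548527140306321497457409610695327776154365512503661920897709656620457237532298011389536918570366130250296496430414741648264526702706039824885491240152109705833118002482737580873459530557835823684113184495812573441364874742834522176010938108182630965736150905323833931434306638181580782642554275595925110965550853184162852067828504348689946892247280791438837505347595438372227611682002967654676871902215484902927693231800130119642695845957594036964787703254735535603565972964088573860997217014318952964774247819516073255710856550690044262900746878537876899703186290591886286836910712318021100739911381683472064368129194369396710027276580182612179323153622127355975167987586737734228415118967545180913755955329244228391666424564441887087095428975160480889669297136805225524340857929407795747454394445865725717374138797434590327338154805024282903460124645535541748726530381855810579424276615762710386768050895139514878994988139009328533143171366865290631655271220186153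0169746230070260611661287972270464685044102147009261943740084226452584811808063810578786282208591075150208507846287054085846450897918572364801

/-- Packed table of Zech logarithms to the base `α`, nine bits for each entry. -/
def zechTable : ℕ := 6917804757176340094963780891430910254204241286209638836479420366031733655705417142530748067269716486422515406849284146520709564544803441923963176071242937070662184448236063342470508213891334071377815373772248906159871497932295182566814806737052149434683431121114474449672542345253327539876002878041215886015657691564250832073923956723033715292223808573200593797971971623910590228689845361216993083392064900025861428467616738777505620029794638884495832553016416184829422414259005386780632652655170930059833520276565547883280987505395524358608820410249872124702237619468376145394889850957138170395161294130044293867948254216745803258432435191115665622039280841970683209998751358800760406521399259914424006534164704169746915288015504594076903291962346930380165993938265380957411573513088566386033944080369300365032490307007930920486346533856861444905554072026379616147511290364573971094407342595026589622959694798278698433427425770595758075354307203244701192556500518373335646543458572163216434060678576276004151616212795325353910141656292973739852572436708865828064876740332442946492517765894217344125729015026125213181110057096060111637549234149300189493265327376687441471860155301559894400234588583845340644142051038021758596399823649174526155259364234766394737266027950708612230626965143578579935732571467743016633814139502477904029683404368833881251317361862750841371048080852452352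

/-- Packed table of the classes of logarithms, seven bits for each entry. Two logarithms `i`, `j`
outside `73ℤ` lie in the same class when `α ^ i` and `α ^ j` are in one orbit of the group
generated by `r ↦ r⁻¹` and `r ↦ 1 + r`; there are 84 such classes. Multiples of 73, the
logarithms of elements of `K`, carry the label 127. -/
def clsTable : ℕ := 38029323299274649429606761664712672807938194553804872509999606368540362248058536120285365029122380336180516374100497202659367165587916755340930193814066152023123343311696666277878271468762698122762358420820748435159766994077351261365398518940374898661458892542962108834729470090946157806631251299584660161337525410511809069033985475195340410911702087341840507225250786242996375801779943585828749183869339460917737437486890265992578008548611393055384270106334980737062866279594540042189139037556384631198967137079802974885524757784491691015013113196086949671686799720002093867408869276967146378947615362008831985228165168914635895318513315639160103539195366236701789039820151366591423214116010582837760852040889376553430289344370863960193526167077598947848755856959930978380503995027348071350164814045253018641663778868433840467572245935467102797150247074901035560573585737901801656678052619340502378093220622065879227977733667251376286983698363672202925465215503695120116462406575869354926563009155319915155664671551534071527648988395015172376003767644403535036384574193791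

/-- Packed table with one logarithm from each of the 84 classes, nine bits for each entry. -/
def repTable : ℕ := 94836545514547883070761584324170546008776127483811056079459762835077012854368370548451604444706868405270415994219757122953320064894493486384433252849135761307805107869659395456032630768710010301782262618212359395584382511875073

/-- Bit vector of `α ^ i` with respect to the basis `1, α, …, α ^ 8`. -/
def powT (i : ℕ) : ℕ := Nat.mod (Nat.shiftRight powTable (Nat.mul (nat_lit 9) i)) (nat_lit 512)

/-- Zech logarithm: `1 + α ^ i = α ^ zech i` for `0 < i < 511`. -/
def zech (i : ℕ) : ℕ := Nat.mod (Nat.shiftRight zechTable (Nat.mul (nat_lit 9) i)) (nat_lit 512)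

/-- Class of the logarithm `i < 511`. -/
def cls (i : ℕ) : ℕ := Nat.mod (Nat.shiftRight clsTable (Nat.mul (nat_lit 7) i)) (nat_lit 128)

/-- Representative logarithm of the class `c < 84`. -/
def rep (c : ℕ) : ℕ := Nat.mod (Nat.shiftRight repTable (Nat.mul (nat_lit 9) c)) (nat_lit 512)

/-- Subtraction modulo 511, for `a, b < 511`. -/
def dif (a b : ℕ) : ℕ := Nat.mod (Nat.sub (Nat.add a (nat_lit 511)) b) (nat_lit 511)

/-- Addition modulo 511. -/
def adm (a b : ℕ) : ℕ := Nat.mod (Nat.add a b) (nat_lit 511)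

/-- Multiplication by `α` on bit vectors. -/
def xtime (n : ℕ) : ℕ := if n < 256 then 2 * n else (2 * n) ^^^ 529

theorem powT_zero : powT 0 = 1 := by decide +kernel

theorem powT_succ : ∀ i < 510, powT (i + 1) = xtime (powT i) := by decide +kernel

theorem powT_last : xtime (powT 510) = 1 := by decide +kernel

theorem powT_lt (i : ℕ) : powT i < 512 := Nat.mod_lt _ (by norm_num)

theorem xtime_eq : ∀ n < 512, n < 256 ∨
    (xtime n = (2 * (n - 256)) ^^^ 17 ∧ n = (n - 256) ^^^ 256) := by decide +kernel

theorem zech_spec : ∀ i < 511, 0 < i → zech i < 511 ∧ powT (zech i) = powT i ^^^ 1 := by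
  decide +kernel

theorem cls_spec : ∀ i < 511, i % 73 ≠ 0 →
    cls i < 84 ∧ cls (dif 0 i) = cls i ∧ cls (zech i) = cls i := by
  decide +kernel

theorem cls_orbit : ∀ i < 511, i % 73 ≠ 0 →
    (i = rep (cls i) ∨ i = dif 0 (rep (cls i)) ∨ i = zech (rep (cls i)) ∨
      i = dif 0 (zech (rep (cls i))) ∨ i = zech (dif 0 (rep (cls i))) ∨
      i = dif 0 (zech (dif 0 (rep (cls i))))) := by
  decide +kernel

theorem rep_spec : ∀ c < 84, rep c < 511 ∧ rep c % 73 ≠ 0 ∧ cls (rep c) = c := by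
  decide +kernel

/-! ### The field `𝔽_512` with a root of `X ^ 9 + X ^ 4 + 1` -/

/-- The element `∑ nₖ α ^ k` of `R` with bit vector `n = ∑ nₖ 2 ^ k`, `k < 9`. -/
def value {R : Type*} [Field R] (α : R) (n : ℕ) : R :=
  ∑ k ∈ Finset.range 9, if n.testBit k then α ^ k else 0

theorem value_xor {R : Type*} [Field R] [CharP R 2] (α : R) (m n : ℕ) :
    value α (m ^^^ n) = value α m + value α n := by
  unfold value
  rw [← Finset.sum_add_distrib]
  refine Finset.sum_congr rfl fun k _ => ?_
  rw [Nat.testBit_xor]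
  cases m.testBit k <;> cases n.testBit k <;> simp [CharTwo.add_self_eq_zero]

theorem value_two_mul {R : Type*} [Field R] (α : R) (n : ℕ) (hn : n < 256) :
    value α (2 * n) = α * value α n := by
  have h8 : n.testBit 8 = false := Nat.testBit_lt_two_pow hn
  unfold value
  rw [Finset.sum_range_succ', Finset.sum_range_succ (n := 8)]
  simp only [h8, Finset.mul_sum, mul_add]
  have h0 : (2 * n).testBit 0 = false := by simp
  simp only [h0]
  simp only [Bool.false_eq_true, if_false, mul_zero, add_zero]
  refine Finset.sum_congr rfl fun k _ => ?_
  have : (2 * n).testBit (k + 1) = n.testBit k := by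
    rw [Nat.testBit_succ]; congr 1; omega
  rw [this]
  split_ifs <;> ring

theorem value_one {R : Type*} [Field R] (α : R) : value α 1 = 1 := by
  simp [value, Finset.sum_range_succ, Nat.testBit, Nat.shiftRight_eq_div_pow]

theorem value_256 {R : Type*} [Field R] (α : R) : value α 256 = α ^ 8 := by
  simp [value, Finset.sum_range_succ, Nat.testBit, Nat.shiftRight_eq_div_pow]

theorem value_17 {R : Type*} [Field R] (α : R) : value α 17 = 1 + α ^ 4 := by
  simp [value, Finset.sum_range_succ, Nat.testBit, Nat.shiftRight_eq_div_pow]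

theorem value_xtime {R : Type*} [Field R] [CharP R 2] {α : R} (hα : α ^ 9 = α ^ 4 + 1)
    (n : ℕ) (hn : n < 512) :
    value α (xtime n) = α * value α n := by
  by_cases h : n < 256
  · rw [xtime, if_pos h, value_two_mul α n h]
  · rcases xtime_eq n hn with h' | ⟨h1, h2⟩
    · exact absurd h' h
    · rw [h1, value_xor, value_two_mul _ _ (by omega)]
      conv_rhs => rw [h2]
      rw [value_xor, value_256, value_17]
      linear_combination -hα

theorem value_powT {R : Type*} [Field R] [CharP R 2] {α : R} (hα : α ^ 9 = α ^ 4 + 1)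
    (i : ℕ) (hi : i < 511) :
    value α (powT i) = α ^ i := by
  induction i with
  | zero => rw [powT_zero, value_one, pow_zero]
  | succ i ih =>
    rw [powT_succ i (by omega), value_xtime hα _ (powT_lt i), ih (by omega)]; ring

theorem pow_511 {R : Type*} [Field R] [CharP R 2] {α : R} (hα : α ^ 9 = α ^ 4 + 1) :
    α ^ 511 = 1 := by
  have h := value_xtime hα _ (powT_lt 510)
  rw [powT_last, value_one, value_powT hα 510 (by norm_num)] at h
  rw [h]; ring

theorem one_add_pow {R : Type*} [Field R] [CharP R 2] {α : R} (hα : α ^ 9 = α ^ 4 + 1)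
    (i : ℕ) (hi : i < 511) (h0 : 0 < i) :
    1 + α ^ i = α ^ zech i := by
  obtain ⟨h1, h2⟩ := zech_spec i hi h0
  rw [← value_powT hα _ h1, h2, value_xor, value_one, value_powT hα i hi, add_comm]

noncomputable instance : Fintype F9 := Fintype.ofFinite _

theorem card_F9 : Fintype.card F9 = 512 := by
  rw [← Nat.card_eq_fintype_card, GaloisField.card 2 9 (by norm_num)]; norm_num

theorem pow_512 (x : F9) : x ^ 512 = x := by
  have := FiniteField.pow_card x
  rwa [card_F9] at this

theorem pow_511_of_ne (x : F9) (hx : x ≠ 0) : x ^ 511 = 1 := by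
  have := FiniteField.pow_card_sub_one_eq_one x hx
  rwa [card_F9] at this

theorem add_self (x : F9) : x + x = 0 := CharTwo.add_self_eq_zero x

/-- A root of `X ^ 9 + X ^ 4 + 1` in the algebraic closure has order dividing 511, hence is a
root of `X ^ 512 - X` and lies in `𝔽_512`. -/
theorem exists_root : ∃ α : F9, α ^ 9 = α ^ 4 + 1 := by
  let Ω := AlgebraicClosure F9
  have : CharP Ω 2 := charP_of_injective_algebraMap (algebraMap F9 Ω).injective 2
  obtain ⟨β, hβ⟩ := IsAlgClosed.exists_root
    (Polynomial.X ^ 9 - (Polynomial.X ^ 4 + 1) : Polynomial Ω) (by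
      have : (Polynomial.X ^ 9 - (Polynomial.X ^ 4 + 1) : Polynomial Ω).degree = 9 := by
        compute_degree!
      rw [this]; norm_num)
  have hβ' : β ^ 9 = β ^ 4 + 1 := by
    simpa [Polynomial.IsRoot, sub_eq_zero] using hβ
  have h512 : β ^ 512 = β := by
    rw [pow_succ, pow_511 hβ', one_mul]
  have hprod : (Polynomial.X ^ 512 - Polynomial.X : Polynomial F9) =
      ∏ a : F9, (Polynomial.X - Polynomial.C a) := by
    have hr := FiniteField.roots_X_pow_card_sub_X F9
    have hd := FiniteField.X_pow_card_sub_X_natDegree_eq F9 (p := Fintype.card F9)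
      Fintype.one_lt_card
    have hm : (Polynomial.X ^ Fintype.card F9 - Polynomial.X : Polynomial F9).Monic :=
      Polynomial.monic_X_pow_sub (by
        rw [Polynomial.degree_X]; exact_mod_cast Fintype.one_lt_card)
    have := Polynomial.prod_multiset_X_sub_C_of_monic_of_roots_card_eq hm (by
      rw [hr, hd]; rfl)
    rw [hr, card_F9] at this
    rw [← this]; rfl
  have h0 := congrArg (Polynomial.aeval β) hprod
  simp only [map_sub, map_pow, Polynomial.aeval_X, h512, sub_self, map_prod,
    Polynomial.aeval_C] at h0
  obtain ⟨a, -, ha⟩ := Finset.prod_eq_zero_iff.1 h0.symm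
  refine ⟨a, (algebraMap F9 Ω).injective ?_⟩
  rw [sub_eq_zero] at ha
  rw [map_pow, map_add, map_pow, map_one, ← ha, hβ']

theorem root_ne_zero {α : F9} (hα : α ^ 9 = α ^ 4 + 1) :
    α ≠ 0 := by
  rintro rfl
  simp at hα

theorem orderOf_root {α : F9} (hα : α ^ 9 = α ^ 4 + 1) :
    orderOf α = 511 := by
  have h := orderOf_dvd_of_pow_eq_one (pow_511 hα)
  have hpos : 0 < orderOf α := Nat.pos_of_dvd_of_pos h (by norm_num)
  by_contra hne
  have hlt : orderOf α < 511 := lt_of_le_of_ne (Nat.le_of_dvd (by norm_num) h) hne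
  have := one_add_pow hα _ hlt hpos
  rw [pow_orderOf_eq_one, add_self] at this
  exact pow_ne_zero _ (root_ne_zero hα) this.symm

theorem pow_mod_511 {α : F9} (hα : α ^ 9 = α ^ 4 + 1)
    (n : ℕ) : α ^ (n % 511) = α ^ n := by
  rw [← orderOf_root hα, pow_mod_orderOf]

theorem pow_inj_511 {α : F9} (hα : α ^ 9 = α ^ 4 + 1)
    {i j : ℕ} (hi : i < 511) (hj : j < 511) (h : α ^ i = α ^ j) : i = j := by
  have := pow_injOn_Iio_orderOf (x := α)
  rw [orderOf_root hα] at this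
  exact this hi hj h

theorem exists_log {α : F9} (hα : α ^ 9 = α ^ 4 + 1)
    (x : F9) (hx : x ≠ 0) : ∃ i < 511, α ^ i = x := by
  classical
  have hs : (Finset.range 511).image (fun i => α ^ i) = Finset.univ.erase 0 := by
    refine Finset.eq_of_subset_of_card_le ?_ ?_
    · intro y hy
      obtain ⟨i, -, rfl⟩ := Finset.mem_image.1 hy
      simp [root_ne_zero hα]
    · rw [Finset.card_erase_of_mem (Finset.mem_univ _), Finset.card_univ, card_F9,
        Finset.card_image_of_injOn, Finset.card_range]
      intro i hi j hj h
      exact pow_inj_511 hα (by simpa using hi) (by simpa using hj) h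
  have : x ∈ (Finset.range 511).image (fun i => α ^ i) := by rw [hs]; simp [hx]
  obtain ⟨i, hi, h⟩ := Finset.mem_image.1 this
  exact ⟨i, by simpa using hi, h⟩

theorem pow_dif {α : F9} (hα : α ^ 9 = α ^ 4 + 1)
    {a b : ℕ} (hb : b < 511) : α ^ dif a b = α ^ a / α ^ b := by
  have : dif a b = (a + 511 - b) % 511 := rfl
  rw [this, pow_mod_511 hα, eq_div_iff (pow_ne_zero _ (root_ne_zero hα)), ← pow_add,
    show a + 511 - b + b = a + 511 by omega, pow_add, pow_511 hα, mul_one]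

theorem pow_adm {α : F9} (hα : α ^ 9 = α ^ 4 + 1)
    (a b : ℕ) : α ^ adm a b = α ^ a * α ^ b := by
  have : adm a b = (a + b) % 511 := rfl
  rw [this, pow_mod_511 hα, pow_add]

theorem pow_seven_iff {α : F9} (hα : α ^ 9 = α ^ 4 + 1)
    {i : ℕ} : (α ^ i) ^ 7 = 1 ↔ i % 73 = 0 := by
  rw [← pow_mul, ← orderOf_dvd_iff_pow_eq_one, orderOf_root hα]
  omega

theorem dif_lt (a b : ℕ) : dif a b < 511 := Nat.mod_lt _ (by norm_num)

theorem adm_lt (a b : ℕ) : adm a b < 511 := Nat.mod_lt _ (by norm_num)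

/-! ### Exact cover search on the 84 classes -/

/-- A search plan. Each level records a class `e`, the number `2 ^ e`, and the list of the masks
of the blocks through class `e` that can be used at this point of the search. -/
inductive Lvl where
  | nil : Lvl
  | cons (e b : ℕ) (rows : List ℕ) (rest : Lvl) : Lvl

/-- `scan k u rows` is true when every row disjoint from `u` is refuted by `k` after adding it
to `u`. It is written with recursors so that it evaluates quickly in the kernel. -/
noncomputable def scan (k : ℕ → Bool) (u : ℕ) (rows : List ℕ) : Bool :=
  List.rec (motive := fun _ => Bool) true
    (fun m _ ih => Bool.rec (motive := fun _ => Bool) ih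
      (Bool.rec (motive := fun _ => Bool) false ih (k (Nat.lor u m)))
      (Nat.beq (Nat.land u m) (nat_lit 0))) rows

/-- `solve l u` is true when the depth-first search along the plan `l`, starting from the set `u`
of classes already covered, finds no exact cover. -/
noncomputable def solve (l : Lvl) : ℕ → Bool :=
  Lvl.rec (motive := fun _ => ℕ → Bool) (fun _ => false)
    (fun _ b rows _ ih u => Bool.rec (motive := fun _ => Bool) (ih u) (scan ih u rows)
      (Nat.beq (Nat.land u b) (nat_lit 0))) l

theorem scan_cons (k : ℕ → Bool) (u m : ℕ) (rows : List ℕ) :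
    scan k u (m :: rows) = true ↔
      (u &&& m = 0 → k (u ||| m) = true) ∧ scan k u rows = true := by
  have h : scan k u (m :: rows) = Bool.rec (motive := fun _ => Bool) (scan k u rows)
      (Bool.rec (motive := fun _ => Bool) false (scan k u rows) (k (u ||| m)))
      (Nat.beq (u &&& m) 0) := rfl
  rw [h]
  by_cases h0 : u &&& m = 0
  · have : Nat.beq (u &&& m) 0 = true := by simp [h0]
    rw [this]
    cases k (u ||| m) <;> simp [h0]
  · have : Nat.beq (u &&& m) 0 = false := by
      rw [Bool.eq_false_iff]; intro h; exact h0 (Nat.eq_of_beq_eq_true h)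
    rw [this]
    simp [h0]

theorem scan_mem {k : ℕ → Bool} {u m : ℕ} {rows : List ℕ} (h : scan k u rows = true)
    (hm : m ∈ rows) (h0 : u &&& m = 0) : k (u ||| m) = true := by
  induction rows with
  | nil => simp at hm
  | cons a rows ih =>
    rw [scan_cons] at h
    rcases List.mem_cons.1 hm with rfl | hm
    · exact h.1 h0
    · exact ih h.2 hm

theorem solve_nil (u : ℕ) : solve Lvl.nil u = false := rfl

theorem solve_cons_of_ne (e b : ℕ) (rows : List ℕ) (l : Lvl) (u : ℕ) (h : u &&& b ≠ 0) :
    solve (Lvl.cons e b rows l) u = solve l u := by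
  have h' : solve (Lvl.cons e b rows l) u = Bool.rec (motive := fun _ => Bool) (solve l u)
    (scan (solve l) u rows) (Nat.beq (u &&& b) 0) := rfl
  have : Nat.beq (u &&& b) 0 = false := by
    rw [Bool.eq_false_iff]; intro h1; exact h (Nat.eq_of_beq_eq_true h1)
  rw [h', this]

theorem solve_cons_of_eq (e b : ℕ) (rows : List ℕ) (l : Lvl) (u : ℕ) (h : u &&& b = 0) :
    solve (Lvl.cons e b rows l) u = scan (solve l) u rows := by
  have h' : solve (Lvl.cons e b rows l) u = Bool.rec (motive := fun _ => Bool) (solve l u)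
    (scan (solve l) u rows) (Nat.beq (u &&& b) 0) := rfl
  have : Nat.beq (u &&& b) 0 = true := by simp [h]
  rw [h', this]

/-- Logarithm of `α ^ i + α ^ j`. -/
def lsum (i j : ℕ) : ℕ := adm i (zech (dif j i))

/-- The number `2 ^ c` for the class `c` of the logarithm `i`. -/
def bit (i : ℕ) : ℕ := Nat.shiftLeft (nat_lit 1) (cls i)

/-- The set, as a bit mask, of the classes of the seven lines of the Fano plane
`⟨1, α ^ i, α ^ j⟩`. A degenerate or non-scattered choice of `i`, `j` produces the label 127. -/
def mask (i j : ℕ) : ℕ :=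
  Nat.lor (bit i) (Nat.lor (bit j) (Nat.lor (bit (lsum i j)) (Nat.lor (bit (dif j i))
    (Nat.lor (bit (dif (zech j) i)) (Nat.lor (bit (dif (zech i) j))
      (bit (dif (zech j) (zech i))))))))

/-- For the block `⟨1, α ^ i, α ^ j⟩` with `i = rep e`: its mask meets `w`, or occurs in `rows`, or
`j` is not the least logarithm of an element of the block outside `⟨1, α ^ i⟩`. -/
def rowOk (i w : ℕ) (rows : List ℕ) (j : ℕ) : Bool :=
  !(Nat.ble j (zech j)) || (!(Nat.ble j (lsum i j)) || (!(Nat.ble j (zech (lsum i j))) ||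
    (!(Nat.beq (Nat.land (mask i j) w) (nat_lit 0)) || rows.any (Nat.beq (mask i j)))))

/-- `rowOk` for all `j < n`. -/
noncomputable def rowsOk (i w : ℕ) (rows : List ℕ) (n : ℕ) : Bool :=
  Nat.rec (motive := fun _ => Bool) true (fun j ih => rowOk i w rows j && ih) n

/-- Every level of the plan lists all masks that are disjoint from the set `w` of classes covered
beforehand, enlarged by the classes of the previous levels. -/
noncomputable def chk (l : Lvl) : ℕ → Bool :=
  Lvl.rec (motive := fun _ => ℕ → Bool) (fun _ => true)
    (fun e b rows _ ih w => (Nat.blt e 84 && Nat.beq b (Nat.shiftLeft (nat_lit 1) e)) &&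
      (rowsOk (rep e) w rows (nat_lit 511) && ih (Nat.lor w b))) l

theorem rowsOk_spec {i w : ℕ} {rows : List ℕ} {n : ℕ} (h : rowsOk i w rows n = true) :
    ∀ j < n, rowOk i w rows j = true := by
  induction n with
  | zero => intro j hj; omega
  | succ n ih =>
    have h' : (rowOk i w rows n && rowsOk i w rows n) = true := h
    rw [Bool.and_eq_true] at h'
    intro j hj
    rcases Nat.lt_succ_iff_lt_or_eq.1 hj with hj | rfl
    · exact ih h'.2 j hj
    · exact h'.1

theorem rowOk_spec {i w j : ℕ} {rows : List ℕ} (h : rowOk i w rows j = true)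
    (h1 : j ≤ zech j) (h2 : j ≤ lsum i j) (h3 : j ≤ zech (lsum i j))
    (h4 : mask i j &&& w = 0) : mask i j ∈ rows := by
  have h4' : Nat.land (mask i j) w = 0 := h4
  have e1 := Nat.ble_eq_true_of_le h1
  have e2 := Nat.ble_eq_true_of_le h2
  have e3 := Nat.ble_eq_true_of_le h3
  have e4 : Nat.beq 0 (nat_lit 0) = true := rfl
  rw [rowOk, e1, e2, e3, h4', e4, Bool.not_true, Bool.false_or, Bool.false_or, Bool.false_or,
    Bool.false_or, List.any_eq_true] at h
  obtain ⟨x, hx, hx'⟩ := h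
  rw [Nat.eq_of_beq_eq_true hx']
  exact hx

theorem chk_cons {e b : ℕ} {rows : List ℕ} {l : Lvl} {w : ℕ}
    (h : chk (Lvl.cons e b rows l) w = true) :
    e < 84 ∧ b = 2 ^ e ∧ (∀ j < 511, rowOk (rep e) w rows j = true) ∧
      chk l (w ||| b) = true := by
  have h' : ((Nat.blt e 84 && Nat.beq b (Nat.shiftLeft 1 e)) &&
      (rowsOk (rep e) w rows 511 && chk l (w ||| b))) = true := h
  simp only [Bool.and_eq_true] at h'
  obtain ⟨⟨h1, h2⟩, h3, h4⟩ := h'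
  refine ⟨Nat.le_of_ble_eq_true h1, ?_, rowsOk_spec h3, h4⟩
  rw [Nat.eq_of_beq_eq_true h2]
  exact Nat.one_shiftLeft e

/-- Classes of the two blocks `{z + t z ^ 2}` and `{z + t z ^ 4}`, `z ∈ K`, with `t = α ^ i`. The
logarithms listed are those of the values at `z = 1`, `z = α ^ 73` and `z = α ^ 146`, divided by
the first one. -/
def start (i : ℕ) : ℕ :=
  Nat.lor
    (mask (dif (adm 73 (zech (adm i 73))) (zech i)) (dif (adm 146 (zech (adm i 146))) (zech i)))
    (mask (dif (adm 73 (zech (adm i 219))) (zech i)) (dif (adm 146 (zech (adm i 438))) (zech i)))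

/-- Search plan for `t = α ^ 1`. -/
def plan1 : Lvl :=
  Lvl.cons (nat_lit 1) (nat_lit 2)
    [nat_lit 1100585369631, nat_lit 562949978849378, nat_lit 2252392519172738,
      nat_lit 216172816876175490, nat_lit 288230376420147842, nat_lit 720580338560010274,
      nat_lit 19599700762688487507, nat_lit 73786976571326727426, nat_lit 590297516801289093122,
      nat_lit 617968178303443468290, nat_lit 885443716397588807682, nat_lit 2363490210346627498242,
      nat_lit 2437276065206177366018, nat_lit 18889835226648293671426,
      nat_lit 18890474737795111977090, nat_lit 37778932146631196280834,
      nat_lit 377789463028433693048834, nat_lit 604463065181502000103426,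
      nat_lit 604463846556586836230154, nat_lit 606824679642600875229186,
      nat_lit 1208925819619027221217383, nat_lit 1815749912663387174637570,
      nat_lit 4836588722738106369835010] <|
  Lvl.cons (nat_lit 6) (nat_lit 64)
    [nat_lit 4294984137, nat_lit 17730298183760, nat_lit 294669116260456, nat_lit 1416171513446848,
      nat_lit 18595043728425024, nat_lit 144126187487101264, nat_lit 290484376062404672,
      nat_lit 4899916394587783236, nat_lit 9223372036856922212, nat_lit 9223943783706525792,
      nat_lit 23348912268102403136, nat_lit 36893491458838954048, nat_lit 38046409652059506248,
      nat_lit 2656331155414564470976, nat_lit 18889474956270155859520,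
      nat_lit 37852718852583578402896, nat_lit 40213902080824261476416,
      nat_lit 75557881740622070546496, nat_lit 151115727451829999501408,
      nat_lit 154067206503622208668736, nat_lit 604463198075623890223424,
      nat_lit 623354690624194598666304, nat_lit 1208931007761399922296928] <|
  Lvl.cons (nat_lit 41) (nat_lit 2199023255552)
    [nat_lit 2268423323648, nat_lit 20617990508672, nat_lit 2255098384269312,
      nat_lit 3479032912240721920, nat_lit 110680466641557454976, nat_lit 627198307905476493329,
      nat_lit 2361327640305488367617, nat_lit 2361327930567968162336,
      nat_lit 2436125394332616228896, nat_lit 18889465974084658528256,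
      nat_lit 18889466496662470919168, nat_lit 19479762025855152291840,
      nat_lit 37779003940350998908928, nat_lit 37817050332411912519680,
      nat_lit 38406121163937196019712, nat_lit 302231743140664875032576,
      nat_lit 604463198044631406217216, nat_lit 605053205901347335045120,
      nat_lit 642251065062374692093952, nat_lit 1511157274520519868186880,
      nat_lit 1511194168008632910750224] <|
  Lvl.cons (nat_lit 75) (nat_lit 37778931862957161709568)
    [nat_lit 37778932426456870963200, nat_lit 37778951003255578039329,
      nat_lit 37779238126698398486528, nat_lit 37779526356799672287232,
      nat_lit 37788173268085297381377, nat_lit 38369227673350229266440,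
      nat_lit 38369229362719778422784, nat_lit 38406140301762776793088,
      nat_lit 56668397794442738663428, nat_lit 56668400046235573288960,
      nat_lit 56705435397771246174336, nat_lit 340017304304575628574720,
      nat_lit 642246453919790019919872, nat_lit 793357569122103751344640,
      nat_lit 1397821631850988343133184, nat_lit 1397829711590126070530048,
      nat_lit 4873482214262123534745616, nat_lit 4873778583487226834846720] <|
  Lvl.cons (nat_lit 14) (nat_lit 16384)
    [nat_lit 35536844636160, nat_lit 2251871754408448, nat_lit 1155174404469051904,
      nat_lit 23067437841181067264, nat_lit 295868481128338964480, nat_lit 591304634267422704640,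
      nat_lit 18898689338976833130496, nat_lit 75557863730449809948708,
      nat_lit 75560746311151891005952, nat_lit 151706455607752117075968,
      nat_lit 302231455466744820285697, nat_lit 302232033616209411854848,
      nat_lit 302305242161431672012808, nat_lit 302305539680477491775488,
      nat_lit 377790183320837511331840, nat_lit 604462981873707000021000,
      nat_lit 604467521494466919677968, nat_lit 1360046158753576297709568,
      nat_lit 4835704521456411907997696, nat_lit 4989184800837798595739664] <|
  Lvl.cons (nat_lit 49) (nat_lit 562949953421312)
    [nat_lit 2306405993526854664, nat_lit 2738751523394749472, nat_lit 3477342171655307264,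
      nat_lit 19601354978066825216, nat_lit 36912065496016355588, nat_lit 2361328201056418660353,
      nat_lit 2370407194048177635360, nat_lit 75557864290101361640452,
      nat_lit 302305251450101348434184, nat_lit 302306404654180435230720,
      nat_lit 604462928384736064702468, nat_lit 604481357154470424741888,
      nat_lit 680039220840261297901568, nat_lit 1208935115607283035537408,
      nat_lit 1285074123829048822989824, nat_lit 1511158716233256766799872,
      nat_lit 4835704450238846892900352] <|
  Lvl.cons (nat_lit 11) (nat_lit 2048)
    [nat_lit 34360142337, nat_lit 9148280342528, nat_lit 281474993494057,
      nat_lit 72057594306759169, nat_lit 576487217908680704, nat_lit 2306970010789087232,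
      nat_lit 2449958197560092704, nat_lit 36893769624546576384, nat_lit 18889466212958123067904,
      nat_lit 18930971105644461951104, nat_lit 75557864007389300525569,
      nat_lit 75559016647419198998784, nat_lit 75567087098088885717024,
      nat_lit 153476930959461792614420, nat_lit 172661596587515709491200,
      nat_lit 680029996905540643461248, nat_lit 4835703566732950625060864,
      nat_lit 5137953198125044291602432] <|
  Lvl.cons (nat_lit 20) (nat_lit 1048576)
    [nat_lit 6052873092149018752, nat_lit 36893523336221491328, nat_lit 41505209522018320416,
      nat_lit 73786976574012195080, nat_lit 73931126668361007108, nat_lit 79695703404532727808,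
      nat_lit 313594658049156710400, nat_lit 2361471489407592693760,
      nat_lit 18889754170650826932352, nat_lit 75557863743781388517408,
      nat_lit 305183006013044995129472, nat_lit 604481428618328318935040,
      nat_lit 604776504456846840430592, nat_lit 1208925821866979282125328,
      nat_lit 1360042988218339120119808, nat_lit 4835740171947214547976192,
      nat_lit 4986819294149517725667328] <|
  Lvl.cons (nat_lit 56) (nat_lit 72057594037927936)
    [nat_lit 72075186224136740, nat_lit 81086783533613824, nat_lit 218424581929600032,
      nat_lit 225181356026503168, nat_lit 1243275109569994752, nat_lit 18519936366465253376,
      nat_lit 37253776188477800456, nat_lit 83226521118101774336, nat_lit 887821621639136673792,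
      nat_lit 75558522377359826354440, nat_lit 151115799535811500838912,
      nat_lit 226673807350559443910657, nat_lit 305478153918224212690048,
      nat_lit 4911270581729249990804608, nat_lit 4911300990034483752206336] <|
  Lvl.cons (nat_lit 10) (nat_lit 1024)
    [nat_lit 689342514176, nat_lit 2323857450706404360, nat_lit 2449958300370863112,
      nat_lit 23067437360111166472, nat_lit 36903621246580696592, nat_lit 295157193854255367172,
      nat_lit 300048103048908637184, nat_lit 18892924696026761200648,
      nat_lit 18944950296479971410952, nat_lit 680020773537631252251780,
      nat_lit 4835998426369193609790596] <|
  Lvl.cons (nat_lit 59) (nat_lit 576460752303423488)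
    [nat_lit 720611127033135232, nat_lit 10952754295912534160, nat_lit 369529374285909458945,
      nat_lit 683106272988895379456, nat_lit 18890042673745052565508,
      nat_lit 77919623428788644478984, nat_lit 302250478117691716534276,
      nat_lit 453347776865821125509264, nat_lit 604468097954635107533088,
      nat_lit 606824670635401620226056, nat_lit 606824958865915210891520,
      nat_lit 1208926396084315027079168, nat_lit 1815755101936049222320129,
      nat_lit 4835706304877467382382592, nat_lit 4835740748407425013579776] <|
  Lvl.cons (nat_lit 43) (nat_lit 8796093022208)
    [nat_lit 26397707862032, nat_lit 1171014276907008, nat_lit 1416170976608384,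
      nat_lit 1153211776213463072, nat_lit 1308304492139118624, nat_lit 2305887273180200964,
      nat_lit 9223381936754458633, nat_lit 18448160416484819072, nat_lit 73931100279040901140,
      nat_lit 110977710813765435392, nat_lit 313603665282803695616, nat_lit 2370424636667355725856,
      nat_lit 18889467353147115569280, nat_lit 18889781192248589815840,
      nat_lit 94447330792091051655424, nat_lit 604776504465363743015044,
      nat_lit 1057810238538584510431236, nat_lit 1208925819627824388124672] <|
  Lvl.cons (nat_lit 77) (nat_lit 151115727451828646838272)
    [nat_lit 151115727451831876452384, nat_lit 151115727453065884737536,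
      nat_lit 151115747718035559940488, nat_lit 151124950824977898414080,
      nat_lit 151226696146647072636928, nat_lit 151743206106748285878272,
      nat_lit 170005202443832796385280, nat_lit 245563075123654420336648,
      nat_lit 245858205014400904069384, nat_lit 755579790180647843143968,
      nat_lit 756168935321301787214080, nat_lit 1057810092215577624969216,
      nat_lit 1360050770719969653293056, nat_lit 4986819439381878199615488] <|
  Lvl.cons (nat_lit 62) (nat_lit 4611686018427387904)
    [nat_lit 4611686092515704832, nat_lit 4612817424492789760, nat_lit 4620693836174200960,
      nat_lit 4620710809918509184, nat_lit 4629700490220044288, nat_lit 4755801211202961424,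
      nat_lit 5773614722305757344, nat_lit 6917546624122261504, nat_lit 23058430711686135808,
      nat_lit 78542778056465973504, nat_lit 301203276353866039296,
      nat_lit 302274113000435848577056, nat_lit 604504414982614305210368,
      nat_lit 4835708179500819775029248, nat_lit 4836003326596749979549952,
      nat_lit 4854606579483243523867136] <|
  Lvl.cons (nat_lit 54) (nat_lit 18014398509481984)
    [nat_lit 1172061803157520384, nat_lit 19618810275852976129, nat_lit 27689256443508162560,
      nat_lit 36912628995742244864, nat_lit 590313824825934610485, nat_lit 700994289268477132800,
      nat_lit 604462927821717660270592, nat_lit 604499965425048592089092,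
      nat_lit 1208928145724111589474448, nat_lit 1511452440473048704876560,
      nat_lit 4836385826003644609200129] <|
  Lvl.cons (nat_lit 9) (nat_lit 512)
    [nat_lit 9225629342816600576, nat_lit 18446744116661649920, nat_lit 590296091833684591364,
      nat_lit 2379774100765335880200, nat_lit 75594757214611498344977,
      nat_lit 302231752145665106387456, nat_lit 680039220277376708510208,
      nat_lit 4836597945550489658589952, nat_lit 5440166188265969264100096,
      nat_lit 6063537010766290358370816] <|
  Lvl.cons (nat_lit 0) (nat_lit 1)
    [nat_lit 9223372038482198537, nat_lit 18446749023961350145, nat_lit 18889465931485056925953,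
      nat_lit 18889467057378487767305, nat_lit 18889467062120133689345,
      nat_lit 606824237445421069238273, nat_lit 1208925819896173005373473,
      nat_lit 1211287147252735648202753, nat_lit 1511157274553470983110657,
      nat_lit 4835703287465854063640577, nat_lit 4835777065452405870559233,
      nat_lit 4854675754738329120178177] <|
  Lvl.cons (nat_lit 13) (nat_lit 8192)
    [nat_lit 144150372481507332, nat_lit 2449994481207091200, nat_lit 295147906279015456780,
      nat_lit 297453749288346591232, nat_lit 371240742077738295296, nat_lit 590295846367711473668,
      nat_lit 2361183241984586817564, nat_lit 2361193374877581582344,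
      nat_lit 2363498096043753480192, nat_lit 3246626957248044212224,
      nat_lit 302231463912024779530264, nat_lit 302231743138469072871424,
      nat_lit 604464062728819733176320, nat_lit 604539002661803548221696] <|
  Lvl.cons (nat_lit 2) (nat_lit 4)
    [nat_lit 700976274800965128196, nat_lit 18889465931516161888260,
      nat_lit 18889468183278419968020, nat_lit 19553548999608175165460,
      nat_lit 77919049220257069662212, nat_lit 6044629098090841138790436] <|
  Lvl.nil

set_option maxRecDepth 100000 in
theorem solve_plan1 : solve plan1 (nat_lit 12104753501911727900983296) = true := by
  decide +kernel

theorem start_eq_1 : start 1 = 12104753501911727900983296 := by decide +kernel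

set_option maxRecDepth 100000 in
theorem chk_plan1 : chk plan1 (Nat.lor 12104753501911727900983296 (2 ^ 127)) = true := by
  decide +kernel

/-- Search plan for `t = α ^ 3`. -/
def plan3 : Lvl :=
  Lvl.cons (nat_lit 2) (nat_lit 4)
    [nat_lit 149610890790932, nat_lit 10273922549285892, nat_lit 72075186224136740,
      nat_lit 2305887273180200964, nat_lit 37578035290781548548, nat_lit 73931100279040901140,
      nat_lit 1199038437358888288260, nat_lit 9444805023333328356100,
      nat_lit 77919049220257069662212, nat_lit 113336795588978926419972,
      nat_lit 113336805721970650923012, nat_lit 152317071661828004659204,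
      nat_lit 153476910768030260135044, nat_lit 302233760755462667501572,
      nat_lit 340031139353697449934852, nat_lit 358900431410662333218820,
      nat_lit 604499803858686904897540, nat_lit 680020773537631252251780,
      nat_lit 911419037036867986915332, nat_lit 1057810238538584510431236,
      nat_lit 1210180199337541331599364, nat_lit 2417925427366637504299012,
      nat_lit 9671406559309579289624590, nat_lit 9746964429685339938881540,
      nat_lit 10351427332702148021452804, nat_lit 12089258233301006121172996] <|
  Lvl.cons (nat_lit 83) (nat_lit 9671406556917033397649408)
    [nat_lit 9671406556925863850445072, nat_lit 9671406559168835365127168,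
      nat_lit 9671406592956825801851136, nat_lit 9671406592963456962660608,
      nat_lit 9671406631367166891393024, nat_lit 9671406703284023575183360,
      nat_lit 9671407709838606757532224, nat_lit 9671409511419130736050176,
      nat_lit 9671427345532913340645504, nat_lit 9671461897237215456544768,
      nat_lit 9673767740202484119896064, nat_lit 9676129500071770168754208,
      nat_lit 9692657206094894938980352, nat_lit 9699740827872463784247296,
      nat_lit 9711546672030221474988616, nat_lit 9747038209871051097113600,
      nat_lit 9747038496413668184424448, nat_lit 9822522860935201823948800,
      nat_lit 9973638011821310240882752, nat_lit 9973638020898293049985280,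
      nat_lit 9974228307631050609132544, nat_lit 9983119638345495900848160,
      nat_lit 12693739588726477062932608] <|
  Lvl.cons (nat_lit 78) (nat_lit 302231454903657293676544)
    [nat_lit 302231454974584383602720, nat_lit 302232033616209411854848,
      nat_lit 302249901652134422773760, nat_lit 302305241951970143502624,
      nat_lit 302305251450101348434184, nat_lit 302305539680477491775488,
      nat_lit 305183006013044995129472, nat_lit 306953821457445472960544,
      nat_lit 306953893444395855511616, nat_lit 306953966628181857271872,
      nat_lit 306957282411911544045568, nat_lit 311676223899911589990400,
      nat_lit 325861878177267372392448, nat_lit 387234375997420589809664,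
      nat_lit 453347758825034408394752, nat_lit 456298733464873510895744,
      nat_lit 2720083094134015154999552, nat_lit 2722444277374350735184896,
      nat_lit 3324619790951709440740352] <|
  Lvl.cons (nat_lit 43) (nat_lit 8796093022208)
    [nat_lit 9148280342528, nat_lit 80268643796352, nat_lit 1171014276907008,
      nat_lit 36039798577692712, nat_lit 36602742088663552, nat_lit 144126187487101264,
      nat_lit 1225005504145653760, nat_lit 1308304492139118624, nat_lit 110977710813765435392,
      nat_lit 609319023983093874688, nat_lit 1181168107858266424320,
      nat_lit 2361327930567968162336, nat_lit 18889754170650826932352,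
      nat_lit 94447330792091051655424, nat_lit 604462981873707000021000,
      nat_lit 604481428618328318935040, nat_lit 1284483683454893783252992,
      nat_lit 2417925426359484815511554, nat_lit 2436741105169534098100224,
      nat_lit 2436741105169536244531232] <|
  Lvl.cons (nat_lit 46) (nat_lit 70368744177664)
    [nat_lit 288318358590328832, nat_lit 1298237428166819840, nat_lit 18446834237959045128,
      nat_lit 76101896872055013634, nat_lit 110680534811039240256, nat_lit 590584128704378601472,
      nat_lit 592673922068194000960, nat_lit 1199110634590903992320,
      nat_lit 4722402582045076226304, nat_lit 4722690812411732033536,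
      nat_lit 5312698392394118201344, nat_lit 9445885957621231387040,
      nat_lit 37779508411680327467008, nat_lit 75557863831467708514312,
      nat_lit 160560463302686448550032, nat_lit 604462910019520332038304,
      nat_lit 605053277746735654895616, nat_lit 605643861786373079957520,
      nat_lit 1208925819685273870533890, nat_lit 2417851643240277036105728,
      nat_lit 2417925426275921934290944, nat_lit 2420212822541336794234880,
      nat_lit 3629138643281865877749760] <|
  Lvl.cons (nat_lit 20) (nat_lit 1048576)
    [nat_lit 1188954735106867200, nat_lit 2306970010789087232, nat_lit 18455751565023117336,
      nat_lit 73859209815099703296, nat_lit 2361471489407592693760, nat_lit 3541846954930644976672,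
      nat_lit 4724673451778777286656, nat_lit 37778931862957163413530,
      nat_lit 76739644472855222026240, nat_lit 188895812377029246976000,
      nat_lit 1208925819614921233563920, nat_lit 1218960848390735828910080,
      nat_lit 1247296200209466829832200, nat_lit 3626777470103161471631360] <|
  Lvl.cons (nat_lit 69) (nat_lit 590295810358705651712)
    [nat_lit 591304634267422704640, nat_lit 591448749472745785344, nat_lit 591484901398898016256,
      nat_lit 1770889683464349548544, nat_lit 1771463927051455561728,
      nat_lit 5312698322025437724928, nat_lit 19479761741906005983280,
      nat_lit 38369227675533278447616, nat_lit 38369229362719778422784,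
      nat_lit 38406121163937196019712, nat_lit 39550972251272013416448,
      nat_lit 154067206503622208668736, nat_lit 756168935321301787214080,
      nat_lit 1219034635367023082736640, nat_lit 1285074123829048822989824,
      nat_lit 2418441935040718781286464] <|
  Lvl.cons (nat_lit 15) (nat_lit 32768)
    [nat_lit 2255098384269312, nat_lit 36028797021111296, nat_lit 218424581929600032,
      nat_lit 288230384808788106, nat_lit 614741349136122944, nat_lit 19025456917884993536,
      nat_lit 19599806865833230336, nat_lit 4741966148722839683088, nat_lit 4796225657496009871360,
      nat_lit 37779003940350998908928, nat_lit 49660940889435326677504,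
      nat_lit 75559016647419198998784, nat_lit 151115728054378199285760,
      nat_lit 151134174763267536224272, nat_lit 604463065181502000103426,
      nat_lit 628148529197957651922960, nat_lit 1815749912663387174637570,
      nat_lit 2417888532718539639930912, nat_lit 2419032383972363225563168,
      nat_lit 2455630571094483421659136] <|
  Lvl.cons (nat_lit 17) (nat_lit 131072)
    [nat_lit 1302938459439104, nat_lit 72198368033638416, nat_lit 288230410847126018,
      nat_lit 19601354978066825216, nat_lit 4796225516758521479184, nat_lit 4796225516758588850208,
      nat_lit 18890474737795111977090, nat_lit 23611832555085715079216,
      nat_lit 47223664833094502973512, nat_lit 47225970671705674875008,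
      nat_lit 94447329657427331268640, nat_lit 151115727454027770904578,
      nat_lit 1208928163755827407224960, nat_lit 2417925427472465460855808] <|
  Lvl.cons (nat_lit 21) (nat_lit 2097152)
    [nat_lit 9009398380756992, nat_lit 9147936845858944, nat_lit 612489549601309712,
      nat_lit 2449958300370863112, nat_lit 37253776188477800456, nat_lit 73786979095158980736,
      nat_lit 73795983494195970050, nat_lit 7083550340032055214080,
      nat_lit 11808511406528106856448, nat_lit 18889465974084658528256,
      nat_lit 75558088905895698235394, nat_lit 113336939704093923344512,
      nat_lit 151115727451829999501408, nat_lit 628074742256847188132352,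
      nat_lit 1208926974224987939405824, nat_lit 2417855386787098277183496,
      nat_lit 2422574006838040788468224, nat_lit 2427297525134094435090688,
      nat_lit 2455649017836297812709632, nat_lit 3626779764704493220921360] <|
  Lvl.cons (nat_lit 32) (nat_lit 4294967296)
    [nat_lit 280250811650, nat_lit 2305983759721168976, nat_lit 2361183386574853767296,
      nat_lit 2361183980328111325184, nat_lit 2361185528457730195488,
      nat_lit 11806240466368792100864, nat_lit 18890402680222582308864,
      nat_lit 113336796714777901531168, nat_lit 680039220277376708510208,
      nat_lit 1218370599868718603304960, nat_lit 2417851639246854964641808,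
      nat_lit 2417888532718511722594562, nat_lit 3626777495998590925930496] <|
  Lvl.cons (nat_lit 70) (nat_lit 1180591620717411303424)
    [nat_lit 1180592746617587110928, nat_lit 1180667231967389941760,
      nat_lit 1180879851094704390168, nat_lit 1180951914460036989440,
      nat_lit 1181168081469794422800, nat_lit 1181168116656234302480,
      nat_lit 3541774867102183982080, nat_lit 3578668385554892062722,
      nat_lit 38960712433985057194240, nat_lit 76739031807384340136208,
      nat_lit 76739608408874098360320, nat_lit 79120391175149480837632,
      nat_lit 227873782604776186315008, nat_lit 605643789658480091070528,
      nat_lit 1210106484418842678265920, nat_lit 1210180198211650283126784,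
      nat_lit 1361296213893846223306752, nat_lit 1814569609277437519069192,
      nat_lit 2419050677595148981895584] <|
  Lvl.cons (nat_lit 42) (nat_lit 4398046511104)
    [nat_lit 2273790348755200, nat_lit 81086783533613824, nat_lit 720580338560010274,
      nat_lit 36894618455040589824, nat_lit 37298816513002700800, nat_lit 4722366628013904236546,
      nat_lit 9444733005321713221640, nat_lit 9444742030113150337088,
      nat_lit 42501298350774777022464, nat_lit 604463198044631406217216,
      nat_lit 604481357154470424741888, nat_lit 609185276349557860466696,
      nat_lit 1208925819759764709576706, nat_lit 2417855170075555463692288,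
      nat_lit 2417926003233722210453504] <|
  Lvl.cons (nat_lit 40) (nat_lit 1099511627776)
    [nat_lit 3315719471648, nat_lit 18563839382008102912, nat_lit 2416523615492951261440,
      nat_lit 2436125394332616228896, nat_lit 9444734094954912024640,
      nat_lit 18889465933402730402048, nat_lit 37779508325102108279296,
      nat_lit 75631652955108621156352, nat_lit 85002884923146591277056,
      nat_lit 87456013654625215315968, nat_lit 160578907162741158461458,
      nat_lit 1813425622911192907382848] <|
  Lvl.cons (nat_lit 9) (nat_lit 512)
    [nat_lit 2251871754408448, nat_lit 2252392519172738, nat_lit 288230376420147842,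
      nat_lit 585467951759491714, nat_lit 38046409652059506248, nat_lit 2379774100765335880200,
      nat_lit 9444732965757745367552, nat_lit 18889474956270155859520,
      nat_lit 18889835226648293671426, nat_lit 37781525936617472131712,
      nat_lit 151189514569135951970816, nat_lit 793357569122103751344640,
      nat_lit 1218372860675178566255232] <|
  Lvl.cons (nat_lit 65) (nat_lit 36893488147419103232)
    [nat_lit 36893646754186004480, nat_lit 36894051097443831808, nat_lit 36894051097716461632,
      nat_lit 36903621247654690816, nat_lit 18944950296479971410952,
      nat_lit 37817050332411912519680, nat_lit 42538191834249103952000,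
      nat_lit 56705435397771246174336, nat_lit 604500092651739139014672,
      nat_lit 1211323896484966084641026, nat_lit 1230231809019763782320128,
      nat_lit 2569078047145598006591490] <|
  Lvl.cons (nat_lit 28) (nat_lit 268435456)
    [nat_lit 216172816876175490, nat_lit 73790356211030818816, nat_lit 9444770122635516317696,
      nat_lit 9444877080964141944848, nat_lit 75577463426686944018432,
      nat_lit 1208925819632256123142416, nat_lit 1218370588609174376023040,
      nat_lit 2417851937029783986110496] <|
  Lvl.cons (nat_lit 53) (nat_lit 9007199254740992)
    [nat_lit 9148005605179552, nat_lit 18528934767986999312, nat_lit 42501307951710143004672,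
      nat_lit 75558522377359826354440, nat_lit 170005202443832796385280,
      nat_lit 604481401587394234548224, nat_lit 606824679642600875229186,
      nat_lit 623354690624194598666304] <|
  Lvl.cons (nat_lit 1) (nat_lit 2)
    [nat_lit 842887333122, nat_lit 1765411054004994050, nat_lit 18890151041640614068226,
      nat_lit 113336795588942386167810, nat_lit 604463846556586836230154,
      nat_lit 1360115334042761316795394] <|
  Lvl.nil

set_option maxRecDepth 100000 in
theorem solve_plan3 : solve plan3 (nat_lit 4836159858173952116465665) = true := by
  decide +kernel

theorem start_eq_3 : start 3 = 4836159858173952116465665 := by decide +kernel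

set_option maxRecDepth 100000 in
theorem chk_plan3 : chk plan3 (Nat.lor 4836159858173952116465665 (2 ^ 127)) = true := by
  decide +kernel

/-- Search plan for `t = α ^ 5`. -/
def plan5 : Lvl :=
  Lvl.cons (nat_lit 66) (nat_lit 73786976294838206464)
    [nat_lit 73786979095158980736, nat_lit 73931100279040901140, nat_lit 73931126668361007108,
      nat_lit 74093370740536508416, nat_lit 78475223781808873472, nat_lit 110680544156869197824,
      nat_lit 221432986479626358800, nat_lit 221505079531874033664, nat_lit 700976274800965128196,
      nat_lit 700994289268477132800, nat_lit 2587155858537324806144,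
      nat_lit 28412597559532211675136, nat_lit 29000587526949348311041,
      nat_lit 151226696146647072636928, nat_lit 302305539680477491775488,
      nat_lit 604548262045044699037697, nat_lit 1209589906904882614435848,
      nat_lit 1210180202715241052129280, nat_lit 1219034635367023082736640,
      nat_lit 1361296213893846223306752, nat_lit 2417925426275921934290944,
      nat_lit 2569078047145598006591490, nat_lit 3324619790951709440740352,
      nat_lit 4835795548225343171069952, nat_lit 5459129445694796518662144] <|
  Lvl.cons (nat_lit 52) (nat_lit 4503599627370496)
    [nat_lit 157625991255558144, nat_lit 301890742974941184, nat_lit 1166432307784450048,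
      nat_lit 2310909833706012680, nat_lit 2328361007352644656, nat_lit 2361205829801705865220,
      nat_lit 2508851769616673865760, nat_lit 11807073632282644316192,
      nat_lit 37788168886530389049348, nat_lit 113336800162839875559424,
      nat_lit 151118073827509518991872, nat_lit 151120379670518598467584,
      nat_lit 305183010516644755669120, nat_lit 453347294945751502684161,
      nat_lit 604464067232556263153664, nat_lit 755579794684248009474560,
      nat_lit 756169009639491832381440, nat_lit 1209516696433320276264960,
      nat_lit 2417852796655049782853632, nat_lit 2418008729288410415497220,
      nat_lit 2419623251739874473019392, nat_lit 2427307329455090055512064,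
      nat_lit 9746966730989573758844928] <|
  Lvl.cons (nat_lit 53) (nat_lit 9007199254740992)
    [nat_lit 315394911501549568, nat_lit 4620693836174200960, nat_lit 4620710809918509184,
      nat_lit 5773614722305757344, nat_lit 11538257429699510276, nat_lit 18455751565023117336,
      nat_lit 23067437360111166472, nat_lit 23067437841181067264, nat_lit 590304817901574553648,
      nat_lit 627198307905476493329, nat_lit 1771040553876301283328,
      nat_lit 18889781192248589815840, nat_lit 18889835226648293671426,
      nat_lit 19482076592183462330400, nat_lit 75558088905895698235394,
      nat_lit 170005202443832796385280, nat_lit 198339401358127457632257,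
      nat_lit 605645816348746650222593, nat_lit 642241851310789969903616,
      nat_lit 4855773345088280824119298, nat_lit 7255916110007053016104960,
      nat_lit 9671411177610251096561792, nat_lit 9822522887851212113186816,
      nat_lit 9843772960633741956349952] <|
  Lvl.cons (nat_lit 54) (nat_lit 18014398509481984)
    [nat_lit 90081355578212354, nat_lit 2323928326391070720, nat_lit 3477342171655307264,
      nat_lit 9241395231478317058, nat_lit 590313824825934610485, nat_lit 1180609635115955394048,
      nat_lit 1182915550692902961154, nat_lit 2361201255833873745920,
      nat_lit 2370424636667355725856, nat_lit 19037238183189349924872,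
      nat_lit 28924512862713648513056, nat_lit 75562493428530288263170,
      nat_lit 151120357224813351403524, nat_lit 245563075123654420336648,
      nat_lit 302231508982105913690128, nat_lit 303421287910810104889346,
      nat_lit 453347776865821125509264, nat_lit 604462928384736064702468,
      nat_lit 604504433558829169377280, nat_lit 613907805043378236686336,
      nat_lit 1218372876438325947269120, nat_lit 4836293592986965650964480,
      nat_lit 5440166206280234111599104] <|
  Lvl.cons (nat_lit 38) (nat_lit 274877906944)
    [nat_lit 4720335634315608580, nat_lit 9223372328913731632, nat_lit 590295846367711473668,
      nat_lit 10071922264657732042788, nat_lit 302236102759485106298888,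
      nat_lit 302250478117691716534276, nat_lit 642251065062374692093952,
      nat_lit 680029996905540643461248, nat_lit 1208925819614921253453858,
      nat_lit 1208925819615455421137024, nat_lit 1211305593715600677535744,
      nat_lit 2420212822541336794234880, nat_lit 4911261142184744559050784,
      nat_lit 9671452673795084735496224, nat_lit 9672734723053565350248960,
      nat_lit 9682216493059690148659200] <|
  Lvl.cons (nat_lit 2) (nat_lit 4)
    [nat_lit 144150372481507332, nat_lit 37469948900394205188, nat_lit 1199038366990145486852,
      nat_lit 1199038384719769108612, nat_lit 1199038437358888288260,
      nat_lit 1217665252987365228548, nat_lit 18889466001869336740868,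
      nat_lit 37797955138151921025028, nat_lit 152296463187734134589444,
      nat_lit 152317071661828004659204, nat_lit 2417862303788910090649604,
      nat_lit 4835740171946664119631908, nat_lit 6044629098090841138790436,
      nat_lit 9671407709838538004496391, nat_lit 9671998005684082155978757] <|
  Lvl.cons (nat_lit 83) (nat_lit 9671406556917033397649408)
    [nat_lit 9671406557490979004219920, nat_lit 9671410087739142334119936,
      nat_lit 9671427345532913340645504, nat_lit 9671461897237215456544768,
      nat_lit 9672592336684525868290048, nat_lit 9673767740202484119896064,
      nat_lit 9699740827872463784247296, nat_lit 9709190244721934553055240,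
      nat_lit 9973647235192762996424704, nat_lit 9974228307631050609132544,
      nat_lit 9983119638345495900848160, nat_lit 10880332449152344036278272,
      nat_lit 10889777181555137668186112, nat_lit 10899223067442377270493184,
      nat_lit 12098704082033673083355138, nat_lit 12693721105953623514349568,
      nat_lit 12693739588726477062932608, nat_lit 14507112141219110156501120,
      nat_lit 14658227868670392252239872] <|
  Lvl.cons (nat_lit 70) (nat_lit 1180591620717411303424)
    [nat_lit 1180592201328287023264, nat_lit 1180664241261402980896,
      nat_lit 1181168107858266424320, nat_lit 1199038382383306966560,
      nat_lit 3541846919746276100112, nat_lit 3541846954930644976672,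
      nat_lit 39550972251272013416448, nat_lit 76739608408874098360320,
      nat_lit 76739644472855222026240, nat_lit 79120391175149480837632,
      nat_lit 152296319098934341468161, nat_lit 152333500799934458232832,
      nat_lit 227893418158414033321985, nat_lit 303416658210462925725696,
      nat_lit 4836883906125777933959169] <|
  Lvl.cons (nat_lit 75) (nat_lit 37778931862957161709568)
    [nat_lit 37778931862957163413530, nat_lit 37778931862957465273345,
      nat_lit 37778932426456870963200, nat_lit 37783580149518922940432,
      nat_lit 37945240789996699455520, nat_lit 38369227673350229266440,
      nat_lit 38369227675533278447616, nat_lit 40144726790565030527000,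
      nat_lit 113336939704093923344512, nat_lit 188895812377029246976000,
      nat_lit 340017304304575628574720, nat_lit 642241841881377999421441,
      nat_lit 642246453919790019919872, nat_lit 642255676869064788017153,
      nat_lit 793357713395618146156545, nat_lit 1247296200209466829832200,
      nat_lit 1397821631850988343133184, nat_lit 2455799185862264262492192,
      nat_lit 2606746442659335313555456, nat_lit 4873482246948405205010434,
      nat_lit 4873483399307028577910786] <|
  Lvl.cons (nat_lit 29) (nat_lit 536870912)
    [nat_lit 35202089234432, nat_lit 72127997695494145, nat_lit 180144123071709696,
      nat_lit 2305878211302805504, nat_lit 590295845565089714176, nat_lit 2363489084444573966338,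
      nat_lit 9444805603876055023616, nat_lit 9463179709813838839808,
      nat_lit 18889466496662470919168, nat_lit 85030266948502471835648,
      nat_lit 151115727557399480111104, nat_lit 151115799535811500838912,
      nat_lit 151706455607752117075968, nat_lit 604464062728819733176320,
      nat_lit 1057810092215577624969216, nat_lit 1360042988218339120119808,
      nat_lit 3626777458986824706818064, nat_lit 4835740171947214547976192,
      nat_lit 4835740748407416958746624, nat_lit 4835851428874642354339840,
      nat_lit 5440166188265831827775520, nat_lit 6044633709761363865240064] <|
  Lvl.cons (nat_lit 7) (nat_lit 128)
    [nat_lit 216172816876175490, nat_lit 288230376420147842, nat_lit 36893523336221491328,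
      nat_lit 147574656294300680320, nat_lit 590295812712616165512, nat_lit 9444733669565278453888,
      nat_lit 18890474737795111977090, nat_lit 18930971105644461951104,
      nat_lit 302231454938910787960960, nat_lit 305183006013044995129472,
      nat_lit 321269071248477859610752, nat_lit 456298733464873510895744,
      nat_lit 4835706016647090140348560, nat_lit 4835852581793363302416512,
      nat_lit 4911270581729249990804608] <|
  Lvl.cons (nat_lit 10) (nat_lit 1024)
    [nat_lit 1574449, nat_lit 1577985, nat_lit 2306405993526854664, nat_lit 2449958300370863112,
      nat_lit 2738751523394749472, nat_lit 46117000938942237696, nat_lit 147574102191983559680,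
      nat_lit 591304634267422704640, nat_lit 18892924696026761200648,
      nat_lit 18944950296479971410952, nat_lit 302231526961251349955585,
      nat_lit 906841938663566125040640, nat_lit 2427296372338071590667264,
      nat_lit 2722444277374350735184896, nat_lit 6120186961878225034159104] <|
  Lvl.cons (nat_lit 43) (nat_lit 8796093022208)
    [nat_lit 36602742088663552, nat_lit 13835207606045507586, nat_lit 14015210836470006280,
      nat_lit 156797333972652654593, nat_lit 2361327930567968162336,
      nat_lit 2370443214019038281728, nat_lit 75705437687317291597826,
      nat_lit 604481428618328318935040, nat_lit 1208926396084315027079168,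
      nat_lit 1284483683454893783252992, nat_lit 2417856251064982156869648,
      nat_lit 2436741105169534098100224, nat_lit 2512298968895448420474880,
      nat_lit 4986819294149517725667328] <|
  Lvl.cons (nat_lit 3) (nat_lit 8)
    [nat_lit 18446834237959045128, nat_lit 161409045967038054408, nat_lit 608742554449729302536,
      nat_lit 9592451086293601091592, nat_lit 75557863831467708514312,
      nat_lit 75705437749010182969352, nat_lit 77919623428788644478984,
      nat_lit 245563165196162363817992, nat_lit 302272960077909307949064,
      nat_lit 604463846556586836230154, nat_lit 1209073393567219254050824,
      nat_lit 2417855386787098277183496, nat_lit 2417860862636479597249032,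
      nat_lit 5137934733502911514411016, nat_lit 7254163660242207465538056] <|
  Lvl.cons (nat_lit 22) (nat_lit 4194304)
    [nat_lit 70369822703634, nat_lit 144117391398281250, nat_lit 157085625371431276560,
      nat_lit 591484901398898016256, nat_lit 2951515080590686167040,
      nat_lit 18889754161854771367937, nat_lit 153476910693263473707008,
      nat_lit 925587289407101725573120, nat_lit 6044629098075344900980768,
      nat_lit 6044629098075396440596480, nat_lit 6120187105916447317032960] <|
  Lvl.cons (nat_lit 55) (nat_lit 36028797018963968)
    [nat_lit 1765411122665508864, nat_lit 4791970879524306944, nat_lit 48458731990641410048,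
      nat_lit 590620280638125645824, nat_lit 11806240466368792100864,
      nat_lit 18889502701346437464064, nat_lit 18890151041640614068226,
      nat_lit 75558260042698713989121, nat_lit 151152945199149389709312,
      nat_lit 387234375997420589809664, nat_lit 3107317181757040749510656] <|
  Lvl.cons (nat_lit 36) (nat_lit 68719476736)
    [nat_lit 4611686092515704832, nat_lit 9592306918432048414721, nat_lit 19479761741906005983280,
      nat_lit 75604052643778534572034, nat_lit 680039220277376708510208,
      nat_lit 1208935115607283035537408, nat_lit 1208944266376505523830784,
      nat_lit 2436743411566799176597536] <|
  Lvl.cons (nat_lit 25) (nat_lit 33554432)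
    [nat_lit 288230397660102657, nat_lit 288318358590328832, nat_lit 18890402680222582308864,
      nat_lit 2417854089187490166472720] <|
  Lvl.nil

set_option maxRecDepth 100000 in
theorem solve_plan5 : solve plan5 (nat_lit 5017518052732066365760) = true := by
  decide +kernel

theorem start_eq_5 : start 5 = 5017518052732066365760 := by decide +kernel

set_option maxRecDepth 100000 in
theorem chk_plan5 : chk plan5 (Nat.lor 5017518052732066365760 (2 ^ 127)) = true := by
  decide +kernel

/-- Search plan for `t = α ^ 11`. -/
def plan11 : Lvl :=
  Lvl.cons (nat_lit 30) (nat_lit 1073741824)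
    [nat_lit 1100585369631, nat_lit 70369822703634, nat_lit 369437023141888,
      nat_lit 7335942687817856, nat_lit 290484376062404672, nat_lit 725133417150152704,
      nat_lit 9223373274946209800, nat_lit 18528934767986999312, nat_lit 1180879851094704390168,
      nat_lit 2370406631099296907264, nat_lit 4722402582045076226304,
      nat_lit 7083550340032055214080, nat_lit 7083873983513139085312,
      nat_lit 10772901353797219000320, nat_lit 151115727451831876452384,
      nat_lit 604481401587394234548224, nat_lit 605643789658480091070528,
      nat_lit 605791075662097759076368, nat_lit 2568967366681090218532928,
      nat_lit 3097872413043971908960256, nat_lit 4835706304877467382382592,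
      nat_lit 9673767740202484119896064, nat_lit 9673776963530506350624768,
      nat_lit 14507112141219110156501120] <|
  Lvl.cons (nat_lit 63) (nat_lit 9223372036854775808)
    [nat_lit 9223374510990821376, nat_lit 9228159379202899968, nat_lit 9295711105937317888,
      nat_lit 9808839988418183440, nat_lit 11529320736623824896, nat_lit 11538257429699510276,
      nat_lit 156797324763970148352, nat_lit 157085625371431276560, nat_lit 599521438593420624128,
      nat_lit 601834037002075898112, nat_lit 617968178303443468290, nat_lit 2370407194048177635360,
      nat_lit 2370444911695190032384, nat_lit 5321885669663285772544,
      nat_lit 75567089351056661942272, nat_lit 151125536294016150405120,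
      nat_lit 613916866147289764203520, nat_lit 613916902173887760040960,
      nat_lit 642251065062374692093952, nat_lit 680029996905540643461248,
      nat_lit 2417861150832221124296708, nat_lit 2418008729288410415497220,
      nat_lit 4911270581729249990804608] <|
  Lvl.cons (nat_lit 51) (nat_lit 2251799813685248)
    [nat_lit 6755468702662656, nat_lit 6825768218918984, nat_lit 7318349395656968,
      nat_lit 38280639849497600, nat_lit 74344578290810912, nat_lit 75505663106613264,
      nat_lit 290781243266565120, nat_lit 23132809854732732480, nat_lit 23348912268102403136,
      nat_lit 147720319577565964294, nat_lit 2361221522581486567440,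
      nat_lit 42501877058653810589696, nat_lit 77919049220257069662212,
      nat_lit 151115734224820278263816, nat_lit 151115945876411115374592,
      nat_lit 151120345963615796330497, nat_lit 160560463302686448550032,
      nat_lit 604462957095110674939968, nat_lit 605200781831408631939074,
      nat_lit 756168935321301787214080, nat_lit 4836293576526172818243584,
      nat_lit 4873482214262123534745616, nat_lit 7255325816377850233618433,
      nat_lit 9671406559168835365127168, nat_lit 9671406559450310341820424,
      nat_lit 9671406703284023575183360] <|
  Lvl.cons (nat_lit 22) (nat_lit 4194304)
    [nat_lit 562958555943169, nat_lit 36028840006656000, nat_lit 4899917494641229824,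
      nat_lit 18446745722982236177, nat_lit 148438644267891557632, nat_lit 1181168081469794422800,
      nat_lit 2951515080590686167040, nat_lit 3541774862221502849024,
      nat_lit 3541846919746276100112, nat_lit 4722690812411732033536,
      nat_lit 4869940435528054735104, nat_lit 5312698392394118201344,
      nat_lit 9444733005321713221640, nat_lit 9444733269204520665096,
      nat_lit 9444877116388784734208, nat_lit 37778931898212539187200,
      nat_lit 47223664833094502973512, nat_lit 75557936909442632122560,
      nat_lit 75558088905895698235394, nat_lit 75562475974882783920132,
      nat_lit 113336805721970650923012, nat_lit 152296319098934341468161,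
      nat_lit 153476910693263473707008, nat_lit 2418441939543216686629064,
      nat_lit 5440166188265831827775520] <|
  Lvl.cons (nat_lit 55) (nat_lit 36028797018963968)
    [nat_lit 36033332506542145, nat_lit 36310271995947042, nat_lit 37154971971493892,
      nat_lit 180148520581332992, nat_lit 18563839382008102912, nat_lit 20793400954546294816,
      nat_lit 147618988594540249152, nat_lit 2361219552256590884864,
      nat_lit 5312698322025437724928, nat_lit 7821455516049919180800,
      nat_lit 9444778002835075956800, nat_lit 151120379670518598467584,
      nat_lit 4873482246948405205010434, nat_lit 4874662838287647639601154,
      nat_lit 9671406592963456962660608, nat_lit 9671427345532913340645504,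
      nat_lit 12693739588726477062932608] <|
  Lvl.cons (nat_lit 6) (nat_lit 64)
    [nat_lit 17730298183760, nat_lit 294669116260456, nat_lit 562949978849378,
      nat_lit 1416171513446848, nat_lit 590876774710770666560, nat_lit 1180664241571177168960,
      nat_lit 9444742030113150337088, nat_lit 9445021198383185199168,
      nat_lit 85002596691756693590080, nat_lit 154067206503622208668736,
      nat_lit 604463198075623890223424, nat_lit 605055511742157550518592,
      nat_lit 605200779571362514731072, nat_lit 2417870378742492210137152,
      nat_lit 2418441935040718781286464, nat_lit 2423754597332845405937857,
      nat_lit 2573689733199690769891392, nat_lit 4835703423699604748636480,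
      nat_lit 4986819005914743392714820] <|
  Lvl.cons (nat_lit 48) (nat_lit 281474976710656)
    [nat_lit 281474993494057, nat_lit 73500290799632640, nat_lit 18448160416484819072,
      nat_lit 2361327640305488367617, nat_lit 2361328201056418660353,
      nat_lit 9449417008418918498564, nat_lit 37778932146631196280834,
      nat_lit 75560174353998175010832, nat_lit 79099638870091298242576,
      nat_lit 165282836190761081372672, nat_lit 605053205901347335045120,
      nat_lit 606824237445421069238273, nat_lit 2417851639511454889541632,
      nat_lit 2417851711585928157331456, nat_lit 9672734722772090339983360] <|
  Lvl.cons (nat_lit 38) (nat_lit 274877906944)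
    [nat_lit 2473970385025, nat_lit 9148280342528, nat_lit 20617990508672,
      nat_lit 288248251806140416, nat_lit 2305887273180200964, nat_lit 2310909833706012680,
      nat_lit 2594073737552723992, nat_lit 4616752843087413249, nat_lit 590295846367711473668,
      nat_lit 590304817901574553648, nat_lit 1771040553876301283328,
      nat_lit 2361193374877581582344, nat_lit 604463198044631406217216,
      nat_lit 642241841670548858355712, nat_lit 2420212822541336794234880] <|
  Lvl.cons (nat_lit 43) (nat_lit 8796093022208)
    [nat_lit 576487217908680704, nat_lit 18519936366465253376, nat_lit 592601768816640262145,
      nat_lit 609319023983093874688, nat_lit 1180591635011062662144,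
      nat_lit 10041946313921797816320, nat_lit 10625905559604926873600,
      nat_lit 151115799535811500838912, nat_lit 604462981873707000021000,
      nat_lit 604481428618328318935040, nat_lit 756169009639491832381440,
      nat_lit 2494004410460348046376962, nat_lit 4835703566732950625060864,
      nat_lit 4849870377986840361697280, nat_lit 4986819005919210225271812,
      nat_lit 4986819294149517725667328, nat_lit 9709185488788787197779968,
      nat_lit 14507109839887945884508160] <|
  Lvl.cons (nat_lit 29) (nat_lit 536870912)
    [nat_lit 9144109068, nat_lit 696388681752, nat_lit 2268423323648, nat_lit 72127997695494145,
      nat_lit 590297516801289093122, nat_lit 2363489084444573966338,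
      nat_lit 2363490210346627498242, nat_lit 2365796128120484659200,
      nat_lit 9444805603876055023616, nat_lit 38959523483675111989632,
      nat_lit 151706455607752117075968, nat_lit 2417851639229258953394313,
      nat_lit 4835851428874642354339840, nat_lit 9671406845147410094751744,
      nat_lit 9671996852763676532408320] <|
  Lvl.cons (nat_lit 81) (nat_lit 2417851639229258349412352)
    [nat_lit 2417854089187490166472720, nat_lit 2419050677595148981895584,
      nat_lit 2419623251739874473019392, nat_lit 2428482151962485781963008,
      nat_lit 2455630643152017162240000, nat_lit 2455649017836297812709632,
      nat_lit 2455799185862264262492192, nat_lit 2502858847624522585604096,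
      nat_lit 2606746298544046338998560, nat_lit 2606746442659335313555456,
      nat_lit 7253720942888038128680961, nat_lit 7255916101492159827542016,
      nat_lit 12089866938701823673892867, nat_lit 16924961479109507585147008] <|
  Lvl.cons (nat_lit 24) (nat_lit 16777216)
    [nat_lit 4508135140098064, nat_lit 2377972621281067008, nat_lit 4620693836174200960,
      nat_lit 4620710809918509184, nat_lit 1180591625115609071656, nat_lit 1180592201328287023264,
      nat_lit 2508757194035253346308, nat_lit 7083549759491004187648,
      nat_lit 75557868233912014077968, nat_lit 113336800162839875559424,
      nat_lit 5449610921231570593595392, nat_lit 9671406556917067774167296,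
      nat_lit 9671411168607999780454400, nat_lit 9671411177610251096561792,
      nat_lit 9709185493287988250279952, nat_lit 9746964429652346015842576] <|
  Lvl.cons (nat_lit 59) (nat_lit 576460752303423488)
    [nat_lit 576461441679818752, nat_lit 580967102857610240, nat_lit 720580338560010274,
      nat_lit 720611127033135232, nat_lit 591304634267422704640, nat_lit 1181168116656234302480,
      nat_lit 9445309989441548328960, nat_lit 9445382047173024153860,
      nat_lit 37797955138151921025028, nat_lit 75558522377359826354440,
      nat_lit 77919623428788644478984, nat_lit 82642278141347279929345,
      nat_lit 604463846556586836230154, nat_lit 604468097954635107533088,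
      nat_lit 606824670635401620226056, nat_lit 606824679642600875229186,
      nat_lit 606824958865915210891520, nat_lit 9671407134503685607915563,
      nat_lit 9678495303795307851022344] <|
  Lvl.cons (nat_lit 21) (nat_lit 2097152)
    [nat_lit 9009398380756992, nat_lit 2449958300370863112, nat_lit 4612817424492789760,
      nat_lit 608742554432417370112, nat_lit 4724673451778777286656,
      nat_lit 9592306918432048414721, nat_lit 9592308624771016294400,
      nat_lit 11808511406528106856448, nat_lit 38369227673350229266440,
      nat_lit 80280230208783970740353, nat_lit 113336939704093923344512,
      nat_lit 4836293574268875406905600] <|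
  Lvl.cons (nat_lit 19) (nat_lit 524288)
    [nat_lit 1577985, nat_lit 144185625548488832, nat_lit 2382224058893965197568,
      nat_lit 10625473205244472594432, nat_lit 37778931862957163413530,
      nat_lit 37779075978179606220801, nat_lit 47225970671705674875008,
      nat_lit 76152771222293604466688, nat_lit 113336795588942386167810,
      nat_lit 152296463187734134589444, nat_lit 609185348347778338131984] <|
  Lvl.cons (nat_lit 75) (nat_lit 37778931862957161709568)
    [nat_lit 37778932426456870963200, nat_lit 37945240789996699455520,
      nat_lit 37945240789996766495776, nat_lit 42501298350774777022464,
      nat_lit 42501307951710143004672, nat_lit 113336800096869192630304,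
      nat_lit 198339401358127457632257, nat_lit 642246453919790019919872,
      nat_lit 4873482211447442553971712] <|
  Lvl.cons (nat_lit 17) (nat_lit 131072)
    [nat_lit 9592315929962775445504, nat_lit 151115727454027770904578,
      nat_lit 226673807350559443910657, nat_lit 604610483767051089478656,
      nat_lit 4835703282979710659854468] <|
  Lvl.cons (nat_lit 1) (nat_lit 2)
    [nat_lit 23058502659904454658, nat_lit 149880921498806388738, nat_lit 4724672332475928684546,
      nat_lit 9444732965739290509330, nat_lit 160578907162741158461458,
      nat_lit 604462915454406308659210, nat_lit 4849870377908225280313346] <|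
  Lvl.cons (nat_lit 11) (nat_lit 2048)
    [nat_lit 2306970010789087232, nat_lit 23067437841181067264, nat_lit 154491481754756454432,
      nat_lit 9451651620666847791104, nat_lit 75705437749010182969352,
      nat_lit 604481357154470424741888] <|
  Lvl.nil

set_option maxRecDepth 100000 in
theorem solve_plan11 : solve plan11 (nat_lit 1530453739896049007362560) = true := by
  decide +kernel

theorem start_eq_11 : start 11 = 1530453739896049007362560 := by decide +kernel

set_option maxRecDepth 100000 in
theorem chk_plan11 : chk plan11 (Nat.lor 1530453739896049007362560 (2 ^ 127)) = true := by
  decide +kernel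

/-! ### Scattered blocks and the classes of their lines -/

/-- The subspace `cB`. -/
noncomputable def sc (c : F9) (B : Submodule (ZMod 2) F9) : Submodule (ZMod 2) F9 :=
  B.map (LinearMap.mulLeft (ZMod 2) c)

theorem mul_mem_sc {c x : F9} {B : Submodule (ZMod 2) F9} (h : x ∈ B) : c * x ∈ sc c B :=
  ⟨x, h, rfl⟩

theorem mem_sc {c x : F9} {B : Submodule (ZMod 2) F9} (hc : c ≠ 0) :
    x ∈ sc c B ↔ c⁻¹ * x ∈ B := by
  constructor
  · rintro ⟨y, hy, rfl⟩
    simpa [LinearMap.mulLeft_apply, hc] using hy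
  · intro h
    exact ⟨_, h, by simp [LinearMap.mulLeft_apply, hc]⟩

/-- The properties of `𝓝 = 𝓑 \ Σ` on which the argument rests: its members have 8 elements, it is
invariant under multiplication by nonzero scalars, two members sharing two nonzero vectors are
equal, two vectors that are independent over `K` lie in some member, and every member is
scattered, that is, it meets each `xK` in at most one nonzero vector. Membership of a nonzero
element in `K` is expressed by `x ^ 7 = 1`. -/
structure Blocks (N : Set (Submodule (ZMod 2) F9)) : Prop where
  card : ∀ B ∈ N, Nat.card B = 8
  sc_mem : ∀ B ∈ N, ∀ c : F9, c ≠ 0 → sc c B ∈ N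
  uniq : ∀ B ∈ N, ∀ B' ∈ N, ∀ x y : F9, x ≠ 0 → y ≠ 0 → x ≠ y → x ∈ B → y ∈ B → x ∈ B' →
    y ∈ B' → B = B'
  ex : ∀ x y : F9, x ≠ 0 → y ≠ 0 → (y / x) ^ 7 ≠ 1 → ∃ B ∈ N, x ∈ B ∧ y ∈ B
  scat : ∀ B ∈ N, ∀ x ∈ B, ∀ y ∈ B, x ≠ 0 → y ≠ 0 → (y / x) ^ 7 = 1 → x = y

theorem add_eq_zero_iff_eq' {x y : F9} : x + y = 0 ↔ x = y := by
  rw [CharTwo.add_eq_zero]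

/-- The `𝔽_2`-combination of `x`, `y`, `z` with the given three coefficients. -/
noncomputable def combo (x y z : F9) (a b c : Bool) : F9 :=
  (if a then x else 0) + (if b then y else 0) + (if c then z else 0)

theorem combo_add (x y z : F9) (a b c a' b' c' : Bool) :
    combo x y z a b c + combo x y z a' b' c' =
      combo x y z (a ^^ a') (b ^^ b') (c ^^ c') := by
  have hx := add_self x
  have hy := add_self y
  have hz := add_self z
  cases a <;> cases b <;> cases c <;> cases a' <;> cases b' <;> cases c' <;>
    simp only [combo, Bool.false_eq_true, if_true, if_false, Bool.xor_false,
      Bool.xor_true, Bool.not_true, Bool.not_false] <;>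
    first
      | ring1
      | linear_combination hx
      | linear_combination hy
      | linear_combination hz
      | linear_combination hx + hy
      | linear_combination hx + hz
      | linear_combination hy + hz
      | linear_combination hx + hy + hz

theorem combo_mem {B : Submodule (ZMod 2) F9} {x y z : F9} (hx : x ∈ B) (hy : y ∈ B)
    (hz : z ∈ B) (a b c : Bool) : combo x y z a b c ∈ B := by
  unfold combo
  refine B.add_mem (B.add_mem ?_ ?_) ?_ <;> split_ifs <;> first | assumption | exact B.zero_mem

theorem combo_eq_zero {x y z : F9} (hx : x ≠ 0) (hy : y ≠ 0) (hxy : y ≠ x) (hz : z ≠ 0)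
    (hzx : z ≠ x) (hzy : z ≠ y) (hzxy : z ≠ x + y) {a b c : Bool}
    (h : combo x y z a b c = 0) : a = false ∧ b = false ∧ c = false := by
  cases a <;> cases b <;> cases c <;> simp [combo] at h ⊢
  · exact hz h
  · exact hy h
  · exact hzy (add_eq_zero_iff_eq'.1 h).symm
  · exact hx h
  · exact hzx (add_eq_zero_iff_eq'.1 h).symm
  · exact hxy (add_eq_zero_iff_eq'.1 h).symm
  · exact hzxy (add_eq_zero_iff_eq'.1 h).symm

theorem exists_combo {B : Submodule (ZMod 2) F9} (hB : Nat.card B = 8) {x y z : F9}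
    (hxB : x ∈ B) (hyB : y ∈ B) (hzB : z ∈ B) (hx : x ≠ 0) (hy : y ≠ 0) (hxy : y ≠ x)
    (hz : z ≠ 0) (hzx : z ≠ x) (hzy : z ≠ y) (hzxy : z ≠ x + y) {v : F9} (hv : v ∈ B) :
    ∃ a b c : Bool, v = combo x y z a b c := by
  let f : Bool × Bool × Bool → B := fun t =>
    ⟨combo x y z t.1 t.2.1 t.2.2, combo_mem hxB hyB hzB _ _ _⟩
  have hf : Function.Injective f := by
    rintro ⟨a, b, c⟩ ⟨a', b', c'⟩ h
    have h1 : combo x y z a b c = combo x y z a' b' c' := congrArg Subtype.val h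
    have h2 := combo_eq_zero hx hy hxy hz hzx hzy hzxy
      ((combo_add x y z a b c a' b' c').symm.trans (add_eq_zero_iff_eq'.2 h1))
    simpa using h2
  have hcard : Nat.card (Bool × Bool × Bool) = Nat.card B := by rw [hB]; simp
  obtain ⟨⟨a, b, c⟩, h⟩ :=
    ((Nat.bijective_iff_injective_and_card f).2 ⟨hf, hcard⟩).2 ⟨v, hv⟩
  exact ⟨a, b, c, (congrArg Subtype.val h).symm⟩

theorem exists_third {B : Submodule (ZMod 2) F9} (hB : Nat.card B = 8) (x y : F9) :
    ∃ z ∈ B, z ≠ 0 ∧ z ≠ x ∧ z ≠ y ∧ z ≠ x + y := by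
  classical
  by_contra! h
  have hsub : (B : Set F9) ⊆ ((({0, x, y, x + y} : Finset F9)) : Set F9) := by
    intro z hz
    by_cases h0 : z = 0
    · simp [h0]
    by_cases h1 : z = x
    · simp [h1]
    by_cases h2 : z = y
    · simp [h2]
    simp [h z hz h0 h1 h2]
  have h1 : (B : Set F9).ncard = 8 := by rw [← hB]; rfl
  have h2 := Set.ncard_le_ncard hsub (Set.toFinite _)
  rw [Set.ncard_coe_finset, h1] at h2
  have h3 : ({0, x, y, x + y} : Finset F9).card ≤ 4 := Finset.card_le_four
  omega

/-- `r` is the ratio of two vectors of `B`. -/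
def HasRatio (B : Submodule (ZMod 2) F9) (r : F9) : Prop :=
  ∃ l : F9, l ≠ 0 ∧ l ∈ B ∧ l * r ∈ B

theorem hasRatio_div {B : Submodule (ZMod 2) F9} {x y : F9} (hx : x ≠ 0) (hxB : x ∈ B)
    (hyB : y ∈ B) : HasRatio B (y / x) :=
  ⟨x, hx, hxB, by rwa [mul_div_cancel₀ _ hx]⟩

theorem hasRatio_inv {B : Submodule (ZMod 2) F9} {r : F9} (hr : r ≠ 0) :
    HasRatio B r⁻¹ ↔ HasRatio B r := by
  constructor
  · rintro ⟨l, h0, h1, h2⟩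
    exact ⟨l * r⁻¹, mul_ne_zero h0 (inv_ne_zero hr), h2, by simpa [hr] using h1⟩
  · rintro ⟨l, h0, h1, h2⟩
    exact ⟨l * r, mul_ne_zero h0 hr, h2, by simpa [hr] using h1⟩

theorem hasRatio_one_add {B : Submodule (ZMod 2) F9} {r : F9} :
    HasRatio B (1 + r) ↔ HasRatio B r := by
  have key : ∀ r, HasRatio B r → HasRatio B (1 + r) := by
    rintro r ⟨l, h0, h1, h2⟩
    exact ⟨l, h0, h1, by rw [mul_add, mul_one]; exact B.add_mem h1 h2⟩
  refine ⟨fun h => ?_, key r⟩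
  have := key _ h
  rwa [← add_assoc, add_self, zero_add] at this

theorem hasRatio_sc {B : Submodule (ZMod 2) F9} {c r : F9} (hc : c ≠ 0) :
    HasRatio (sc c B) r ↔ HasRatio B r := by
  constructor
  · rintro ⟨l, h0, h1, h2⟩
    rw [mem_sc hc] at h1 h2
    exact ⟨c⁻¹ * l, mul_ne_zero (inv_ne_zero hc) h0, h1, by rwa [mul_assoc]⟩
  · rintro ⟨l, h0, h1, h2⟩
    exact ⟨c * l, mul_ne_zero hc h0, mul_mem_sc h1, by rw [mul_assoc]; exact mul_mem_sc h2⟩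

/-- Some line of `B` belongs to the class `c`. -/
def HasClass (α : F9) (B : Submodule (ZMod 2) F9) (c : ℕ) : Prop := HasRatio B (α ^ rep c)

theorem hasClass_cls {α : F9} (hα : α ^ 9 = α ^ 4 + 1) {B : Submodule (ZMod 2) F9} {i : ℕ}
    (hi : i < 511) (hK : i % 73 ≠ 0) : HasClass α B (cls i) ↔ HasRatio B (α ^ i) := by
  have hα0 := root_ne_zero hα
  obtain ⟨hr1, hr2, -⟩ := rep_spec _ (cls_spec i hi hK).1
  have hz : ∀ j, j < 511 → j % 73 ≠ 0 → α ^ zech j = 1 + α ^ j := fun j h1 h2 =>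
    (one_add_pow hα j h1 (Nat.pos_of_ne_zero (by rintro rfl; simp at h2))).symm
  have hd : ∀ j, j < 511 → α ^ dif 0 j = (α ^ j)⁻¹ := fun j h => by
    rw [pow_dif hα h, pow_zero, one_div]
  have hzl := (zech_spec _ hr1 (Nat.pos_of_ne_zero (by intro h; simp [h] at hr2))).1
  have hd2 : dif 0 (rep (cls i)) % 73 ≠ 0 := by
    have : dif 0 (rep (cls i)) = (0 + 511 - rep (cls i)) % 511 := rfl
    omega
  have hz2 : zech (dif 0 (rep (cls i))) < 511 :=
    (zech_spec _ (dif_lt _ _) (Nat.pos_of_ne_zero (by intro h; simp [h] at hd2))).1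
  unfold HasClass
  have hp : ∀ n, α ^ n ≠ 0 := fun n => pow_ne_zero _ hα0
  have inv : ∀ n, n < 511 → (HasRatio B (α ^ dif 0 n) ↔ HasRatio B (α ^ n)) := fun n hn => by
    rw [hd n hn, hasRatio_inv (hp n)]
  have add : ∀ n, n < 511 → n % 73 ≠ 0 → (HasRatio B (α ^ zech n) ↔ HasRatio B (α ^ n)) :=
    fun n hn h => by rw [hz n hn h, hasRatio_one_add]
  rcases cls_orbit i hi hK with h | h | h | h | h | h <;> conv_rhs => rw [h]
  · rw [inv _ hr1]
  · rw [add _ hr1 hr2]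
  · rw [inv _ hzl, add _ hr1 hr2]
  · rw [add _ (dif_lt _ _) hd2, inv _ hr1]
  · rw [inv _ hz2, add _ (dif_lt _ _) hd2, inv _ hr1]

theorem pow_ne_one_of_mod {α : F9} (hα : α ^ 9 = α ^ 4 + 1) {i : ℕ} (h : i % 73 ≠ 0) :
    (α ^ i) ^ 7 ≠ 1 := fun h7 => h ((pow_seven_iff hα).1 h7)

/-- Two blocks with a line in the same class are scalar multiples of each other. -/
theorem eq_sc_of_hasRatio {N : Set (Submodule (ZMod 2) F9)} (hN : Blocks N)
    {B B' : Submodule (ZMod 2) F9} (hB : B ∈ N) (hB' : B' ∈ N) {r : F9} (hr0 : r ≠ 0)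
    (hr1 : r ≠ 1) (h : HasRatio B r) (h' : HasRatio B' r) : ∃ c : F9, c ≠ 0 ∧ B' = sc c B := by
  obtain ⟨l, h0, h1, h2⟩ := h
  obtain ⟨l', h0', h1', h2'⟩ := h'
  have hc : l' / l ≠ 0 := div_ne_zero h0' h0
  refine ⟨l' / l, hc, hN.uniq _ hB' _ (hN.sc_mem B hB _ hc) l' (l' * r) h0'
    (mul_ne_zero h0' hr0) ?_ h1' h2' ?_ ?_⟩
  · intro h
    exact hr1 (mul_left_cancel₀ h0' (by rw [mul_one]; exact h.symm))
  · rw [mem_sc hc, show (l' / l)⁻¹ * l' = l by field_simp]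
    exact h1
  · rw [mem_sc hc, show (l' / l)⁻¹ * (l' * r) = l * r by field_simp]
    exact h2

theorem hasClass_of_shared {α : F9} (hα : α ^ 9 = α ^ 4 + 1) {N : Set (Submodule (ZMod 2) F9)}
    (hN : Blocks N) {B B' : Submodule (ZMod 2) F9} (hB : B ∈ N) (hB' : B' ∈ N) {c : ℕ}
    (hc : c < 84) (h : HasClass α B c) (h' : HasClass α B' c) {d : ℕ}
    (hd : HasClass α B' d) : HasClass α B d := by
  obtain ⟨k, hk, rfl⟩ := eq_sc_of_hasRatio hN hB hB' (pow_ne_zero _ (root_ne_zero hα))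
    (fun h1 => pow_ne_one_of_mod hα (rep_spec c hc).2.1 (by rw [h1, one_pow])) h h'
  exact (hasRatio_sc hk).1 hd

/-! ### Masks of blocks and soundness of the search -/

theorem testBit_bit (i c : ℕ) : (bit i).testBit c = true ↔ cls i = c := by
  have : bit i = 2 ^ cls i := Nat.one_shiftLeft _
  rw [this, Nat.testBit_two_pow]
  simp

theorem testBit_mask (i j c : ℕ) : (mask i j).testBit c = true ↔
    cls i = c ∨ cls j = c ∨ cls (lsum i j) = c ∨ cls (dif j i) = c ∨ cls (dif (zech j) i) = c ∨
      cls (dif (zech i) j) = c ∨ cls (dif (zech j) (zech i)) = c := by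
  have : mask i j = bit i ||| (bit j ||| (bit (lsum i j) ||| (bit (dif j i) |||
    (bit (dif (zech j) i) ||| (bit (dif (zech i) j) ||| bit (dif (zech j) (zech i))))))) := rfl
  rw [this]
  simp only [Nat.testBit_or, Bool.or_eq_true, testBit_bit]

theorem land_ne_zero {m n c : ℕ} (h : m.testBit c = true) (h' : n.testBit c = true) :
    m &&& n ≠ 0 := by
  intro h0
  have : (m &&& n).testBit c = true := by rw [Nat.testBit_and, h, h']; rfl
  rw [h0] at this
  simp at this

theorem exists_testBit_of_land_ne_zero {m n : ℕ} (h : m &&& n ≠ 0) :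
    ∃ c, m.testBit c = true ∧ n.testBit c = true := by
  obtain ⟨c, hc⟩ := Nat.exists_testBit_of_ne_zero h
  rw [Nat.testBit_and, Bool.and_eq_true] at hc
  exact ⟨c, hc⟩

/-- The class of the ratio `y / x`, if defined, belongs to the mask `m`. -/
def RatioIn (α : F9) (m : ℕ) (x y : F9) : Prop :=
  ∀ n < 511, n % 73 ≠ 0 → α ^ n = y / x → m.testBit (cls n) = true

theorem ratioIn_swap {α : F9} (hα : α ^ 9 = α ^ 4 + 1) {m : ℕ} {x y : F9}
    (h : RatioIn α m x y) : RatioIn α m y x := by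
  intro n hn hK hr
  rw [← (cls_spec n hn hK).2.1]
  refine h _ (dif_lt _ _) ?_ ?_
  · have : dif 0 n = (0 + 511 - n) % 511 := rfl
    omega
  · rw [pow_dif hα hn, hr, pow_zero, one_div_div]

theorem zech_mod_ne {α : F9} (hα : α ^ 9 = α ^ 4 + 1) {n : ℕ} (hn : n < 511)
    (hK : n % 73 ≠ 0) : zech n % 73 ≠ 0 := by
  have hp : 0 < n := Nat.pos_of_ne_zero (by rintro rfl; simp at hK)
  intro h
  have h1 := (pow_seven_iff hα).2 h
  rw [← one_add_pow hα n hn hp] at h1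
  have h8 : (1 + α ^ n) ^ 8 = 1 + α ^ n := by rw [pow_succ, h1, one_mul]
  have h8' : (1 + α ^ n) ^ 8 = 1 + (α ^ n) ^ 8 := by
    have := add_pow_char_pow (R := F9) (p := 2) (n := 3) (1 : F9) (α ^ n)
    simpa using this
  have h9 : (α ^ n) ^ 8 = α ^ n := add_left_cancel (h8'.symm.trans h8)
  have h0 : α ^ n ≠ 0 := pow_ne_zero _ (root_ne_zero hα)
  refine hK ((pow_seven_iff hα).1 (mul_right_cancel₀ h0 ?_))
  rw [one_mul, ← pow_succ, h9]

theorem ratioIn_add {α : F9} (hα : α ^ 9 = α ^ 4 + 1) {m : ℕ} {x y : F9} (hx : x ≠ 0)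
    (h : RatioIn α m x y) : RatioIn α m x (x + y) := by
  intro n hn hK hr
  have hp : 0 < n := Nat.pos_of_ne_zero (by rintro rfl; simp at hK)
  rw [← (cls_spec n hn hK).2.2]
  refine h _ (zech_spec n hn hp).1 (zech_mod_ne hα hn hK) ?_
  rw [← one_add_pow hα n hn hp, hr, add_div, div_self hx, ← add_assoc, add_self, zero_add]

/-- If one ordered pair of points of the line `{x, y, z}` has its class in `m`, all six have. -/
theorem ratioIn_line {α : F9} (hα : α ^ 9 = α ^ 4 + 1) {m : ℕ} {x y z : F9} (hx : x ≠ 0)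
    (hy : y ≠ 0) (hz : x + y = z) (h : RatioIn α m x y) :
    RatioIn α m x y ∧ RatioIn α m y x ∧ RatioIn α m x z ∧ RatioIn α m z x ∧
      RatioIn α m y z ∧ RatioIn α m z y := by
  subst hz
  have h1 := ratioIn_swap hα h
  have h2 := ratioIn_add hα hx h
  have h3 := ratioIn_add hα hy h1
  rw [add_comm y x] at h3
  exact ⟨h, h1, h2, ratioIn_swap hα h2, h3, ratioIn_swap hα h3⟩

theorem pow_lsum {α : F9} (hα : α ^ 9 = α ^ 4 + 1) {i j : ℕ} (hi : i < 511) (hj : j < 511)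
    (hij : i ≠ j) : α ^ lsum i j = α ^ i + α ^ j := by
  have hd : 0 < dif j i := by
    have : dif j i = (j + 511 - i) % 511 := rfl
    omega
  have h0 : α ^ i ≠ 0 := pow_ne_zero _ (root_ne_zero hα)
  rw [lsum, pow_adm hα, ← one_add_pow hα _ (dif_lt _ _) hd, pow_dif hα hi, mul_add, mul_one,
    mul_div_cancel₀ _ h0]

/-- The bits of `mask i j` are exactly the classes of the lines of the block
`B = ⟨1, α ^ i, α ^ j⟩`. -/
theorem mask_spec {α : F9} (hα : α ^ 9 = α ^ 4 + 1) {N : Set (Submodule (ZMod 2) F9)}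
    (hN : Blocks N) {B : Submodule (ZMod 2) F9} (hB : B ∈ N) {i j : ℕ} (hi : i < 511)
    (hj : j < 511) (h1B : (1 : F9) ∈ B) (hiB : α ^ i ∈ B) (hjB : α ^ j ∈ B) (hi0 : i ≠ 0)
    (hj0 : j ≠ 0) (hij : i ≠ j) (hsum : α ^ j ≠ 1 + α ^ i) :
    (∀ c < 84, HasClass α B c → (mask i j).testBit c = true) ∧
      ∀ c, (mask i j).testBit c = true → c < 84 ∧ HasClass α B c := by
  have hα0 := root_ne_zero hα
  have hr0 : α ^ i ≠ 0 := pow_ne_zero _ hα0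
  have hs0 : α ^ j ≠ 0 := pow_ne_zero _ hα0
  have hr1 : α ^ i ≠ 1 := fun h => hi0 (pow_inj_511 hα hi (by norm_num) (by rw [h, pow_zero]))
  have hs1 : α ^ j ≠ 1 := fun h => hj0 (pow_inj_511 hα hj (by norm_num) (by rw [h, pow_zero]))
  have hrs : α ^ j ≠ α ^ i := fun h => hij (pow_inj_511 hα hi hj h.symm)
  have hzi := one_add_pow hα i hi (Nat.pos_of_ne_zero hi0)
  have hzj := one_add_pow hα j hj (Nat.pos_of_ne_zero hj0)
  have hzil := (zech_spec i hi (Nat.pos_of_ne_zero hi0)).1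
  have hls := pow_lsum hα hi hj hij
  have hnz : ∀ a b c : Bool, (a || b || c) = true → combo 1 (α ^ i) (α ^ j) a b c ≠ 0 := by
    intro a b c h h0
    obtain ⟨rfl, rfl, rfl⟩ := combo_eq_zero one_ne_zero hr0 hr1 hs0 hs1 hrs hsum h0
    simp at h
  have hmem := combo_mem h1B hiB hjB
  -- The logarithm of a ratio of two distinct vectors of `B` is not a multiple of 73.
  have good : ∀ n < 511, ∀ x ∈ B, ∀ y ∈ B, x ≠ 0 → y ≠ 0 → x ≠ y → α ^ n = y / x →
      cls n < 84 ∧ HasClass α B (cls n) := by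
    intro n hn x hx y hy hx0 hy0 hxy h
    have hK : n % 73 ≠ 0 := fun hK => hxy (hN.scat B hB x hx y hy hx0 hy0 (by
      rw [← h]; exact (pow_seven_iff hα).2 hK))
    refine ⟨(cls_spec n hn hK).1, (hasClass_cls hα hn hK).2 ?_⟩
    rw [h]
    exact hasRatio_div hx0 hx hy
  have h1i : (1 : F9) + α ^ i ∈ B := B.add_mem h1B hiB
  have h1j : (1 : F9) + α ^ j ∈ B := B.add_mem h1B hjB
  have h1i0 : (1 : F9) + α ^ i ≠ 0 := fun h => hr1 (add_eq_zero_iff_eq'.1 h).symm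
  have h1j0 : (1 : F9) + α ^ j ≠ 0 := fun h => hs1 (add_eq_zero_iff_eq'.1 h).symm
  have hsum2 : (1 : F9) + α ^ j ≠ α ^ i := by
    intro h
    refine hsum ?_
    rw [← h, ← add_assoc, add_self, zero_add]
  have hll : lsum i j < 511 := adm_lt _ _
  constructor
  -- All ordered pairs of nonzero vectors reduce to the seven pairs used in `mask`.
  · have P : ∀ {x y : F9} (n : ℕ), n < 511 → α ^ n = y / x →
        (mask i j).testBit (cls n) = true → RatioIn α (mask i j) x y := by
      intro x y n hn h hb n' hn' _ h'
      rwa [pow_inj_511 hα hn' hn (h'.trans h.symm)]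
    have T := testBit_mask i j
    have e100 : combo 1 (α ^ i) (α ^ j) true false false = 1 := by simp [combo]
    have e010 : combo 1 (α ^ i) (α ^ j) false true false = α ^ i := by simp [combo]
    have e001 : combo 1 (α ^ i) (α ^ j) false false true = α ^ j := by simp [combo]
    have e110 : combo 1 (α ^ i) (α ^ j) true true false = 1 + α ^ i := by simp [combo]
    have e101 : combo 1 (α ^ i) (α ^ j) true false true = 1 + α ^ j := by simp [combo]
    have e011 : combo 1 (α ^ i) (α ^ j) false true true = α ^ i + α ^ j := by simp [combo]
    obtain ⟨p1, p2, p3, p4, p5, p6⟩ := ratioIn_line hα (hnz true false false rfl)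
      (hnz false true false rfl) (combo_add ..) (P i hi (by rw [e100, e010, div_one])
        ((T _).2 (by simp)))
    obtain ⟨p7, p8, p9, p10, p11, p12⟩ := ratioIn_line hα (hnz true false false rfl)
      (hnz false false true rfl) (combo_add ..) (P j hj (by rw [e100, e001, div_one])
        ((T _).2 (by simp)))
    obtain ⟨q1, q2, q3, q4, q5, q6⟩ := ratioIn_line hα (hnz true false false rfl)
      (hnz false true true rfl) (combo_add ..) (P (lsum i j) hll
        (by rw [e100, e011, div_one, hls]) ((T _).2 (by simp)))
    obtain ⟨q7, q8, q9, q10, q11, q12⟩ := ratioIn_line hα (hnz false true false rfl)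
      (hnz false false true rfl) (combo_add ..) (P (dif j i) (dif_lt _ _)
        (by rw [e010, e001, pow_dif hα hi]) ((T _).2 (by simp)))
    obtain ⟨r1, r2, r3, r4, r5, r6⟩ := ratioIn_line hα (hnz false true false rfl)
      (hnz true false true rfl) (combo_add ..) (P (dif (zech j) i) (dif_lt _ _)
        (by rw [e010, e101, pow_dif hα hi, hzj]) ((T _).2 (by simp)))
    obtain ⟨r7, r8, r9, r10, r11, r12⟩ := ratioIn_line hα (hnz false false true rfl)
      (hnz true true false rfl) (combo_add ..) (P (dif (zech i) j) (dif_lt _ _)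
        (by rw [e001, e110, pow_dif hα hj, hzi]) ((T _).2 (by simp)))
    obtain ⟨s1, s2, s3, s4, s5, s6⟩ := ratioIn_line hα (hnz true true false rfl)
      (hnz true false true rfl) (combo_add ..) (P (dif (zech j) (zech i)) (dif_lt _ _)
        (by rw [e110, e101, pow_dif hα hzil, hzi, hzj]) ((T _).2 (by simp)))
    intro c hc ⟨l, hl0, hl, hlr⟩
    obtain ⟨hc1, hc2, hc3⟩ := rep_spec c hc
    have hne : l ≠ l * α ^ rep c := by
      intro h
      refine pow_ne_one_of_mod hα hc2 ?_
      rw [← mul_left_cancel₀ hl0 ((mul_one l).trans h), one_pow]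
    have hlr0 : l * α ^ rep c ≠ 0 := mul_ne_zero hl0 (pow_ne_zero _ hα0)
    have hrat : α ^ rep c = (l * α ^ rep c) / l := by rw [mul_div_cancel_left₀ _ hl0]
    suffices h : RatioIn α (mask i j) l (l * α ^ rep c) by
      have := h _ hc1 hc2 hrat
      rwa [hc3] at this
    clear hrat
    obtain ⟨a, b, c', h⟩ := exists_combo (hN.card B hB) h1B hiB hjB one_ne_zero hr0 hr1 hs0 hs1
      hrs hsum hl
    obtain ⟨a', b', c'', h'⟩ := exists_combo (hN.card B hB) h1B hiB hjB one_ne_zero hr0 hr1 hs0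
      hs1 hrs hsum hlr
    rw [h'] at hne hlr0 ⊢
    rw [h] at hne hl0 ⊢
    clear h h' hl hlr
    have hz : combo 1 (α ^ i) (α ^ j) false false false = 0 := by simp [combo]
    clear e100 e010 e001 e110 e101 e011 hnz hmem
    generalize combo 1 (α ^ i) (α ^ j) = V at *
    simp only [Bool.xor_false, Bool.false_xor] at p3 p4 p5 p6 p9 p10 p11 p12
    simp only [Bool.xor_false, Bool.false_xor] at q3 q4 q5 q6 q9 q10 q11 q12
    simp only [Bool.xor_false, Bool.false_xor] at r3 r4 r5 r6 r9 r10 r11 r12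
    simp only [Bool.xor_false, Bool.false_xor, Bool.xor_self] at s3 s4 s5 s6
    cases a <;> cases b <;> cases c' <;> first | with_reducible exact absurd hz hl0 | skip
    all_goals
      cases a' <;> cases b' <;> cases c'' <;>
        first
          | with_reducible exact absurd hz hlr0
          | with_reducible exact absurd rfl hne
          | with_reducible assumption
  · intro c hc
    rcases (testBit_mask i j c).1 hc with rfl | rfl | rfl | rfl | rfl | rfl | rfl
    · exact good i hi 1 h1B _ hiB one_ne_zero hr0 hr1.symm (by rw [div_one])
    · exact good j hj 1 h1B _ hjB one_ne_zero hs0 hs1.symm (by rw [div_one])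
    · refine good _ hll 1 h1B (α ^ i + α ^ j) (B.add_mem hiB hjB) one_ne_zero
        (fun h => hrs (add_eq_zero_iff_eq'.1 h).symm) ?_ (by rw [div_one, hls])
      intro h
      refine hsum ?_
      rw [h, add_assoc, add_comm (α ^ j), ← add_assoc, add_self, zero_add]
    · exact good _ (dif_lt _ _) _ hiB _ hjB hr0 hs0 hrs.symm (pow_dif hα hi)
    · exact good _ (dif_lt _ _) _ hiB _ h1j hr0 h1j0 hsum2.symm (by rw [pow_dif hα hi, hzj])
    · exact good _ (dif_lt _ _) _ hjB _ h1i hs0 h1i0 hsum (by rw [pow_dif hα hj, hzi])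
    · exact good _ (dif_lt _ _) _ h1i _ h1j h1i0 h1j0 (fun h => hrs (add_left_cancel h).symm)
        (by rw [pow_dif hα hzil, hzi, hzj])

/-- The set `u` of classes is a union of class sets of blocks: a block with one class in `u` has
all its classes in `u`. -/
def Closed (α : F9) (N : Set (Submodule (ZMod 2) F9)) (u : ℕ) : Prop :=
  ∀ B ∈ N, ∀ c < 84, u.testBit c = true → HasClass α B c →
    ∀ d < 84, HasClass α B d → u.testBit d = true

theorem closed_mask {α : F9} (hα : α ^ 9 = α ^ 4 + 1) {N : Set (Submodule (ZMod 2) F9)}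
    (hN : Blocks N) {B : Submodule (ZMod 2) F9} (hB : B ∈ N) {m : ℕ}
    (h1 : ∀ c < 84, HasClass α B c → m.testBit c = true)
    (h2 : ∀ c, m.testBit c = true → c < 84 ∧ HasClass α B c) : Closed α N m := by
  intro B' hB' c hc hm hBc d hd hBd
  exact h1 d hd (hasClass_of_shared hα hN hB hB' hc (h2 c hm).2 hBc hBd)

theorem closed_or {α : F9} {N : Set (Submodule (ZMod 2) F9)} {u m : ℕ} (hu : Closed α N u)
    (hm : Closed α N m) : Closed α N (u ||| m) := by
  intro B hB c hc hcb hBc d hd hBd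
  rw [Nat.testBit_or, Bool.or_eq_true] at hcb ⊢
  rcases hcb with h | h
  · exact Or.inl (hu B hB c hc h hBc d hd hBd)
  · exact Or.inr (hm B hB c hc h hBc d hd hBd)

/-- A block through `1` and `α ^ i` has a third generator `α ^ j` with least `j`. -/
theorem exists_min_third {α : F9} (hα : α ^ 9 = α ^ 4 + 1) {B : Submodule (ZMod 2) F9}
    (hB : Nat.card B = 8) {i : ℕ} (hi : i < 511) (h1B : (1 : F9) ∈ B) (hiB : α ^ i ∈ B) :
    ∃ j < 511, α ^ j ∈ B ∧ j ≠ 0 ∧ i ≠ j ∧ α ^ j ≠ 1 + α ^ i ∧ j ≤ zech j ∧ j ≤ lsum i j ∧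
      j ≤ zech (lsum i j) := by
  classical
  have hex : ∃ j, j < 511 ∧ α ^ j ∈ B ∧ α ^ j ≠ 1 ∧ α ^ j ≠ α ^ i ∧ α ^ j ≠ 1 + α ^ i := by
    obtain ⟨z, hz, h0, h1, h2, h3⟩ := exists_third hB 1 (α ^ i)
    obtain ⟨j, hj, rfl⟩ := exists_log hα z h0
    exact ⟨j, hj, hz, h1, h2, h3⟩
  obtain ⟨hj, hjB, h1, h2, h3⟩ := Nat.find_spec hex
  have hmin : ∀ n, n < 511 → α ^ n ∈ B → α ^ n ≠ 1 → α ^ n ≠ α ^ i → α ^ n ≠ 1 + α ^ i →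
      Nat.find hex ≤ n := fun n a b c d e => Nat.find_min' hex ⟨a, b, c, d, e⟩
  generalize Nat.find hex = j at *
  have hj0 : j ≠ 0 := by rintro rfl; simp at h1
  have hij : i ≠ j := by rintro rfl; exact h2 rfl
  have hp := Nat.pos_of_ne_zero hj0
  have hls := pow_lsum hα hi hj hij
  have hll : lsum i j < 511 := adm_lt _ _
  have hjne : α ^ j ≠ 0 := pow_ne_zero _ (root_ne_zero hα)
  have hl0 : 0 < lsum i j := by
    refine Nat.pos_of_ne_zero fun h => h3 ?_
    rw [h, pow_zero] at hls
    rw [hls, add_assoc, add_comm (α ^ j), ← add_assoc, add_self, zero_add]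
  have cancel : ∀ a b c : F9, a + b = c → b = a + c := by
    rintro a b c rfl
    rw [← add_assoc, add_self, zero_add]
  refine ⟨j, hj, hjB, hj0, hij, h3, ?_, ?_, ?_⟩
  · refine hmin _ (zech_spec j hj hp).1 ?_ ?_ ?_ ?_ <;> rw [← one_add_pow hα j hj hp]
    · exact B.add_mem h1B hjB
    · intro h
      exact hjne (by rw [cancel _ _ _ h, add_self])
    · intro h
      exact h3 (cancel _ _ _ h)
    · intro h
      exact h2 (add_left_cancel h)
  · refine hmin _ hll ?_ ?_ ?_ ?_ <;> rw [hls]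
    · exact B.add_mem hiB hjB
    · intro h
      exact h3 ((cancel _ _ _ h).trans (add_comm _ _))
    · intro h
      exact hjne (by rw [cancel _ _ _ h, add_self])
    · intro h
      refine h1 ?_
      rw [cancel _ _ _ h, add_comm (1 : F9), ← add_assoc, add_self, zero_add]
  · refine hmin _ (zech_spec _ hll hl0).1 ?_ ?_ ?_ ?_ <;> rw [← one_add_pow hα _ hll hl0, hls]
    · exact B.add_mem h1B (B.add_mem hiB hjB)
    · intro h
      refine h2 ?_
      have := cancel _ _ _ h
      rw [add_self] at this
      exact (add_eq_zero_iff_eq'.1 this).symm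
    · intro h
      refine h1 ?_
      have := cancel _ _ _ h
      rw [add_comm (1 : F9)] at this
      exact add_left_cancel this
    · intro h
      refine hjne ?_
      have := add_left_cancel h
      rw [cancel _ _ _ this, add_self]

/-- A successful search refutes the existence of blocks: starting from a closed set `u` containing
the classes of `w`, the block through the class at the first uncovered level must be one of the
listed rows. -/
theorem solve_sound {α : F9} (hα : α ^ 9 = α ^ 4 + 1) {N : Set (Submodule (ZMod 2) F9)}
    (hN : Blocks N) (l : Lvl) : ∀ (w u : ℕ), chk l w = true → Closed α N u →
      (∀ c < 84, w.testBit c = true → u.testBit c = true) → solve l u = false := by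
  induction l with
  | nil => intro w u _ _ _; exact solve_nil u
  | cons e b rows l ih =>
    intro w u hchk hu hw
    obtain ⟨he, rfl, hrows, hrest⟩ := chk_cons hchk
    by_cases hue : u.testBit e = true
    · rw [solve_cons_of_ne _ _ _ _ _ (land_ne_zero hue (Nat.testBit_two_pow_self))]
      refine ih _ u hrest hu fun c hc h => ?_
      rw [Nat.testBit_or, Bool.or_eq_true, Nat.testBit_two_pow] at h
      rcases h with h | h
      · exact hw c hc h
      · rw [← of_decide_eq_true h]; exact hue
    · have h0 : u &&& 2 ^ e = 0 := by
        by_contra h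
        obtain ⟨c, h1, h2⟩ := exists_testBit_of_land_ne_zero h
        rw [Nat.testBit_two_pow] at h2
        rw [← of_decide_eq_true h2] at h1
        exact hue h1
      rw [solve_cons_of_eq _ _ _ _ _ h0, Bool.eq_false_iff]
      intro hscan
      obtain ⟨hr1, hr2, hr3⟩ := rep_spec e he
      have hre0 : rep e ≠ 0 := by intro h; simp [h] at hr2
      obtain ⟨B, hB, h1B, hrB⟩ := hN.ex 1 (α ^ rep e) one_ne_zero
        (pow_ne_zero _ (root_ne_zero hα)) (by rw [div_one]; exact pow_ne_one_of_mod hα hr2)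
      obtain ⟨j, hj, hjB, hj0, hij, hsum, m1, m2, m3⟩ :=
        exists_min_third hα (hN.card B hB) hr1 h1B hrB
      obtain ⟨M1, M2⟩ := mask_spec hα hN hB hr1 hj h1B hrB hjB hre0 hj0 hij hsum
      have hBe : HasClass α B e := ⟨1, one_ne_zero, h1B, by rwa [one_mul]⟩
      -- A class of `B` in `u` would put `e` into `u`.
      have hdis : ∀ c, (mask (rep e) j).testBit c = true → u.testBit c = true → False := by
        intro c hc hcu
        obtain ⟨hc1, hc2⟩ := M2 c hc
        exact hue (hu B hB c hc1 hcu hc2 e he hBe)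
      have hmem : mask (rep e) j ∈ rows := by
        refine rowOk_spec (hrows j hj) m1 m2 m3 ?_
        by_contra h
        obtain ⟨c, h1, h2⟩ := exists_testBit_of_land_ne_zero h
        exact hdis c h1 (hw c (M2 c h1).1 h2)
      have h0' : u &&& mask (rep e) j = 0 := by
        by_contra h
        obtain ⟨c, h1, h2⟩ := exists_testBit_of_land_ne_zero h
        exact hdis c h2 h1
      have hk := scan_mem hscan hmem h0'
      rw [ih (w ||| 2 ^ e) _ hrest (closed_or hu (closed_mask hα hN hB M1 M2)) ?_] at hk
      · exact Bool.noConfusion hk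
      · intro c hc h
        rw [Nat.testBit_or, Bool.or_eq_true] at h ⊢
        rcases h with h | h
        · exact Or.inl (hw c hc h)
        · rw [Nat.testBit_two_pow] at h
          rw [← of_decide_eq_true h]
          exact Or.inr (M1 e he hBe)

/-! ### The exceptional pairs of blocks do not occur -/

/-- There are blocks `{z + t z ^ 2 : z ∈ K}` and `{z + t z ^ 4 : z ∈ K}` in `N`. -/
def ExcPair (N : Set (Submodule (ZMod 2) F9)) (t : F9) : Prop :=
  ∃ B ∈ N, ∃ C ∈ N, ∀ z : F9, z ^ 8 = z → z + t * z ^ 2 ∈ B ∧ z + t * z ^ 4 ∈ C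

/-- `α ^ a`, `α ^ b`, `α ^ c` are linearly independent over `𝔽_2`. -/
def IndepLogs (a b c : ℕ) : Prop :=
  dif b a ≠ 0 ∧ dif c a ≠ 0 ∧ dif b a ≠ dif c a ∧ dif c a ≠ zech (dif b a)

theorem closed_mask_of_mem {α : F9} (hα : α ^ 9 = α ^ 4 + 1) {N : Set (Submodule (ZMod 2) F9)}
    (hN : Blocks N) {B : Submodule (ZMod 2) F9} (hB : B ∈ N) {a b c : ℕ} (ha : a < 511)
    (haB : α ^ a ∈ B) (hbB : α ^ b ∈ B) (hcB : α ^ c ∈ B)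
    (h : IndepLogs a b c) :
    Closed α N (mask (dif b a) (dif c a)) := by
  obtain ⟨h1, h2, h3, h4⟩ := h
  have h0 : α ^ a ≠ 0 := pow_ne_zero _ (root_ne_zero hα)
  have hc0 : (α ^ a)⁻¹ ≠ 0 := inv_ne_zero h0
  have hmem : ∀ x ∈ B, x / α ^ a ∈ sc (α ^ a)⁻¹ B := fun x hx => by
    rw [div_eq_inv_mul]; exact mul_mem_sc hx
  have hpos := Nat.pos_of_ne_zero h1
  obtain ⟨M1, M2⟩ := mask_spec hα hN (hN.sc_mem B hB _ hc0) (dif_lt b a) (dif_lt c a)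
    (by have := hmem _ haB; rwa [div_self h0] at this)
    (by rw [pow_dif hα ha]; exact hmem _ hbB) (by rw [pow_dif hα ha]; exact hmem _ hcB)
    h1 h2 h3 (by
      rw [one_add_pow hα _ (dif_lt _ _) hpos]
      exact fun h => h4 (pow_inj_511 hα (dif_lt _ _) (zech_spec _ (dif_lt _ _) hpos).1 h))
  exact closed_mask hα hN (hN.sc_mem B hB _ hc0) M1 M2

/-- The side conditions making the logarithms used in `start i` generate two genuine blocks. -/
def StartOk (i : ℕ) : Prop :=
  (0 < i ∧ i < 511 ∧ 0 < adm i 73 ∧ 0 < adm i 146 ∧ 0 < adm i 219 ∧ 0 < adm i 438) ∧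
  IndepLogs (zech i) (adm 73 (zech (adm i 73))) (adm 146 (zech (adm i 146))) ∧
  IndepLogs (zech i) (adm 73 (zech (adm i 219))) (adm 146 (zech (adm i 438)))

theorem not_excPair_of_plan {α : F9} (hα : α ^ 9 = α ^ 4 + 1)
    {N : Set (Submodule (ZMod 2) F9)} (hN : Blocks N) {i u : ℕ} (hi : StartOk i) {l : Lvl}
    (hu : start i = u) (hchk : chk l (Nat.lor u (2 ^ 127)) = true) (hsol : solve l u = true) :
    ¬ ExcPair N (α ^ i) := by
  rintro ⟨B, hB, B', hB', h⟩
  obtain ⟨⟨h0, h1, a1, a2, a3, a4⟩, i1, i2⟩ := hi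
  have hz := (zech_spec i h1 h0).1
  have hw : α ^ 511 = 1 := pow_511 hα
  have K : ∀ m, (α ^ (73 * m)) ^ 8 = α ^ (73 * m) := fun m => by
    rw [← pow_mul, show 73 * m * 8 = 511 * m + 73 * m by ring, pow_add, pow_mul, hw, one_pow,
      one_mul]
  have E : ∀ a k, 0 < adm i k → α ^ adm a (zech (adm i k)) = α ^ a + α ^ (a + i + k) :=
    fun a k hk => by
      rw [pow_adm hα, ← one_add_pow hα _ (adm_lt _ _) hk, pow_adm hα, pow_add, pow_add]; ring
  have z1 : α ^ zech i = 1 + α ^ i := (one_add_pow hα i h1 h0).symm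
  have k1 := h 1 (one_pow 8)
  have k2 := h (α ^ 73) (K 1)
  have k3 := h (α ^ 146) (K 2)
  rw [one_pow, one_pow, mul_one, ← z1] at k1
  have m1 : α ^ adm 73 (zech (adm i 73)) ∈ B := by
    rw [E _ _ a1, show α ^ (73 + i + 73) = α ^ i * (α ^ 73) ^ 2 by ring]
    exact k2.1
  have m2 : α ^ adm 146 (zech (adm i 146)) ∈ B := by
    rw [E _ _ a2, show α ^ (146 + i + 146) = α ^ i * (α ^ 146) ^ 2 by ring]
    exact k3.1
  have m3 : α ^ adm 73 (zech (adm i 219)) ∈ B' := by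
    rw [E _ _ a3, show α ^ (73 + i + 219) = α ^ i * (α ^ 73) ^ 4 by ring]
    exact k2.2
  have m4 : α ^ adm 146 (zech (adm i 438)) ∈ B' := by
    rw [E _ _ a4, show α ^ (146 + i + 438) = α ^ i * (α ^ 146) ^ 4 by ring]
    exact k3.2
  have c1 := closed_mask_of_mem hα hN hB hz k1.1 m1 m2 i1
  have c2 := closed_mask_of_mem hα hN hB' hz k1.2 m3 m4 i2
  have c3 : Closed α N u := by rw [← hu]; exact closed_or c1 c2
  have := solve_sound hα hN l _ u hchk c3 (by
    intro c hc hb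
    have hb' : (u ||| 2 ^ 127).testBit c = true := hb
    rw [Nat.testBit_or, Bool.or_eq_true, Nat.testBit_two_pow] at hb'
    rcases hb' with h | h
    · exact h
    · have := of_decide_eq_true h
      omega)
  rw [hsol] at this
  exact Bool.noConfusion this

instance (a b c : ℕ) : Decidable (IndepLogs a b c) := by unfold IndepLogs; infer_instance

instance (i : ℕ) : Decidable (StartOk i) := by unfold StartOk; infer_instance

theorem startOk_cases : StartOk 1 ∧ StartOk 3 ∧ StartOk 5 ∧ StartOk 11 := by
  exact ⟨by decide +kernel, by decide +kernel, by decide +kernel, by decide +kernel⟩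

theorem not_excPair_of_mem {α : F9} (hα : α ^ 9 = α ^ 4 + 1)
    {N : Set (Submodule (ZMod 2) F9)} (hN : Blocks N) {i : ℕ} (hi : i ∈ [1, 3, 5, 11]) :
    ¬ ExcPair N (α ^ i) := by
  obtain ⟨o1, o3, o5, o11⟩ := startOk_cases
  simp only [List.mem_cons, List.not_mem_nil, or_false] at hi
  rcases hi with rfl | rfl | rfl | rfl
  · exact not_excPair_of_plan hα hN o1 start_eq_1 chk_plan1 solve_plan1
  · exact not_excPair_of_plan hα hN o3 start_eq_3 chk_plan3 solve_plan3
  · exact not_excPair_of_plan hα hN o5 start_eq_5 chk_plan5 solve_plan5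
  · exact not_excPair_of_plan hα hN o11 start_eq_11 chk_plan11 solve_plan11

/-- Multiplying by `t⁻¹` and substituting `z ^ 4`, `z ^ 2` for `z` interchanges the two blocks. -/
theorem excPair_inv {N : Set (Submodule (ZMod 2) F9)} (hN : Blocks N) {t : F9} (ht : t ≠ 0)
    (h : ExcPair N t) : ExcPair N t⁻¹ := by
  obtain ⟨B, hB, B', hB', h⟩ := h
  have ht' := inv_ne_zero ht
  refine ⟨_, hN.sc_mem B' hB' _ ht', _, hN.sc_mem B hB _ ht', fun y hy => ⟨?_, ?_⟩⟩
  · have h8 : (y ^ 2) ^ 4 = y := by rw [← pow_mul]; exact hy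
    have := mul_mem_sc (c := t⁻¹) (h (y ^ 2) (by rw [← pow_mul, mul_comm, pow_mul, hy])).2
    rwa [h8, mul_add, inv_mul_cancel_left₀ ht, add_comm] at this
  · have h8 : (y ^ 4) ^ 2 = y := by rw [← pow_mul]; exact hy
    have := mul_mem_sc (c := t⁻¹) (h (y ^ 4) (by rw [← pow_mul, mul_comm, pow_mul, hy])).1
    rwa [h8, mul_add, inv_mul_cancel_left₀ ht, add_comm] at this

/-- Substituting a `K`-multiple of `z` for `z` rescales `t` by an element of `K`. -/
theorem excPair_mul {N : Set (Submodule (ZMod 2) F9)} (hN : Blocks N) {t c : F9}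
    (hc : c ^ 7 = 1) (h : ExcPair N t) : ExcPair N (c * t) := by
  obtain ⟨B, hB, B', hB', h⟩ := h
  have hc0 : c ≠ 0 := by rintro rfl; simp at hc
  have hc8 : c ^ 8 = c := by rw [pow_succ, hc, one_mul]
  refine ⟨_, hN.sc_mem B hB _ (inv_ne_zero hc0), _, hN.sc_mem B' hB' _ (pow_ne_zero 2 hc0),
    fun y hy => ⟨?_, ?_⟩⟩
  · have := mul_mem_sc (c := c⁻¹) (h (c * y) (by rw [mul_pow, hc8, hy])).1
    rwa [show c⁻¹ * (c * y + t * (c * y) ^ 2) = y + c * t * y ^ 2 by field_simp] at this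
  · have := mul_mem_sc (c := c ^ 2) (h (c ^ 5 * y) (by
      rw [mul_pow, ← pow_mul, mul_comm 5, pow_mul, hc8, hy])).2
    rwa [show c ^ 2 * (c ^ 5 * y + t * (c ^ 5 * y) ^ 4) = y + c * t * y ^ 4 by
      linear_combination (y + t * y ^ 4 * c * (1 + c ^ 7 + c ^ 14)) * hc] at this

theorem exists_small_log : ∀ n < 511, n % 73 ≠ 0 → ∃ k < 9, ∃ i ∈ [1, 3, 5, 11],
    n % 73 = (i * 2 ^ k) % 73 ∨ (n + i * 2 ^ k) % 73 = 0 := by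
  decide +kernel

theorem root_frobenius {α : F9} (hα : α ^ 9 = α ^ 4 + 1) (k : ℕ) :
    (α ^ 2 ^ k) ^ 9 = (α ^ 2 ^ k) ^ 4 + 1 := by
  induction k with
  | zero => simpa using hα
  | succ k ih =>
    rw [pow_succ 2, pow_mul, ← pow_mul, mul_comm 2, pow_mul, ih, CharTwo.add_sq]
    ring

/-- Up to scaling by `K`, inversion and the Frobenius map, `t` is one of `α ^ 1`, `α ^ 3`, `α ^ 5`,
`α ^ 11` for a root `α` of `X ^ 9 + X ^ 4 + 1`, and these four cases are settled by the search. -/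
theorem not_excPair {N : Set (Submodule (ZMod 2) F9)} (hN : Blocks N) {t : F9} (ht : t ≠ 0)
    (htK : t ^ 7 ≠ 1) : ¬ ExcPair N t := by
  intro h
  obtain ⟨α, hα⟩ := exists_root
  have hα0 := root_ne_zero hα
  obtain ⟨n, hn, rfl⟩ := exists_log hα t ht
  obtain ⟨k, -, i, hi, h1⟩ := exists_small_log n hn fun h => htK ((pow_seven_iff hα).2 h)
  have hroot := root_frobenius hα k
  refine not_excPair_of_mem hroot hN hi ?_
  rw [← pow_mul]
  have hne : ∀ m, α ^ m ≠ 0 := fun m => pow_ne_zero _ hα0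
  rcases h1 with h1 | h1
  · have hc : (α ^ (2 ^ k * i) / α ^ n) ^ 7 = 1 := by
      rw [div_pow, div_eq_one_iff_eq (pow_ne_zero _ (hne n)), ← pow_mul, ← pow_mul,
        ← pow_mod_511 hα, ← pow_mod_511 hα (n * 7)]
      congr 1
      rw [mul_comm (2 ^ k)]
      omega
    have := excPair_mul hN hc h
    rwa [div_mul_cancel₀ _ (hne n)] at this
  · have hc : (α ^ (2 ^ k * i) * α ^ n) ^ 7 = 1 := by
      rw [← pow_add, pow_seven_iff hα, mul_comm (2 ^ k), add_comm]
      exact h1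
    have := excPair_mul hN hc (excPair_inv hN (hne n) h)
    rwa [mul_inv_cancel_right₀ (hne n)] at this

/-! ### The subfield `K` and a finite check in it -/

/-- Packed multiplication table of `𝔽_8`, whose elements are given by their bit vectors with
respect to `1, ω, ω ^ 2`, where `ω ^ 3 = ω + 1`. -/
def mulTable : ℕ := 2821848294356612419217921029917578219971947684264937521152

/-- Multiplication of bit vectors in `𝔽_8`. -/
def mul8 (a b : ℕ) : ℕ :=
  Nat.mod (Nat.shiftRight mulTable (Nat.mul (nat_lit 3) (Nat.add (Nat.mul (nat_lit 8) a) b)))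
    (nat_lit 8)

/-- The element of `K` with bit vector `n < 8`. -/
noncomputable def val8 (ω : F9) (n : ℕ) : F9 :=
  (if n.testBit 0 then 1 else 0) + (if n.testBit 1 then ω else 0) +
    (if n.testBit 2 then ω ^ 2 else 0)

theorem mul8_lt (a b : ℕ) : mul8 a b < 8 := Nat.mod_lt _ (by norm_num)

theorem val8_xor (ω : F9) (m n : ℕ) : val8 ω (m ^^^ n) = val8 ω m + val8 ω n := by
  have h : ∀ (k : ℕ) (x : F9), (if (m ^^^ n).testBit k then x else 0) =
      (if m.testBit k then x else 0) + (if n.testBit k then x else 0) := by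
    intro k x
    rw [Nat.testBit_xor]
    cases m.testBit k <;> cases n.testBit k <;> simp [add_self]
  unfold val8
  rw [h, h, h]
  ring

theorem val8_two_mul {ω : F9} (hω : ω ^ 3 = ω + 1) :
    ∀ a < 8, val8 ω (mul8 2 a) = ω * val8 ω a := by
  have h2 := add_self ω
  intro a ha
  have h : ∀ a < 8, (mul8 2 a).testBit 0 = a.testBit 2 ∧
    (mul8 2 a).testBit 1 = (a.testBit 0 ^^ a.testBit 2) ∧
    (mul8 2 a).testBit 2 = a.testBit 1 := by decide +kernel
  obtain ⟨h0, h1, h3⟩ := h a ha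
  unfold val8
  rw [h0, h1, h3]
  cases a.testBit 0 <;> cases a.testBit 1 <;> cases a.testBit 2 <;> simp <;>
    first
      | ring1
      | linear_combination -hω
      | linear_combination -hω - h2

theorem mul8_eq : ∀ a < 8, ∀ b < 8, mul8 a b =
    (if b.testBit 0 then a else 0) ^^^ ((if b.testBit 1 then mul8 2 a else 0) ^^^
      (if b.testBit 2 then mul8 2 (mul8 2 a) else 0)) := by
  decide +kernel

theorem val8_zero (ω : F9) : val8 ω 0 = 0 := by simp [val8]

theorem val8_one (ω : F9) : val8 ω 1 = 1 := by
  simp [val8, Nat.testBit, Nat.shiftRight_eq_div_pow]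

theorem val8_two (ω : F9) : val8 ω 2 = ω := by
  simp [val8, Nat.testBit, Nat.shiftRight_eq_div_pow]

theorem val8_mul {ω : F9} (hω : ω ^ 3 = ω + 1) {a b : ℕ} (ha : a < 8) (hb : b < 8) :
    val8 ω (mul8 a b) = val8 ω a * val8 ω b := by
  rw [mul8_eq a ha b hb, val8_xor, val8_xor, apply_ite (val8 ω), apply_ite (val8 ω),
    apply_ite (val8 ω), val8_zero, val8_two_mul hω _ (mul8_lt _ _), val8_two_mul hω _ ha]
  conv_rhs => rw [val8.eq_def ω b]
  split_ifs <;> ring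

theorem val8_inj {ω : F9} (hω : ω ^ 3 = ω + 1) {a b : ℕ} (ha : a < 8) (hb : b < 8)
    (h : val8 ω a = val8 ω b) : a = b := by
  have hinv : ∀ c < 8, c ≠ 0 → ∃ d < 8, mul8 c d = 1 := by decide +kernel
  have hlt : a ^^^ b < 8 := Nat.xor_lt_two_pow (n := 3) ha hb
  by_contra hne
  obtain ⟨d, hd, h1⟩ := hinv (a ^^^ b) hlt (by rwa [Ne, Nat.xor_eq_zero_iff])
  have := val8_mul hω hlt hd
  rw [h1, val8_one, val8_xor, h, add_self, zero_mul] at this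
  exact one_ne_zero this

/-- A generator of `K` satisfying `ω ^ 3 = ω + 1`. -/
theorem exists_omega : ∃ ω : F9, ω ^ 3 = ω + 1 ∧
    ∀ z : F9, z ^ 8 = z → ∃ n < 8, val8 ω n = z := by
  obtain ⟨α, hα⟩ := exists_root
  have hω : (α ^ 73) ^ 3 = α ^ 73 + 1 := by
    have h := one_add_pow hα 73 (by norm_num) (by norm_num)
    rw [show zech 73 = 219 by decide +kernel] at h
    rw [add_comm, h, ← pow_mul]
  refine ⟨α ^ 73, hω, fun z hz => ?_⟩
  by_cases h0 : z = 0
  · exact ⟨0, by norm_num, by rw [val8_zero, h0]⟩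
  obtain ⟨n, hn, rfl⟩ := exists_log hα z h0
  have h7 : (α ^ n) ^ 7 = 1 := mul_right_cancel₀ h0 (by rw [← pow_succ, hz, one_mul])
  have hm : n = 73 * (n / 73) := by have := (pow_seven_iff hα).1 h7; omega
  rw [hm, pow_mul]
  generalize n / 73 = m
  induction m with
  | zero => exact ⟨1, by norm_num, by rw [val8_one, pow_zero]⟩
  | succ m ih =>
    obtain ⟨c, hc, h⟩ := ih
    exact ⟨mul8 c 2, mul8_lt _ _, by rw [val8_mul hω hc (by norm_num), h, val8_two, pow_succ _ m]⟩

/-- The point with coordinates `(X, Y)` in the basis `1, ρ` lies in `π_B`, where `B` is spanned by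
`1`, `ρ` and `l + l k ρ`. -/
def Par (l k X Y : F9) : Prop :=
  ∃ a b c : Bool, (a || b || c) = true ∧
    X * ((if b then 1 else 0) + (if c then l * k else 0)) =
      Y * ((if a then 1 else 0) + (if c then l else 0))

/-- The version of `Par` for bit vectors. -/
def par8 (l k X Y : ℕ) : Bool :=
  [(1, 0), (0, 1), (1, 1), (l, mul8 l k), (1 ^^^ l, mul8 l k), (l, 1 ^^^ mul8 l k),
    (1 ^^^ l, 1 ^^^ mul8 l k)].any fun p => Nat.beq (mul8 X p.2) (mul8 Y p.1)

/-- The implication of `finite_step`, for bit vectors. -/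
def check8 (k l m : ℕ) : Bool :=
  let y := mul8 l (1 ^^^ mul8 k (mul8 k k))
  let x := mul8 k k
  !(!(Nat.beq k 0) && !(Nat.beq k 1) && !(Nat.beq l 0) && !(Nat.beq m 0) && !(Nat.beq k m) &&
    !(Nat.beq m 1) && !(Nat.beq (mul8 m m) (mul8 (k ^^^ m) (1 ^^^ m))) &&
    par8 l k m (k ^^^ m) && par8 l k (1 ^^^ m) m && par8 l k (1 ^^^ m) (k ^^^ m)) ||
  (Nat.beq m (1 ^^^ k) &&
    Nat.beq (mul8 y (1 ^^^ y)) (mul8 (mul8 l k) (mul8 x (1 ^^^ x))) &&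
    Nat.beq (mul8 y (x ^^^ y)) (mul8 l (1 ^^^ x)) &&
    !(Nat.beq y 0) && !(Nat.beq y 1) && !(Nat.beq y x) && !(Nat.beq y (1 ^^^ x)) &&
    !(Nat.beq x 1) && !(Nat.beq (mul8 x k) 1) && !(Nat.beq (k ^^^ x) 0) &&
    !(Nat.beq (k ^^^ x) 1) && !(Nat.beq (k ^^^ x) (mul8 x k)) &&
    !(Nat.beq (k ^^^ x) (1 ^^^ mul8 x k)))

theorem check8_true : ∀ k < 8, ∀ l < 8, ∀ m < 8, check8 k l m = true := by decide +kernel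

theorem par8_of_par {ω : F9} (hω : ω ^ 3 = ω + 1) {l k X Y : ℕ} (hl : l < 8) (hk : k < 8)
    (hX : X < 8) (hY : Y < 8) (h : Par (val8 ω l) (val8 ω k) (val8 ω X) (val8 ω Y)) :
    par8 l k X Y = true := by
  obtain ⟨a, b, c, habc, h⟩ := h
  have hlk := mul8_lt l k
  have h1l : 1 ^^^ l < 8 := Nat.xor_lt_two_pow (n := 3) (by norm_num) hl
  have h1lk : 1 ^^^ mul8 l k < 8 := Nat.xor_lt_two_pow (n := 3) (by norm_num) hlk
  have key : ∀ p q : ℕ, p < 8 → q < 8 → val8 ω X * val8 ω p = val8 ω Y * val8 ω q →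
      mul8 X p = mul8 Y q := fun p q hp hq he =>
    val8_inj hω (mul8_lt _ _) (mul8_lt _ _) (by rw [val8_mul hω hX hp, val8_mul hω hY hq, he])
  have e1 := val8_one ω
  have e0 := val8_zero ω
  have elk := val8_mul hω hl hk
  have ex1 := val8_xor ω 1 l
  have ex2 := val8_xor ω 1 (mul8 l k)
  rw [e1] at ex1 ex2
  rw [elk] at ex2
  unfold par8
  simp only [List.any_cons, List.any_nil, Bool.or_false, Bool.or_eq_true, Nat.beq_eq]
  cases a <;> cases b <;> cases c <;>
    simp only [if_true, if_false, Bool.false_eq_true, zero_add, add_zero, Bool.or_self,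
      Bool.or_false, Bool.or_true] at h habc
  · exact Or.inr <| Or.inr <| Or.inr <| Or.inl <| key _ _ hlk hl (by rw [elk, h])
  · exact Or.inr <| Or.inl <| key _ _ (by norm_num) (by norm_num) (by rw [e1, e0, h])
  · exact Or.inr <| Or.inr <| Or.inr <| Or.inr <| Or.inr <| Or.inl <|
      key _ _ h1lk hl (by rw [ex2, h])
  · exact Or.inl <| key _ _ (by norm_num) (by norm_num) (by rw [e1, e0, h])
  · exact Or.inr <| Or.inr <| Or.inr <| Or.inr <| Or.inl <|
      key _ _ hlk h1l (by rw [elk, ex1, h])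
  · exact Or.inr <| Or.inr <| Or.inl <| key _ _ (by norm_num) (by norm_num) (by rw [e1, h])
  · exact Or.inr <| Or.inr <| Or.inr <| Or.inr <| Or.inr <| Or.inr <|
      key _ _ h1lk h1l (by rw [ex2, ex1, h])

theorem pow_eight_of_pow_seven {c : F9} (h : c ^ 7 = 1) : c ^ 8 = c := by
  rw [pow_succ, h, one_mul]

theorem ne_zero_of_pow_seven {c : F9} (h : c ^ 7 = 1) : c ≠ 0 := by
  rintro rfl; simp at h

/-- Suppose a block `B` contains `1`, `ρ` and `l (1 + k ρ)` and a block `B'` contains `1`, `k ρ`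
and `m (1 + ρ)`, and that both give the same point set. Comparing the remaining points of `B'`
with those of `B` forces `m = 1 + k` and two equations for `x = k ^ 2` and `y = l (1 + k ^ 3)`,
which say that `B` and `B'` are multiples of `{z + t z ^ 2}` and `{z + t z ^ 4}` for one `t`. The
inequalities say that `1, x, y` and `1, x k, k + x` are bases of `K`. -/
theorem finite_step {k l m : F9} (hk : k ^ 7 = 1) (hk1 : k ≠ 1) (hl : l ^ 7 = 1) (hm : m ^ 7 = 1)
    (hkm : k ≠ m) (hm1 : m ≠ 1) (hd : m * m ≠ (k + m) * (1 + m)) (p1 : Par l k m (k + m))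
    (p2 : Par l k (1 + m) m) (p3 : Par l k (1 + m) (k + m)) {x y : F9} (hx : x = k * k)
    (hy : y = l * (1 + k * (k * k))) :
    m = 1 + k ∧ y * (1 + y) = l * k * (x * (1 + x)) ∧ y * (x + y) = l * (1 + x) ∧
      y ≠ 0 ∧ y ≠ 1 ∧ y ≠ x ∧ y ≠ 1 + x ∧ x ≠ 1 ∧ x * k ≠ 1 ∧ k + x ≠ 0 ∧ k + x ≠ 1 ∧
      k + x ≠ x * k ∧ k + x ≠ 1 + x * k := by
  obtain ⟨ω, hω, hval⟩ := exists_omega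
  have hk0 := ne_zero_of_pow_seven hk
  have hl0 := ne_zero_of_pow_seven hl
  have hm0 := ne_zero_of_pow_seven hm
  obtain ⟨a, ha, rfl⟩ := hval k (pow_eight_of_pow_seven hk)
  obtain ⟨b, hb, rfl⟩ := hval l (pow_eight_of_pow_seven hl)
  obtain ⟨c, hc, rfl⟩ := hval m (pow_eight_of_pow_seven hm)
  clear hk hl hm hval
  have hxor : ∀ {p q : ℕ}, p < 8 → q < 8 → p ^^^ q < 8 := fun hp hq =>
    Nat.xor_lt_two_pow (n := 3) hp hq
  have e1 := val8_one ω
  have e0 := val8_zero ω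
  have h1 : 1 < 8 := by norm_num
  have eac := val8_xor ω a c
  have e1c := val8_xor ω 1 c
  rw [e1] at e1c
  rw [← eac] at p1 p3
  rw [← e1c] at p2 p3
  have q1 := par8_of_par hω hb ha hc (hxor ha hc) p1
  have q2 := par8_of_par hω hb ha (hxor h1 hc) hc p2
  have q3 := par8_of_par hω hb ha (hxor h1 hc) (hxor ha hc) p3
  have E : ∀ p q : ℕ, p < 8 → q < 8 → (p = q ↔ val8 ω p = val8 ω q) := fun p q hp hq =>
    ⟨fun h => by rw [h], val8_inj hω hp hq⟩
  have M : ∀ p q : ℕ, p < 8 → q < 8 → val8 ω (mul8 p q) = val8 ω p * val8 ω q :=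
    fun p q hp hq => val8_mul hω hp hq
  have h := check8_true a ha b hb c hc
  unfold check8 at h
  rw [q1, q2, q3] at h
  have hx2 : x = val8 ω (mul8 a a) := by rw [M _ _ ha ha, hx]
  have hy2 : y = val8 ω (mul8 b (1 ^^^ mul8 a (mul8 a a))) := by
    rw [M _ _ hb (hxor h1 (mul8_lt _ _)), val8_xor, M _ _ ha (mul8_lt _ _), M _ _ ha ha, e1, hy]
  have hxl := mul8_lt a a
  have hyl := mul8_lt b (1 ^^^ mul8 a (mul8 a a))
  clear hx hy
  generalize mul8 b (1 ^^^ mul8 a (mul8 a a)) = y' at *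
  generalize mul8 a a = x' at *
  subst hx2 hy2
  have hnat : ∀ p q : ℕ, (Nat.beq p q) = decide (p = q) := fun p q => by
    rw [Bool.eq_iff_iff, Nat.beq_eq, decide_eq_true_iff]
  simp only [hnat, Bool.and_true, Bool.or_eq_true, Bool.and_eq_true, Bool.not_eq_true',
    decide_eq_false_iff_not, decide_eq_true_eq, Bool.and_eq_false_iff, Bool.not_eq_false',
    or_assoc, and_assoc] at h
  simp only [E, M, val8_xor, e0, e1, mul8_lt, hxor, ha, hb, hc, hxl, hyl, h1,
    Nat.ofNat_pos] at h
  simpa only [hk0, hk1, hl0, hm0, hkm, hm1, hd, false_or] using h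

theorem add_pow_eight (x y : F9) : (x + y) ^ 8 = x ^ 8 + y ^ 8 := by
  have := add_pow_char_pow (R := F9) x y 2 (n := 3)
  norm_num at this
  exact this

theorem two_eq_zero_F9 : (2 : F9) = 0 := CharTwo.two_eq_zero

/-- The subfield `K` as an `𝔽_2`-subspace. -/
def Kmod : Submodule (ZMod 2) F9 where
  carrier := {x | x ^ 8 = x}
  add_mem' := fun {a b} ha hb => by
    have ha' : a ^ 8 = a := ha
    have hb' : b ^ 8 = b := hb
    change (a + b) ^ 8 = a + b
    rw [add_pow_eight, ha', hb']
  zero_mem' := by simp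
  smul_mem' := fun c x hx => by
    have hx' : x ^ 8 = x := hx
    change (c • x) ^ 8 = c • x
    have hc : c = 0 ∨ c = 1 := by revert c; decide
    rcases hc with rfl | rfl
    · simp
    · rw [one_smul, hx']

theorem mem_Kmod {x : F9} : x ∈ Kmod ↔ x ^ 8 = x := Iff.rfl

theorem card_Kmod : Nat.card Kmod = 8 := by
  obtain ⟨ω, hω, hval⟩ := exists_omega
  have hom3 : ω ^ 8 = ω := by
    have h2 := two_eq_zero_F9
    linear_combination (ω ^ 5 + ω ^ 3 + ω ^ 2 + ω + 2) * hω + (ω ^ 2 + ω + 1) * h2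
  have hK : ∀ n, val8 ω n ∈ Kmod := fun n => by
    have h1 : (1 : F9) ∈ Kmod := one_pow 8
    have h2 : ω ^ 2 ∈ Kmod := by rw [mem_Kmod, ← pow_mul, mul_comm, pow_mul, hom3]
    have h3 : ω ∈ Kmod := hom3
    have hs : ∀ (s : Bool) (u : F9), u ∈ Kmod → (if s then u else 0) ∈ Kmod := fun s u hu => by
      split_ifs
      · exact hu
      · exact Kmod.zero_mem
    unfold val8
    exact Kmod.add_mem (Kmod.add_mem (hs _ _ h1) (hs _ _ h3)) (hs _ _ h2)
  have himg : (Kmod : Set F9) = (fun n => val8 ω n) '' ((Finset.range 8 : Finset ℕ) : Set ℕ) := by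
    ext z
    constructor
    · intro hz
      obtain ⟨n, hn, h⟩ := hval z (mem_Kmod.1 hz)
      exact ⟨n, Finset.mem_coe.2 (Finset.mem_range.2 hn), h⟩
    · rintro ⟨n, -, rfl⟩
      exact hK n
  have hinj : Set.InjOn (fun n => val8 ω n) ((Finset.range 8 : Finset ℕ) : Set ℕ) :=
    fun a ha b hb h => val8_inj hω (Finset.mem_range.1 (Finset.mem_coe.1 ha))
      (Finset.mem_range.1 (Finset.mem_coe.1 hb)) h
  have h1 : (Kmod : Set F9).ncard = 8 := by
    rw [himg, hinj.ncard_image, Set.ncard_coe_finset, Finset.card_range]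
  exact h1

theorem pow_seven_of_mem {z : F9} (hz : z ∈ Kmod) (h0 : z ≠ 0) : z ^ 7 = 1 :=
  mul_right_cancel₀ h0 (by rw [← pow_succ, mem_Kmod.1 hz, one_mul])

theorem mem_of_pow_seven {z : F9} (hz : z ^ 7 = 1) : z ∈ Kmod := pow_eight_of_pow_seven hz

theorem mul_mem_Kmod {a b : F9} (ha : a ∈ Kmod) (hb : b ∈ Kmod) : a * b ∈ Kmod := by
  rw [mem_Kmod, mul_pow, mem_Kmod.1 ha, mem_Kmod.1 hb]

/-- `1` and `ρ ∉ K` are linearly independent over `K`. -/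
theorem indep_K {ρ X Y : F9} (hρ : ρ ≠ 0) (hρ7 : ρ ^ 7 ≠ 1) (hX : X ∈ Kmod) (hY : Y ∈ Kmod)
    (h : X + Y * ρ = 0) : X = 0 ∧ Y = 0 := by
  by_cases hY0 : Y = 0
  · rw [hY0, zero_mul, add_zero] at h
    exact ⟨h, hY0⟩
  · exfalso
    have h1 : X = Y * ρ := add_eq_zero_iff_eq'.1 h
    have hX0 : X ≠ 0 := by rw [h1]; exact mul_ne_zero hY0 hρ
    have h2 := pow_seven_of_mem hX hX0
    rw [h1, mul_pow, pow_seven_of_mem hY hY0, one_mul] at h2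
    exact hρ7 h2

/-- If an additive map sends a basis of `K` into `B`, it sends all of `K` into `B`. -/
theorem map_K_mem {B : Submodule (ZMod 2) F9} (f : F9 →+ F9) {x y z : F9} (hxK : x ∈ Kmod)
    (hyK : y ∈ Kmod) (hzK : z ∈ Kmod) (hx : x ≠ 0) (hy : y ≠ 0) (hxy : y ≠ x) (hz : z ≠ 0)
    (hzx : z ≠ x) (hzy : z ≠ y) (hzxy : z ≠ x + y) (fx : f x ∈ B) (fy : f y ∈ B) (fz : f z ∈ B)
    {v : F9} (hv : v ∈ Kmod) : f v ∈ B := by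
  obtain ⟨a, b, c, rfl⟩ := exists_combo card_Kmod hxK hyK hzK hx hy hxy hz hzx hzy hzxy hv
  have : f (combo x y z a b c) = combo (f x) (f y) (f z) a b c := by
    unfold combo
    rw [map_add, map_add, apply_ite f, apply_ite f, apply_ite f, map_zero]
  rw [this]
  exact combo_mem fx fy fz a b c

/-- The additive map `z ↦ z + t z ^ (2 ^ n)`. -/
noncomputable def twist (t : F9) (n : ℕ) : F9 →+ F9 where
  toFun z := z + t * z ^ 2 ^ n
  map_zero' := by simp
  map_add' a b := by
    have := add_pow_char_pow (R := F9) a b 2 (n := n)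
    rw [this]; ring

/-- If a `K`-multiple of `X + Y ρ` lies in `B = ⟨1, ρ, l (1 + k ρ)⟩`, then the point `(X, Y)` is one
of the seven points of `π_B`. -/
theorem par_of_rel {N : Set (Submodule (ZMod 2) F9)} (hN : Blocks N)
    {B : Submodule (ZMod 2) F9} (hB : B ∈ N) {ρ k l X Y c : F9} (hρ : ρ ≠ 0) (hρ7 : ρ ^ 7 ≠ 1)
    (hk : k ^ 7 = 1) (hk1 : k ≠ 1) (hl : l ^ 7 = 1) (h1B : 1 ∈ B) (hρB : ρ ∈ B)
    (hlB : l * (1 + k * ρ) ∈ B) (hX : X ∈ Kmod) (hY : Y ∈ Kmod) (hXY : X + Y * ρ ≠ 0)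
    (hc : c ^ 7 = 1) (hcB : c * (X + Y * ρ) ∈ B) : Par l k X Y := by
  have I := fun X Y hX hY => indep_K (X := X) (Y := Y) hρ hρ7 hX hY
  have K1 : (1 : F9) ∈ Kmod := one_pow 8
  have Kl := mem_of_pow_seven hl
  have Kc := mem_of_pow_seven hc
  have Klk := mul_mem_Kmod Kl (mem_of_pow_seven hk)
  have l0 := ne_zero_of_pow_seven hl
  have k0 := ne_zero_of_pow_seven hk
  have lk0 : l * k ≠ 0 := mul_ne_zero l0 k0
  have h2 := two_eq_zero_F9
  have n0 : l * (1 + k * ρ) ≠ 0 := fun h =>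
    l0 (I l (l * k) Kl Klk (by linear_combination h)).1
  have n1 : l * (1 + k * ρ) ≠ 1 := fun h =>
    lk0 (I (l + 1) (l * k) (Kmod.add_mem Kl K1) Klk (by linear_combination h + h2)).2
  have n2 : l * (1 + k * ρ) ≠ ρ := fun h =>
    l0 (I l (l * k + 1) Kl (Kmod.add_mem Klk K1) (by linear_combination h + ρ * h2)).1
  have n3 : l * (1 + k * ρ) ≠ 1 + ρ := fun h => by
    have h3 := I (l + 1) (l * k + 1) (Kmod.add_mem Kl K1) (Kmod.add_mem Klk K1)
      (by linear_combination h + (1 + ρ) * h2)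
    have h4 := add_eq_zero_iff_eq'.1 h3.1
    have h5 := add_eq_zero_iff_eq'.1 h3.2
    rw [h4, one_mul] at h5
    exact hk1 h5
  have hρ1 : ρ ≠ 1 := by rintro rfl; exact hρ7 (one_pow 7)
  obtain ⟨a, b, e, h⟩ := exists_combo (hN.card B hB) h1B hρB hlB one_ne_zero hρ hρ1 n0 n1 n2 n3 hcB
  have c0 := ne_zero_of_pow_seven hc
  refine ⟨a, b, e, ?_, ?_⟩
  · cases a <;> cases b <;> cases e <;> try rfl
    exfalso
    refine mul_ne_zero c0 hXY (h.trans ?_)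
    simp [combo]
  · have hs : ∀ (s : Bool) (u : F9), u ∈ Kmod → (if s then u else 0) ∈ Kmod := fun s u hu => by
      split_ifs
      · exact hu
      · exact Kmod.zero_mem
    have ha := hs a 1 K1
    have hb := hs b 1 K1
    have he := hs e l Kl
    have hek := hs e (l * k) Klk
    have h3 : c * (X + Y * ρ) = ((if a then 1 else 0) + (if e then l else 0)) +
        ((if b then 1 else 0) + (if e then l * k else 0)) * ρ := by
      rw [h]; unfold combo
      cases a <;> cases b <;> cases e <;> simp <;> ring
    generalize (if a = true then (1 : F9) else 0) = a' at *
    generalize (if b = true then (1 : F9) else 0) = b' at *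
    generalize (if e = true then l * k else 0) = f' at *
    generalize (if e = true then l else 0) = e' at *
    obtain ⟨i1, i2⟩ := I (c * X + (a' + e')) (c * Y + (b' + f'))
      (Kmod.add_mem (mul_mem_Kmod Kc hX) (Kmod.add_mem ha he))
      (Kmod.add_mem (mul_mem_Kmod Kc hY) (Kmod.add_mem hb hek))
      (by linear_combination h3 + ((a' + e') + (b' + f') * ρ) * h2)
    rw [← add_eq_zero_iff_eq'.1 i1, ← add_eq_zero_iff_eq'.1 i2]
    ring

/-- A block `B` through `1`, `ρ` and a block `B'` through `1`, `k ρ`, with `1 ≠ k ∈ K`, have different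
point sets: otherwise `finite_step` turns them into an exceptional pair. -/
theorem key_false {N : Set (Submodule (ZMod 2) F9)} (hN : Blocks N)
    {B B' : Submodule (ZMod 2) F9} (hB : B ∈ N) (hB' : B' ∈ N) {ρ k : F9} (hρ : ρ ≠ 0)
    (hρ7 : ρ ^ 7 ≠ 1) (hk : k ^ 7 = 1) (hk1 : k ≠ 1) (h1B : 1 ∈ B) (hρB : ρ ∈ B) (h1B' : 1 ∈ B')
    (hρB' : k * ρ ∈ B') (rel : ∀ b ∈ B, b ≠ 0 → ∃ c : F9, c ^ 7 = 1 ∧ c * b ∈ B')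
    (rel' : ∀ b ∈ B', b ≠ 0 → ∃ c : F9, c ^ 7 = 1 ∧ c * b ∈ B) : False := by
  have I := fun X Y hX hY => indep_K (X := X) (Y := Y) hρ hρ7 hX hY
  have K1 : (1 : F9) ∈ Kmod := one_pow 8
  have Kk := mem_of_pow_seven hk
  have k0 := ne_zero_of_pow_seven hk
  have h2 := two_eq_zero_F9
  have nk : 1 + k * ρ ≠ 0 := fun h => one_ne_zero (I 1 k K1 Kk h).1
  have nr : 1 + ρ ≠ 0 := fun h => one_ne_zero (I 1 1 K1 K1 (by rw [one_mul]; exact h)).1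
  obtain ⟨l, hl, hlB⟩ := rel' _ (B'.add_mem h1B' hρB') nk
  obtain ⟨m, hm, hmB⟩ := rel _ (B.add_mem h1B hρB) nr
  have Kl := mem_of_pow_seven hl
  have Km := mem_of_pow_seven hm
  have m0 := ne_zero_of_pow_seven hm
  have K1m := Kmod.add_mem K1 Km
  have Kkm := Kmod.add_mem Kk Km
  have kρ0 : k * ρ ≠ 0 := mul_ne_zero k0 hρ
  have u1 : m + (k + m) * ρ ∈ B' := by
    rw [show m + (k + m) * ρ = k * ρ + m * (1 + ρ) by ring]; exact B'.add_mem hρB' hmB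
  have u2 : (1 + m) + m * ρ ∈ B' := by
    rw [show (1 + m) + m * ρ = 1 + m * (1 + ρ) by ring]; exact B'.add_mem h1B' hmB
  have u3 : (1 + m) + (k + m) * ρ ∈ B' := by
    rw [show (1 + m) + (k + m) * ρ = 1 + k * ρ + m * (1 + ρ) by ring]
    exact B'.add_mem (B'.add_mem h1B' hρB') hmB
  have u10 : m + (k + m) * ρ ≠ 0 := fun h => m0 (I _ _ Km Kkm h).1
  have u20 : (1 + m) + m * ρ ≠ 0 := fun h => m0 (I _ _ K1m Km h).2
  have hkm : k ≠ m := by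
    rintro rfl
    rw [add_self, zero_mul, add_zero] at u1
    exact hk1 (hN.scat B' hB' 1 h1B' k u1 one_ne_zero k0 (by rw [div_one]; exact hk)).symm
  have hm1 : m ≠ 1 := by
    rintro rfl
    rw [add_self, zero_add, one_mul] at u2
    have h3 := hN.scat B' hB' ρ u2 _ hρB' hρ kρ0 (by rw [mul_div_cancel_right₀ _ hρ]; exact hk)
    exact hk1 (mul_right_cancel₀ hρ (by rw [one_mul]; exact h3.symm))
  have n1m : 1 + m ≠ 0 := fun h => hm1 (add_eq_zero_iff_eq'.1 h).symm
  have u30 : (1 + m) + (k + m) * ρ ≠ 0 := fun h => n1m (I _ _ K1m Kkm h).1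
  have hd : m * m ≠ (k + m) * (1 + m) := by
    intro h
    have hq : ((1 + m) + m * ρ) / (m + (k + m) * ρ) = (1 + m) / m := by
      rw [div_eq_div_iff u10 m0]
      linear_combination ρ * h
    have h3 := hN.scat B' hB' _ u1 _ u2 u10 u20 (by
      rw [hq, div_pow, hm, div_one, pow_seven_of_mem K1m n1m])
    exact nk (by linear_combination h3 + h2)
  have P : ∀ X Y, X ∈ Kmod → Y ∈ Kmod → X + Y * ρ ∈ B' → X + Y * ρ ≠ 0 → Par l k X Y := by
    intro X Y hX hY hmem h0
    obtain ⟨c, hc, hcB⟩ := rel' _ hmem h0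
    exact par_of_rel hN hB hρ hρ7 hk hk1 hl h1B hρB hlB hX hY h0 hc hcB
  obtain ⟨x, hx⟩ : ∃ x, x = k * k := ⟨_, rfl⟩
  obtain ⟨y, hy⟩ : ∃ y, y = l * (1 + k * (k * k)) := ⟨_, rfl⟩
  obtain ⟨hmk, f1, f2, y0, y1, yx, y1x, x1, xk1, z0, z1, z2, z3⟩ :=
    finite_step hk hk1 hl hm hkm hm1 hd (P _ _ Km Kkm u1 u10) (P _ _ K1m Km u2 u20)
      (P _ _ K1m Kkm u3 u30) hx hy
  have x0 : x ≠ 0 := by rw [hx]; exact mul_ne_zero k0 k0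
  have Kx : x ∈ Kmod := by rw [hx]; exact mul_mem_Kmod Kk Kk
  have Ky : y ∈ Kmod := by
    rw [hy]; exact mul_mem_Kmod Kl (Kmod.add_mem K1 (mul_mem_Kmod Kk (mul_mem_Kmod Kk Kk)))
  have n1x : 1 + x ≠ 0 := fun h => x1 (add_eq_zero_iff_eq'.1 h).symm
  have D0 : x * (1 + x) ≠ 0 := mul_ne_zero x0 n1x
  have s0 : ρ + x ≠ 0 := fun h =>
    one_ne_zero (I x 1 Kx K1 (by rw [one_mul, add_comm]; exact h)).2
  have r0 : ρ + x * x ≠ 0 := fun h =>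
    one_ne_zero (I (x * x) 1 (mul_mem_Kmod Kx Kx) K1 (by rw [one_mul, add_comm]; exact h)).2
  obtain ⟨t, ht⟩ : ∃ t, t = (ρ + x) / (ρ + x * x) := ⟨_, rfl⟩
  obtain ⟨p, hp⟩ : ∃ p, p = (ρ + x * x) / (x * (1 + x)) := ⟨_, rfl⟩
  have p0 : p ≠ 0 := by rw [hp]; exact div_ne_zero r0 D0
  have t0 : t ≠ 0 := by rw [ht]; exact div_ne_zero s0 r0
  have t7 : t ^ 7 ≠ 1 := by
    intro h
    have Kt := mem_of_pow_seven h
    have h3 : t * (ρ + x * x) = ρ + x := by rw [ht, div_mul_cancel₀ _ r0]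
    obtain ⟨i1, i2⟩ := I (x + t * (x * x)) (1 + t)
      (Kmod.add_mem Kx (mul_mem_Kmod Kt (mul_mem_Kmod Kx Kx))) (Kmod.add_mem K1 Kt)
      (by linear_combination h3 + (ρ + x) * h2)
    rw [← add_eq_zero_iff_eq'.1 i2, one_mul] at i1
    exact D0 (by rw [mul_add, mul_one]; exact i1)
  -- With these `p` and `t` one has `p⁻¹ B = {z + t z ^ 2}` and `p⁻¹ B' = {z + t z ^ 4}`: the vectors
  -- `1`, `ρ`, `l (1 + k ρ)` of `B` belong to `z = 1, x, y`, and the vectors `1`, `k ρ`, `k + ρ` of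
  -- `B'` belong to `z = 1, x k, k + x`.
  have T : ∀ z w v : F9, (ρ + x * x) * z + (ρ + x) * w = v * (x * (1 + x)) →
      p * (z + t * w) = v := by
    intro z w v h
    rw [hp, ht, div_mul_eq_mul_div, div_eq_iff D0, ← h, mul_add, ← mul_assoc,
      mul_div_cancel₀ _ r0]
  have M : ∀ {S : Submodule (ZMod 2) F9} {z w v : F9}, v ∈ S →
      (ρ + x * x) * z + (ρ + x) * w = v * (x * (1 + x)) → z + t * w ∈ sc p⁻¹ S := by
    intro S z w v hv h
    rw [mem_sc (inv_ne_zero p0), inv_inv, T z w v h]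
    exact hv
  have hρk : k + ρ ∈ B' := by
    rw [show k + ρ = 1 + k * ρ + m * (1 + ρ) by
      rw [hmk]; linear_combination (-1 - k * ρ) * h2]
    exact B'.add_mem (B'.add_mem h1B' hρB') hmB
  refine not_excPair hN t0 t7 ⟨_, hN.sc_mem B hB _ (inv_ne_zero p0), _,
    hN.sc_mem B' hB' _ (inv_ne_zero p0), fun z hz => ⟨?_, ?_⟩⟩
  · have := map_K_mem (B := sc p⁻¹ B) (twist t 1) K1 Kx Ky one_ne_zero x0 x1 y0 y1 yx y1x
      (M (w := 1 ^ 2 ^ 1) h1B (by linear_combination ρ * h2))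
      (M (w := x ^ 2 ^ 1) hρB (by linear_combination x ^ 3 * h2))
      (M (w := y ^ 2 ^ 1) hlB (by linear_combination ρ * f1 + x * f2)) hz
    exact this
  · have := map_K_mem (B := sc p⁻¹ B') (twist t 2) K1 (mul_mem_Kmod Kx Kk) (Kmod.add_mem Kk Kx)
      one_ne_zero (mul_ne_zero x0 k0) xk1 z0 z1 z2 z3
      (M (w := 1 ^ 2 ^ 2) h1B' (by linear_combination ρ * h2))
      (M (w := (x * k) ^ 2 ^ 2) hρB' (by
        rw [hx]; linear_combination (ρ + k * k) * k ^ 5 * hk + k ^ 7 * h2))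
      (M (w := (k + x) ^ 2 ^ 2) hρk (by
        rw [hx]
        linear_combination (ρ * k + k ^ 3) * hk + (ρ * k + ρ * (2 * k ^ 5 + 3 * k ^ 6 + 2 * k ^ 7)
          + k ^ 6 + 2 * k ^ 7 + 3 * k ^ 8 + 2 * k ^ 9) * h2)) hz
    exact this

/-! ### Blocks with the same point set -/

/-- If two blocks determine the same points, then each is a `K`-multiple of the other. -/
theorem eq_sc_of_rel {N : Set (Submodule (ZMod 2) F9)} (hN : Blocks N)
    {B B' : Submodule (ZMod 2) F9} (hB : B ∈ N) (hB' : B' ∈ N)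
    (rel : ∀ b ∈ B, b ≠ 0 → ∃ c : F9, c ^ 7 = 1 ∧ c * b ∈ B')
    (rel' : ∀ b ∈ B', b ≠ 0 → ∃ c : F9, c ^ 7 = 1 ∧ c * b ∈ B) :
    ∃ c : F9, c ^ 7 = 1 ∧ B' = sc c B := by
  obtain ⟨a, haB, a0, -⟩ := exists_third (hN.card B hB) 0 0
  obtain ⟨b, hbB, b0, hba, -⟩ := exists_third (hN.card B hB) a a
  have h7 : (b / a) ^ 7 ≠ 1 := fun h => hba (hN.scat B hB a haB b hbB a0 b0 h).symm
  obtain ⟨c, hc, hca⟩ := rel a haB a0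
  obtain ⟨d, hd, hdb⟩ := rel b hbB b0
  have c0 := ne_zero_of_pow_seven hc
  have d0 := ne_zero_of_pow_seven hd
  by_cases hcd : d = c
  · subst hcd
    exact ⟨d, hd, hN.uniq _ hB' _ (hN.sc_mem B hB d d0) (d * a) (d * b) (mul_ne_zero d0 a0)
      (mul_ne_zero d0 b0) (fun h => hba (mul_left_cancel₀ d0 h).symm) hca hdb (mul_mem_sc haB)
      (mul_mem_sc hbB)⟩
  · exfalso
    have ia := inv_ne_zero a0
    have ica := inv_ne_zero (mul_ne_zero c0 a0)
    refine key_false hN (hN.sc_mem B hB a⁻¹ ia) (hN.sc_mem B' hB' (c * a)⁻¹ ica)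
      (div_ne_zero b0 a0) h7 (k := d / c) (by rw [div_pow, hd, hc, div_one])
      (fun h => hcd ((div_eq_one_iff_eq c0).1 h)) ?_ ?_ ?_ ?_ ?_ ?_
    · rw [mem_sc ia, inv_inv, mul_one]; exact haB
    · rw [mem_sc ia, inv_inv, mul_div_cancel₀ _ a0]; exact hbB
    · rw [mem_sc ica, inv_inv, mul_one]; exact hca
    · rw [mem_sc ica, inv_inv, show c * a * (d / c * (b / a)) = d * b by field_simp]; exact hdb
    · intro x hx x0
      rw [mem_sc ia, inv_inv] at hx
      obtain ⟨e, he, heB⟩ := rel _ hx (mul_ne_zero a0 x0)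
      refine ⟨e / c, by rw [div_pow, he, hc, div_one], ?_⟩
      rw [mem_sc ica, inv_inv, show c * a * (e / c * x) = e * (a * x) by field_simp]
      exact heB
    · intro x hx x0
      rw [mem_sc ica, inv_inv] at hx
      obtain ⟨e, he, heB⟩ := rel' _ hx (mul_ne_zero (mul_ne_zero c0 a0) x0)
      refine ⟨e * c, by rw [mul_pow, he, hc, mul_one], ?_⟩
      rw [mem_sc ia, inv_inv, show a * (e * c * x) = e * (c * a * x) by ring]
      exact heB

theorem mem_pt {x y : F9} (hx : x ≠ 0) : y ∈ pt x ↔ y / x ∈ Kmod := by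
  constructor
  · rintro ⟨c, hc, rfl⟩
    rw [mul_div_cancel_left₀ _ hx]
    exact hc
  · intro h
    exact ⟨y / x, h, (mul_div_cancel₀ y hx).symm⟩

theorem mem_pt_self {x : F9} : x ∈ pt x := ⟨1, one_pow 8, (mul_one x).symm⟩

theorem pt_eq_iff {x y : F9} (hx : x ≠ 0) (hy : y ≠ 0) : pt x = pt y ↔ (y / x) ^ 7 = 1 := by
  constructor
  · intro h
    have h1 : y ∈ pt x := by rw [h]; exact mem_pt_self
    exact pow_seven_of_mem ((mem_pt hx).1 h1) (div_ne_zero hy hx)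
  · intro h
    have h' : (x / y) ^ 7 = 1 := by rw [← inv_div, inv_pow, h, inv_one]
    ext z
    rw [mem_pt hx, mem_pt hy]
    constructor
    · intro hz
      rw [show z / y = z / x * (x / y) by field_simp]
      exact mul_mem_Kmod hz (mem_of_pow_seven h')
    · intro hz
      rw [show z / x = z / y * (y / x) by field_simp]
      exact mul_mem_Kmod hz (mem_of_pow_seven h)

theorem coe_sc_Kmod (x : F9) : (sc x Kmod : Set F9) = pt x := by
  ext y
  constructor
  · rintro ⟨c, hc, rfl⟩
    exact ⟨c, hc, rfl⟩
  · rintro ⟨c, hc, rfl⟩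
    exact ⟨c, hc, rfl⟩

theorem rel_of_piB_subset {B B' : Submodule (ZMod 2) F9} (h : piB B ⊆ piB B') :
    ∀ b ∈ B, b ≠ 0 → ∃ c : F9, c ^ 7 = 1 ∧ c * b ∈ B' := by
  intro b hb b0
  obtain ⟨x, hx, x0, he⟩ := h ⟨b, hb, b0, rfl⟩
  refine ⟨x / b, (pt_eq_iff b0 x0).1 he, ?_⟩
  rw [div_mul_cancel₀ _ b0]
  exact hx

theorem eq_sc_of_piB_eq {N : Set (Submodule (ZMod 2) F9)} (hN : Blocks N)
    {B B' : Submodule (ZMod 2) F9} (hB : B ∈ N) (hB' : B' ∈ N) (h : piB B = piB B') :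
    ∃ c : F9, c ^ 7 = 1 ∧ B' = sc c B :=
  eq_sc_of_rel hN hB hB' (rel_of_piB_subset h.le) (rel_of_piB_subset h.ge)

theorem piB_sc {c : F9} (hc : c ^ 7 = 1) (B : Submodule (ZMod 2) F9) : piB (sc c B) = piB B := by
  have c0 := ne_zero_of_pow_seven hc
  have hp : ∀ b : F9, b ≠ 0 → pt b = pt (c * b) := fun b b0 =>
    (pt_eq_iff b0 (mul_ne_zero c0 b0)).2 (by rw [mul_div_cancel_right₀ _ b0, hc])
  ext P
  constructor
  · rintro ⟨y, ⟨b, hb, rfl⟩, h0, rfl⟩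
    have b0 : b ≠ 0 := by rintro rfl; exact h0 (map_zero _)
    exact ⟨b, hb, b0, (hp b b0).symm⟩
  · rintro ⟨b, hb, b0, rfl⟩
    exact ⟨c * b, mul_mem_sc hb, mul_ne_zero c0 b0, hp b b0⟩

/-! ### The blocks of a cyclic design -/

theorem sc_mul (a b : F9) (B : Submodule (ZMod 2) F9) : sc (a * b) B = sc a (sc b B) := by
  unfold sc
  rw [LinearMap.mulLeft_mul, Submodule.map_comp]

theorem sc_one (B : Submodule (ZMod 2) F9) : sc 1 B = B := by
  unfold sc
  rw [LinearMap.mulLeft_one, Submodule.map_id]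

theorem finrank_span_pair' {x y : F9} (hx : x ≠ 0) (hy : y ≠ 0) (hxy : x ≠ y) :
    Module.finrank (ZMod 2) (Submodule.span (ZMod 2) {x, y}) = 2 := by
  have h : LinearIndependent (ZMod 2) ![x, y] := by
    rw [LinearIndependent.pair_iff]
    intro s t hst
    have hZ : ∀ c : ZMod 2, c = 0 ∨ c = 1 := by decide
    rcases hZ s with rfl | rfl <;> rcases hZ t with rfl | rfl
    · exact ⟨rfl, rfl⟩
    · rw [zero_smul, one_smul, zero_add] at hst
      exact absurd hst hy
    · rw [zero_smul, one_smul, add_zero] at hst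
      exact absurd hst hx
    · rw [one_smul, one_smul] at hst
      exact absurd (add_eq_zero_iff_eq'.1 hst) hxy
  have h1 := finrank_span_eq_card h
  rw [Matrix.range_cons, Matrix.range_cons, Matrix.range_empty, Set.union_empty,
    Set.singleton_union, Fintype.card_fin] at h1
  exact h1

theorem sc_mem_of_cyclic {g : F9} {𝓑 : Set (Submodule (ZMod 2) F9)}
    (h : IsCyclicTwoAnalog g 𝓑) {B : Submodule (ZMod 2) F9} (hB : B ∈ 𝓑) {c : F9} (hc : c ≠ 0) :
    sc c B ∈ 𝓑 := by
  obtain ⟨m, rfl⟩ := h.1 c hc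
  clear hc
  induction m with
  | zero => rw [pow_zero, sc_one]; exact hB
  | succ m ih =>
    obtain ⟨S, hS, he⟩ := h.2.2.2 _ ih
    have : S = sc g (sc (g ^ m) B) := SetLike.coe_injective (by rw [he]; rfl)
    rw [pow_succ', sc_mul, ← this]
    exact hS

/-- A member of `𝓑` with two `𝔽_2`-independent vectors in some `xK` is `xK` itself, since `xK ∈ 𝓑`;
hence the members of `𝓑 \ Σ` are scattered. -/
theorem blocks_of_cyclic {g : F9} {𝓑 : Set (Submodule (ZMod 2) F9)}
    (h : IsCyclicTwoAnalog g 𝓑) (hSig : SigmaSet ⊆ 𝓑) : Blocks (𝓑 \ SigmaSet) := by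
  have uniq : ∀ B ∈ 𝓑, ∀ B' ∈ 𝓑, ∀ x y : F9, x ≠ 0 → y ≠ 0 → x ≠ y → x ∈ B → y ∈ B → x ∈ B' →
      y ∈ B' → B = B' := by
    intro B hB B' hB' x y x0 y0 hxy h1 h2 h3 h4
    have hsp : ∀ S : Submodule (ZMod 2) F9, x ∈ S → y ∈ S →
        Submodule.span (ZMod 2) {x, y} ≤ S := fun S hx hy => by
      rw [Submodule.span_le, Set.insert_subset_iff, Set.singleton_subset_iff]
      exact ⟨hx, hy⟩
    exact (h.2.2.1 _ (finrank_span_pair' x0 y0 hxy)).unique ⟨hB, hsp B h1 h2⟩ ⟨hB', hsp B' h3 h4⟩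
  refine ⟨fun B hB => ?_, fun B hB c hc => ⟨sc_mem_of_cyclic h hB.1 hc, ?_⟩,
    fun B hB B' hB' => uniq B hB.1 B' hB'.1, fun x y x0 y0 hxy => ?_,
    fun B hB x hx y hy x0 y0 hxy => ?_⟩
  · rw [Module.natCard_eq_pow_finrank (K := ZMod 2), h.2.1 B hB.1, Nat.card_zmod]
    rfl
  · rintro ⟨x, x0, hx⟩
    refine hB.2 ⟨c⁻¹ * x, mul_ne_zero (inv_ne_zero hc) x0, ?_⟩
    have h1 : sc c B = sc x Kmod := SetLike.coe_injective (by rw [hx, coe_sc_Kmod])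
    have h2 : B = sc (c⁻¹ * x) Kmod := by
      rw [sc_mul, ← h1, ← sc_mul, inv_mul_cancel₀ hc, sc_one]
    rw [← coe_sc_Kmod, ← h2]
  · have hne : x ≠ y := by rintro rfl; exact hxy (by rw [div_self x0, one_pow])
    obtain ⟨S, ⟨hS, hle⟩, -⟩ := h.2.2.1 _ (finrank_span_pair' x0 y0 hne)
    have hxS : x ∈ S := hle (Submodule.subset_span (Set.mem_insert _ _))
    have hyS : y ∈ S := hle (Submodule.subset_span (Set.mem_insert_of_mem _ rfl))
    refine ⟨S, ⟨hS, ?_⟩, hxS, hyS⟩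
    rintro ⟨z, z0, hz⟩
    have h1 : x ∈ pt z := by rw [← hz]; exact hxS
    have h2 : y ∈ pt z := by rw [← hz]; exact hyS
    rw [mem_pt z0] at h1 h2
    apply hxy
    rw [show y / x = y / z / (x / z) by field_simp, div_pow,
      pow_seven_of_mem h1 (div_ne_zero x0 z0), pow_seven_of_mem h2 (div_ne_zero y0 z0), div_one]
  · by_contra hne
    have hs : sc x Kmod ∈ SigmaSet := ⟨x, x0, coe_sc_Kmod x⟩
    have hp : ∀ z, z ∈ pt x → z ∈ sc x Kmod := fun z hz => by
      rw [← coe_sc_Kmod] at hz; exact hz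
    have := uniq B hB.1 _ (hSig hs) x y x0 y0 hne hx hy (hp x mem_pt_self)
      (hp y ((mem_pt x0).2 (mem_of_pow_seven hxy)))
    rw [this] at hB
    exact hB.2 hs

/-! ### Counting -/

theorem orderOf_gen {g : F9} (h : ∀ x : F9, x ≠ 0 → ∃ m : ℕ, g ^ m = x) : orderOf g = 511 := by
  obtain ⟨α, hα⟩ := exists_root
  obtain ⟨m, hm⟩ := h α (root_ne_zero hα)
  have h1 : orderOf α = 511 := orderOf_root hα
  have h2 : orderOf α ∣ orderOf g := by rw [← hm]; exact orderOf_pow_dvd m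
  have g0 : g ≠ 0 := by
    rintro rfl
    rcases Nat.eq_zero_or_pos m with rfl | hpos
    · rw [pow_zero] at hm
      rw [← hm, orderOf_one] at h1
      omega
    · rw [zero_pow hpos.ne'] at hm
      exact root_ne_zero hα hm.symm
  have h3 : orderOf g ∣ 511 := orderOf_dvd_of_pow_eq_one (pow_511_of_ne g g0)
  rw [h1] at h2
  exact Nat.dvd_antisymm h3 h2

theorem pt_pow_eq_iff {g x : F9} (hg : orderOf g = 511) (hx : x ≠ 0) (i j : ℕ) :
    pt (g ^ i * x) = pt (g ^ j * x) ↔ i % 73 = j % 73 := by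
  have g0 : g ≠ 0 := by rintro rfl; simp at hg
  wlog hij : i ≤ j generalizing i j
  · exact eq_comm.trans ((this j i (by omega)).trans eq_comm)
  obtain ⟨k, rfl⟩ := Nat.exists_eq_add_of_le hij
  rw [pt_eq_iff (mul_ne_zero (pow_ne_zero _ g0) hx) (mul_ne_zero (pow_ne_zero _ g0) hx),
    mul_div_mul_right _ _ hx, pow_add, mul_div_cancel_left₀ _ (pow_ne_zero _ g0), ← pow_mul,
    ← orderOf_dvd_iff_pow_eq_one, hg]
  omega

theorem wmap_pt (g x : F9) : wmap g (pt x) = pt (g * x) := by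
  ext y
  constructor
  · rintro ⟨z, ⟨c, hc, rfl⟩, rfl⟩
    exact ⟨c, hc, (mul_assoc _ _ _).symm⟩
  · rintro ⟨c, hc, rfl⟩
    exact ⟨x * c, ⟨c, hc, rfl⟩, (mul_assoc _ _ _).symm⟩

theorem wmap_iterate_pt (g x : F9) (m : ℕ) : (wmap g)^[m] (pt x) = pt (g ^ m * x) := by
  induction m with
  | zero => rw [Function.iterate_zero, id, pow_zero, one_mul]
  | succ m ih => rw [Function.iterate_succ_apply', ih, wmap_pt, pow_succ', mul_assoc]

theorem wact_piB {g : F9} (hg : g ≠ 0) (B : Submodule (ZMod 2) F9) :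
    wact g (piB B) = piB (sc g B) := by
  ext P
  constructor
  · rintro ⟨_, ⟨x, hx, x0, rfl⟩, rfl⟩
    exact ⟨g * x, mul_mem_sc hx, mul_ne_zero hg x0, wmap_pt g x⟩
  · rintro ⟨_, ⟨x, hx, rfl⟩, h0, rfl⟩
    have x0 : x ≠ 0 := by rintro rfl; exact h0 (map_zero _)
    exact ⟨pt x, ⟨x, hx, x0, rfl⟩, wmap_pt g x⟩

theorem ncard_points {g : F9} (h : ∀ x : F9, x ≠ 0 → ∃ m : ℕ, g ^ m = x) :
    {P : Set F9 | PGpoint P}.ncard = 73 := by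
  have hg := orderOf_gen h
  have g0 : g ≠ 0 := by rintro rfl; simp at hg
  have himg : {P : Set F9 | PGpoint P} =
      (fun m => pt (g ^ m * 1)) '' ((Finset.range 73 : Finset ℕ) : Set ℕ) := by
    ext P
    constructor
    · rintro ⟨x, x0, rfl⟩
      obtain ⟨n, rfl⟩ := h x x0
      refine ⟨n % 73, Finset.mem_coe.2 (Finset.mem_range.2 (Nat.mod_lt _ (by norm_num))), ?_⟩
      change pt (g ^ (n % 73) * 1) = _
      rw [(pt_pow_eq_iff hg one_ne_zero (n % 73) n).2 (Nat.mod_mod _ _), mul_one]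
    · rintro ⟨m, -, rfl⟩
      exact ⟨_, mul_ne_zero (pow_ne_zero _ g0) one_ne_zero, rfl⟩
  have hinj : Set.InjOn (fun m => pt (g ^ m * 1)) ((Finset.range 73 : Finset ℕ) : Set ℕ) := by
    intro a ha b hb hab
    have ha' := Finset.mem_range.1 (Finset.mem_coe.1 ha)
    have hb' := Finset.mem_range.1 (Finset.mem_coe.1 hb)
    have := (pt_pow_eq_iff hg one_ne_zero a b).1 hab
    omega
  rw [himg, hinj.ncard_image, Set.ncard_coe_finset, Finset.card_range]

theorem ncard_diff_zero {B : Submodule (ZMod 2) F9} (hB : Nat.card B = 8) :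
    ((B : Set F9) \ {0}).ncard = 7 := by
  have h1 : (B : Set F9).ncard = 8 := hB
  rw [Set.ncard_sdiff_singleton_of_mem B.zero_mem, h1]

theorem ncard_piB {N : Set (Submodule (ZMod 2) F9)} (hN : Blocks N)
    {B : Submodule (ZMod 2) F9} (hB : B ∈ N) : (piB B).ncard = 7 := by
  have himg : piB B = pt '' ((B : Set F9) \ {0}) := by
    ext P
    constructor
    · rintro ⟨x, hx, x0, rfl⟩
      exact ⟨x, ⟨hx, x0⟩, rfl⟩
    · rintro ⟨x, ⟨hx, x0⟩, rfl⟩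
      exact ⟨x, hx, x0, rfl⟩
  have hinj : Set.InjOn pt ((B : Set F9) \ {0}) := by
    rintro x ⟨hx, x0⟩ y ⟨hy, y0⟩ h
    exact hN.scat B hB x hx y hy x0 y0 ((pt_eq_iff x0 y0).1 h)
  rw [himg, hinj.ncard_image, ncard_diff_zero (hN.card B hB)]

/-- Every block through `xK` and `yK` is the point set of a unique block containing `x` and `cy`,
where `c` runs over the seven nonzero elements of `K`. -/
theorem ncard_blocks_through {N : Set (Submodule (ZMod 2) F9)} (hN : Blocks N) {x y : F9}
    (x0 : x ≠ 0) (y0 : y ≠ 0) (hxy : (y / x) ^ 7 ≠ 1) :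
    {π : Set (Set F9) | (∃ B ∈ N, π = piB B) ∧ pt x ∈ π ∧ pt y ∈ π}.ncard = 7 := by
  have hratio : ∀ c : F9, c ^ 7 = 1 → (c * y / x) ^ 7 ≠ 1 := fun c hc h => hxy (by
    rw [mul_div_assoc, mul_pow, hc, one_mul] at h; exact h)
  have hex : ∀ c : F9, ∃ B : Submodule (ZMod 2) F9,
      c ^ 7 = 1 → B ∈ N ∧ x ∈ B ∧ c * y ∈ B := fun c => by
    by_cases hc : c ^ 7 = 1
    · obtain ⟨B, hB, h⟩ := hN.ex x (c * y) x0 (mul_ne_zero (ne_zero_of_pow_seven hc) y0)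
        (hratio c hc)
      exact ⟨B, fun _ => ⟨hB, h⟩⟩
    · exact ⟨⊥, fun h => absurd h hc⟩
  choose S hS using hex
  have hK : ∀ c : F9, c ∈ (Kmod : Set F9) \ {0} ↔ c ^ 7 = 1 := fun c =>
    ⟨fun h => pow_seven_of_mem h.1 h.2, fun h => ⟨mem_of_pow_seven h, ne_zero_of_pow_seven h⟩⟩
  have himg : {π : Set (Set F9) | (∃ B ∈ N, π = piB B) ∧ pt x ∈ π ∧ pt y ∈ π} =
      (fun c => piB (S c)) '' ((Kmod : Set F9) \ {0}) := by
    ext π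
    constructor
    · rintro ⟨⟨B, hB, rfl⟩, ⟨b, hb, b0, hxb⟩, hy⟩
      have hl : (x / b) ^ 7 = 1 := (pt_eq_iff b0 x0).1 hxb.symm
      have hB₁ := hN.sc_mem B hB _ (ne_zero_of_pow_seven hl)
      have hx₁ : x ∈ sc (x / b) B := by
        have := mul_mem_sc (c := x / b) hb
        rwa [div_mul_cancel₀ _ b0] at this
      rw [← piB_sc hl] at hy ⊢
      obtain ⟨d, hd, d0, hyd⟩ := hy
      have hc : (d / y) ^ 7 = 1 := (pt_eq_iff y0 d0).1 hyd
      obtain ⟨h1, h2, h3⟩ := hS _ hc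
      refine ⟨d / y, (hK _).2 hc, congrArg piB ?_⟩
      have hr := hratio _ hc
      rw [div_mul_cancel₀ _ y0] at h3 hr
      exact hN.uniq _ h1 _ hB₁ x d x0 d0 (by
        rintro rfl; exact hr (by rw [div_self x0, one_pow])) h2 h3 hx₁ hd
    · rintro ⟨c, hc, rfl⟩
      have hc := (hK c).1 hc
      have c0 := ne_zero_of_pow_seven hc
      obtain ⟨h1, h2, h3⟩ := hS c hc
      exact ⟨⟨S c, h1, rfl⟩, ⟨x, h2, x0, rfl⟩, ⟨c * y, h3, mul_ne_zero c0 y0,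
        (pt_eq_iff y0 (mul_ne_zero c0 y0)).2 (by rw [mul_div_cancel_right₀ _ y0, hc])⟩⟩
  have hinj : Set.InjOn (fun c => piB (S c)) ((Kmod : Set F9) \ {0}) := by
    intro c hc d hd h
    have hc := (hK c).1 hc
    have hd := (hK d).1 hd
    have c0 := ne_zero_of_pow_seven hc
    have d0 := ne_zero_of_pow_seven hd
    obtain ⟨h1, h2, h3⟩ := hS c hc
    obtain ⟨k1, k2, k3⟩ := hS d hd
    obtain ⟨e, he, heq⟩ := eq_sc_of_piB_eq hN h1 k1 h
    have e0 := ne_zero_of_pow_seven he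
    have m1 : e * x ∈ S d := by rw [heq]; exact mul_mem_sc h2
    have m2 : e * (c * y) ∈ S d := by rw [heq]; exact mul_mem_sc h3
    have hex := hN.scat _ k1 x k2 (e * x) m1 x0 (mul_ne_zero e0 x0)
      (by rw [mul_div_cancel_right₀ _ x0, he])
    have e1 : e = 1 := mul_right_cancel₀ x0 (by rw [one_mul]; exact hex.symm)
    rw [e1, one_mul] at m2
    have := hN.scat _ k1 (c * y) m2 (d * y) k3 (mul_ne_zero c0 y0) (mul_ne_zero d0 y0)
      (by rw [mul_div_mul_right _ _ y0, div_pow, hc, hd, div_one])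
    exact mul_right_cancel₀ y0 this
  rw [himg, hinj.ncard_image, ncard_diff_zero card_Kmod]

/-- The pair (points of `PG(2,8)`, `𝓑'`) is a 2-(73,7,7) design: there are 73 points,
each block `π_B` consists of exactly 7 points, and any two distinct points lie in
exactly 7 members of `𝓑'`; moreover the permutation `w : xK ↦ (gx)K` generates a group
`W` of order 73 acting regularly on the points and mapping `𝓑'` to itself. -/
theorem stmt15 (g : F9) (𝓑 : Set (Submodule (ZMod 2) F9))
    (h𝓑 : IsCyclicTwoAnalog g 𝓑) (hSig : SigmaSet ⊆ 𝓑) :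
    {P : Set F9 | PGpoint P}.ncard = 73 ∧
    (∀ π ∈ Bprime 𝓑, π ⊆ {P | PGpoint P} ∧ π.ncard = 7) ∧
    (∀ P, PGpoint P → ∀ Q, PGpoint Q → P ≠ Q →
      {π ∈ Bprime 𝓑 | P ∈ π ∧ Q ∈ π}.ncard = 7) ∧
    (∀ P, PGpoint P → PGpoint (wmap g P)) ∧
    (∀ P, PGpoint P → ∀ Q, PGpoint Q → ∃! m : Fin 73, (wmap g)^[(m : ℕ)] P = Q) ∧
    (∀ π ∈ Bprime 𝓑, wact g π ∈ Bprime 𝓑) := by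
  have hN := blocks_of_cyclic h𝓑 hSig
  have hg := orderOf_gen h𝓑.1
  have g0 : g ≠ 0 := by rintro rfl; simp at hg
  refine ⟨ncard_points h𝓑.1, ?_, ?_, ?_, ?_, ?_⟩
  · rintro _ ⟨B, hB, rfl⟩
    refine ⟨?_, ncard_piB hN hB⟩
    rintro _ ⟨x, -, x0, rfl⟩
    exact ⟨x, x0, rfl⟩
  · rintro _ ⟨x, x0, rfl⟩ _ ⟨y, y0, rfl⟩ hne
    exact ncard_blocks_through hN x0 y0 fun h => hne ((pt_eq_iff x0 y0).2 h)
  · rintro _ ⟨x, x0, rfl⟩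
    exact ⟨g * x, mul_ne_zero g0 x0, wmap_pt g x⟩
  · rintro _ ⟨x, x0, rfl⟩ _ ⟨y, y0, rfl⟩
    obtain ⟨n, hn⟩ := h𝓑.1 (y / x) (div_ne_zero y0 x0)
    have hy : y = g ^ n * x := by rw [hn, div_mul_cancel₀ _ x0]
    refine ⟨⟨n % 73, Nat.mod_lt _ (by norm_num)⟩, ?_, fun m hm => Fin.ext ?_⟩
    · change (wmap g)^[n % 73] (pt x) = pt y
      rw [wmap_iterate_pt, hy, pt_pow_eq_iff hg x0, Nat.mod_mod]
    · change (wmap g)^[(m : ℕ)] (pt x) = pt y at hm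
      rw [wmap_iterate_pt, hy, pt_pow_eq_iff hg x0] at hm
      change (m : ℕ) = n % 73
      rw [← hm, Nat.mod_eq_of_lt m.2]
  · rintro _ ⟨B, hB, rfl⟩
    exact ⟨sc g B, hN.sc_mem B hB g g0, wact_piB g0 B⟩
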